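/- Let q = p^f be a power of an odd prime p, let n ≥ 7, let Q be a nondegenerate quadratic form on V = F_q^n, and let GO(V,Q) be the group of similitudes of Q; suppose GO(V,Q) is not solvable. Let π be a set of primes with 2 ∉ π and p ∉ π such that |π ∩ π(GO(V,Q))| ≥ 2, and suppose GO(V,Q) has a Hall π-subgroup H. Set G = H·(GO(V,Q) ∩ SL_n(F_q)). Then there exist x, y, z ∈ G such that H ∩ H^x ∩ H^y ∩ H^z is contained in the center of GO(V,Q), i.e. consists of scalar matrices. -/

import Mathlib

open Matrix Pointwise

/-- `H^x = x⁻¹ H x`. -/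
def conjBy {G : Type*} [Group G] (H : Subgroup G) (x : G) : Subgroup G :=
  Subgroup.map ((MulAut.conj x⁻¹).toMonoidHom) H

/-- Hall π-subgroup of the whole group. -/
def IsHallSubgroup {G : Type*} [Group G] (π : Set ℕ) (H : Subgroup G) : Prop :=
  (∀ r : ℕ, r.Prime → r ∣ Nat.card H → r ∈ π) ∧ ∀ r ∈ π, ¬ r ∣ H.index

/-- Hall π-subgroup of the subgroup `K`. -/
def IsHallSubgroupIn {G : Type*} [Group G] (π : Set ℕ) (K H : Subgroup G) : Prop :=
  H ≤ K ∧ (∀ r : ℕ, r.Prime → r ∣ Nat.card H → r ∈ π) ∧ ∀ r ∈ π, ¬ r ∣ H.relIndex K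

/-- The subgroup `SL_n` of `GL_n`. -/
def SLsub (n : ℕ) (F : Type*) [Field F] : Subgroup (GL (Fin n) F) where
  carrier := {g | Matrix.det (g : Matrix (Fin n) (Fin n) F) = 1}
  one_mem' := by simp
  mul_mem' := by
    intro a b ha hb
    simp only [Set.mem_setOf_eq, Units.val_mul, Matrix.det_mul] at *
    rw [ha, hb, one_mul]
  inv_mem' := by
    intro g hg
    simp only [Set.mem_setOf_eq] at *
    have h1 : ((g⁻¹ : GL (Fin n) F) : Matrix (Fin n) (Fin n) F) *
        (g : Matrix (Fin n) (Fin n) F) = 1 := g.inv_mul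
    have := congrArg Matrix.det h1
    rw [Matrix.det_mul, Matrix.det_one, hg, mul_one] at this
    exact this

/-- The group of similitudes of the bilinear form `B` (acting on row vectors). -/
def similitudeGroup {n : ℕ} {F : Type*} [Field F]
    (B : (Fin n → F) → (Fin n → F) → F) : Subgroup (GL (Fin n) F) where
  carrier := {g | ∃ c : Fˣ, ∀ u v : Fin n → F,
    B (Matrix.vecMul u (g : Matrix (Fin n) (Fin n) F))
      (Matrix.vecMul v (g : Matrix (Fin n) (Fin n) F)) = (c : F) * B u v}
  one_mem' := ⟨1, by simp⟩
  mul_mem' := by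
    rintro a b ⟨c, hc⟩ ⟨d, hd⟩
    refine ⟨c * d, fun u v => ?_⟩
    simp only [Units.val_mul, ← Matrix.vecMul_vecMul, hd, hc]
    ring
  inv_mem' := by
    rintro g ⟨c, hc⟩
    refine ⟨c⁻¹, fun u v => ?_⟩
    have h1 : ∀ w : Fin n → F, Matrix.vecMul
        (Matrix.vecMul w ((g⁻¹ : GL (Fin n) F) : Matrix (Fin n) (Fin n) F))
        (g : Matrix (Fin n) (Fin n) F) = w := by
      intro w
      rw [Matrix.vecMul_vecMul, g.inv_mul, Matrix.vecMul_one]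
    have h2 := hc (Matrix.vecMul u ((g⁻¹ : GL (Fin n) F) : Matrix (Fin n) (Fin n) F))
      (Matrix.vecMul v ((g⁻¹ : GL (Fin n) F) : Matrix (Fin n) (Fin n) F))
    rw [h1, h1] at h2
    rw [h2, Units.val_inv_eq_inv_val, inv_mul_cancel_left₀ (by exact_mod_cast c.ne_zero)]

/-- The isometry group of the bilinear form `B` (acting on row vectors). -/
def isometryGroup {n : ℕ} {F : Type*} [Field F]
    (B : (Fin n → F) → (Fin n → F) → F) : Subgroup (GL (Fin n) F) where
  carrier := {g | ∀ u v : Fin n → F,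
    B (Matrix.vecMul u (g : Matrix (Fin n) (Fin n) F))
      (Matrix.vecMul v (g : Matrix (Fin n) (Fin n) F)) = B u v}
  one_mem' := by simp
  mul_mem' := by
    intro a b ha hb u v
    simp only [Set.mem_setOf_eq] at ha hb
    simp only [Units.val_mul, ← Matrix.vecMul_vecMul]
    rw [hb, ha]
  inv_mem' := by
    intro g hg u v
    have h1 : ∀ w : Fin n → F, Matrix.vecMul
        (Matrix.vecMul w ((g⁻¹ : GL (Fin n) F) : Matrix (Fin n) (Fin n) F))
        (g : Matrix (Fin n) (Fin n) F) = w := by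
      intro w
      rw [Matrix.vecMul_vecMul, g.inv_mul, Matrix.vecMul_one]
    have h2 := hg (Matrix.vecMul u ((g⁻¹ : GL (Fin n) F) : Matrix (Fin n) (Fin n) F))
      (Matrix.vecMul v ((g⁻¹ : GL (Fin n) F) : Matrix (Fin n) (Fin n) F))
    rw [h1, h1] at h2
    exact h2.symm

/-- The group of similitudes of the quadratic form `Q` (acting on row vectors). -/
def qSimilitudeGroup {n : ℕ} {F : Type*} [Field F]
    (Q : (Fin n → F) → F) : Subgroup (GL (Fin n) F) where
  carrier := {g | ∃ c : Fˣ, ∀ v : Fin n → F,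
    Q (Matrix.vecMul v (g : Matrix (Fin n) (Fin n) F)) = (c : F) * Q v}
  one_mem' := ⟨1, by simp⟩
  mul_mem' := by
    rintro a b ⟨c, hc⟩ ⟨d, hd⟩
    refine ⟨c * d, fun v => ?_⟩
    simp only [Units.val_mul, ← Matrix.vecMul_vecMul, hd, hc]
    ring
  inv_mem' := by
    rintro g ⟨c, hc⟩
    refine ⟨c⁻¹, fun v => ?_⟩
    have h1 : ∀ w : Fin n → F, Matrix.vecMul
        (Matrix.vecMul w ((g⁻¹ : GL (Fin n) F) : Matrix (Fin n) (Fin n) F))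
        (g : Matrix (Fin n) (Fin n) F) = w := by
      intro w
      rw [Matrix.vecMul_vecMul, g.inv_mul, Matrix.vecMul_one]
    have h2 := hc (Matrix.vecMul v ((g⁻¹ : GL (Fin n) F) : Matrix (Fin n) (Fin n) F))
    rw [h1] at h2
    rw [h2, Units.val_inv_eq_inv_val, inv_mul_cancel_left₀ (by exact_mod_cast c.ne_zero)]

/-- The unitary group `GU_n` with respect to the field automorphism `φ`. -/
def GUgrp (n : ℕ) {K : Type*} [Field K] (φ : K →+* K) : Subgroup (GL (Fin n) K) where
  carrier := {g | ((g : Matrix (Fin n) (Fin n) K).map φ)ᵀ * (g : Matrix (Fin n) (Fin n) K) = 1}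
  one_mem' := by
    simp [Matrix.map_one φ φ.map_zero φ.map_one]
  mul_mem' := by
    intro a b ha hb
    simp only [Set.mem_setOf_eq, Units.val_mul, Matrix.map_mul, Matrix.transpose_mul] at *
    calc ((b : Matrix (Fin n) (Fin n) K).map φ)ᵀ * ((a : Matrix (Fin n) (Fin n) K).map φ)ᵀ *
          ((a : Matrix (Fin n) (Fin n) K) * (b : Matrix (Fin n) (Fin n) K))
        = ((b : Matrix (Fin n) (Fin n) K).map φ)ᵀ *
          (((a : Matrix (Fin n) (Fin n) K).map φ)ᵀ * (a : Matrix (Fin n) (Fin n) K)) *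
          (b : Matrix (Fin n) (Fin n) K) := by noncomm_ring
      _ = 1 := by rw [ha, mul_one, hb]
  inv_mem' := by
    intro g hg
    simp only [Set.mem_setOf_eq] at *
    have hcomm : (g : Matrix (Fin n) (Fin n) K) * ((g : Matrix (Fin n) (Fin n) K).map φ)ᵀ = 1 :=
      mul_eq_one_comm.mp hg
    have h1 : ((g : Matrix (Fin n) (Fin n) K) * ((g⁻¹ : GL (Fin n) K) : Matrix (Fin n) (Fin n) K)).map φ = 1 := by
      rw [g.mul_inv]
      exact Matrix.map_one φ φ.map_zero φ.map_one
    rw [Matrix.map_mul] at h1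
    have h2 := congrArg Matrix.transpose h1
    rw [Matrix.transpose_mul, Matrix.transpose_one] at h2
    calc (((g⁻¹ : GL (Fin n) K) : Matrix (Fin n) (Fin n) K).map φ)ᵀ *
          ((g⁻¹ : GL (Fin n) K) : Matrix (Fin n) (Fin n) K)
        = (((g⁻¹ : GL (Fin n) K) : Matrix (Fin n) (Fin n) K).map φ)ᵀ *
          (((g : Matrix (Fin n) (Fin n) K).map φ)ᵀ * (g : Matrix (Fin n) (Fin n) K)) *
          ((g⁻¹ : GL (Fin n) K) : Matrix (Fin n) (Fin n) K) := by rw [hg, mul_one]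
      _ = ((((g⁻¹ : GL (Fin n) K) : Matrix (Fin n) (Fin n) K).map φ)ᵀ *
          ((g : Matrix (Fin n) (Fin n) K).map φ)ᵀ) *
          ((g : Matrix (Fin n) (Fin n) K) * ((g⁻¹ : GL (Fin n) K) : Matrix (Fin n) (Fin n) K)) := by
            noncomm_ring
      _ = 1 := by rw [h2, g.mul_inv, mul_one]

/-!
The multiplier of an element of `H` has odd order, so it is the square of a scalar lying in `H`;
modulo scalars, only the Hall subgroup `K = H ∩ O(V, Q)` of the isometry group matters.

For `g ≠ 1` in `K`, a random `x ∈ SO(V, Q)` sends `g` into `K` under conjugation with probability at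
most `|K| / m`, where `m` bounds the size of the class of `g` from below. A union bound over `K`
hence produces three conjugating elements as soon as `|K| ^ 4 < m ^ 3`. With `q` the number of
elements of the field, `m = (q - 1) q ^ (n - 3)` works: by Witt's theorem the class of `g` maps onto
a large set of vectors of prescribed norm.

To bound `|K|`, let `k` be the least dimension of a residual space `(g - 1) V`, over the isometries
`g` of prime order in `π`. The primes of `π` dividing `|K|` all exceed `k`, and a `π`-group of
isometries of a space of dimension at most `2 k` is abelian; otherwise a minimal nonabelian subgroup
would permute too many weights. So the elements of `K` attaining `k` commute, and their residual
spaces are pairwise orthogonal blocks. The group `K` permutes the blocks as a permutation group of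
odd order, and the kernel acts on each block as an abelian group acting freely, hence of order at
most `(q ^ (k / 2) + 1) / 2`. On the orthogonal complement of the blocks `K` again induces a Hall
subgroup of the isometry group, and induction on the dimension applies.
-/

section FiniteGroup

variable {G : Type*} [Group G]

lemma exists_forall_mem_conj_mem_of_isPGroup [Finite G] {H P : Subgroup G} {s : ℕ}
    [Fact s.Prime] (hP : IsPGroup s P) (hs : ¬ s ∣ H.index) :
    ∃ y : G, ∀ g ∈ P, y⁻¹ * g * y ∈ H := by
  obtain ⟨a, ha⟩ := hP.nonempty_fixed_point_of_prime_not_dvd_card (G ⧸ H) hs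
  obtain ⟨y, rfl⟩ := QuotientGroup.mk_surjective a
  refine ⟨y, fun g hg => ?_⟩
  have hfix : ((g * y : G) : G ⧸ H) = (y : G ⧸ H) := ha ⟨g, hg⟩
  simpa only [mul_assoc] using QuotientGroup.eq.1 hfix.symm

/- By Burnside's lemma an element acts on `G ⧸ H` with one fixed point on average, and `1` has
more. -/
lemma exists_forall_conj_notMem [Finite G] {H : Subgroup G} (hH : H ≠ ⊤) :
    ∃ a : G, ∀ g : G, g⁻¹ * a * g ∉ H := by
  classical
  have := Fintype.ofFinite G
  by_contra! hcon
  have hone (a : G) : 1 ≤ Fintype.card (MulAction.fixedBy (G ⧸ H) a) := by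
    obtain ⟨g, hg⟩ := hcon a
    have hfix : a • (g : G ⧸ H) = g := (QuotientGroup.eq.2 (by simpa [mul_assoc] using hg)).symm
    exact Fintype.card_pos_iff.2 ⟨⟨g, hfix⟩⟩
  have htwo : 1 < Fintype.card (MulAction.fixedBy (G ⧸ H) (1 : G)) := by
    have : Nontrivial (G ⧸ H) := QuotientGroup.nontrivial_iff.2 hH
    simpa only [MulAction.fixedBy_one_eq_univ, Fintype.card_setUniv] using
      Fintype.one_lt_card (α := G ⧸ H)
  have hburnside := MulAction.sum_card_fixedBy_eq_card_orbits_mul_card_group G (G ⧸ H)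
  have horbits : Fintype.card (Quotient (MulAction.orbitRel G (G ⧸ H))) = 1 :=
    Fintype.card_eq_one_iff_nonempty_unique.2
      ⟨@Unique.mk' _ ⟨Quotient.mk _ ((1 : G) : G ⧸ H)⟩
        ((MulAction.pretransitive_iff_subsingleton_quotient G _).1 inferInstance)⟩
  have hlt : ∑ _a : G, 1 < ∑ a : G, Fintype.card (MulAction.fixedBy (G ⧸ H) a) :=
    Finset.sum_lt_sum (fun a _ => hone a) ⟨1, Finset.mem_univ 1, htwo⟩
  rw [hburnside, horbits] at hlt
  simp at hlt

lemma centralizer_singleton_eq_of_commute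
    (hprop : ∀ K : Subgroup G, K ≠ ⊤ → IsMulCommutative K) {a x : G} (ha : a ∉ Subgroup.center G)
    (hx : x ∉ Subgroup.center G) (hax : Commute a x) :
    Subgroup.centralizer {a} = Subgroup.centralizer {x} := by
  have key {u v : G} (hu : u ∉ Subgroup.center G) (huv : Commute u v) :
      Subgroup.centralizer {u} ≤ Subgroup.centralizer {v} := by
    have hne : Subgroup.centralizer {u} ≠ ⊤ := fun h =>
      hu (by simpa using Subgroup.centralizer_eq_top_iff_subset.1 h)
    have := hprop _ hne
    intro w hw
    exact Subgroup.mem_centralizer_singleton_iff.2 (setLike_mul_comm hw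
      (Subgroup.mem_centralizer_singleton_iff.2 huv.symm))
  exact le_antisymm (key ha hax) (key hx hax.symm)

lemma normalizer_centralizer_singleton_eq
    (hprop : ∀ K : Subgroup G, K ≠ ⊤ → IsMulCommutative K) {x : G}
    (hx : ¬ (Subgroup.centralizer {x}).Normal) :
    Subgroup.normalizer (Subgroup.centralizer {x} : Set G) = Subgroup.centralizer {x} := by
  refine le_antisymm ?_ Subgroup.le_normalizer
  have := hprop _ fun h => hx (Subgroup.normalizer_eq_top_iff.1 h)
  intro g hg
  exact Subgroup.mem_centralizer_singleton_iff.2 (setLike_mul_comm hg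
    (Subgroup.le_normalizer (Subgroup.mem_centralizer_singleton_iff.2 rfl)))

lemma notMem_center_of_not_normal_centralizer {x : G}
    (hx : ¬ (Subgroup.centralizer {x}).Normal) : x ∉ Subgroup.center G := fun h => hx <| by
  rw [Subgroup.centralizer_eq_top_iff_subset.2 (by simpa using h)]
  infer_instance

lemma two_mul_card_center_le_card_centralizer [Finite G] {x : G}
    (hx : x ∉ Subgroup.center G) :
    2 * Nat.card (Subgroup.center G) ≤ Nat.card (Subgroup.centralizer {x}) := by
  have hle : Subgroup.center G ≤ Subgroup.centralizer {x} := Subgroup.center_le_centralizer _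
  obtain ⟨k, hk⟩ := Subgroup.card_dvd_of_le hle
  have hne : k ≠ 1 := fun h => hx <| by
    rw [Subgroup.eq_of_le_of_card_ge hle (by rw [hk, h, mul_one])]
    exact Subgroup.mem_centralizer_singleton_iff.2 rfl
  have hpos : 0 < Nat.card (Subgroup.centralizer {x}) := Nat.card_pos
  have hzero : k ≠ 0 := by rintro rfl; omega
  rw [hk, mul_comm]
  exact Nat.mul_le_mul_left _ (by omega)

lemma conj_mem_center_iff {a g : G} :
    g⁻¹ * a * g ∈ Subgroup.center G ↔ a ∈ Subgroup.center G := by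
  refine ⟨fun h => ?_, fun h => ?_⟩
  · simpa [mul_assoc] using Subgroup.Normal.conj_mem inferInstance _ h g
  · simpa using Subgroup.Normal.conj_mem inferInstance _ h g⁻¹

lemma mem_centralizer_singleton_of_commute_conj
    (hprop : ∀ K : Subgroup G, K ≠ ⊤ → IsMulCommutative K) {x : G}
    (hx : ¬ (Subgroup.centralizer {x}).Normal) {a k : G} (ha : a ∉ Subgroup.center G)
    (hax : Commute a x) (hkax : Commute (k * a * k⁻¹) x) :
    k ∈ Subgroup.centralizer {x} := by
  have hxZ := notMem_center_of_not_normal_centralizer hx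
  have hka : k * a * k⁻¹ ∉ Subgroup.center G := fun h =>
    ha (conj_mem_center_iff (g := k⁻¹) |>.1 (by simpa using h))
  have ha' := centralizer_singleton_eq_of_commute hprop ha hxZ hax
  have hka' := centralizer_singleton_eq_of_commute hprop hka hxZ hkax
  rw [← normalizer_centralizer_singleton_eq hprop hx, Subgroup.mem_normalizer_iff]
  intro h
  calc h ∈ Subgroup.centralizer {x} ↔ Commute h a := by
        rw [← ha', Subgroup.mem_centralizer_singleton_iff]; rfl
    _ ↔ Commute (k * h * k⁻¹) (k * a * k⁻¹) := (Commute.conj_iff k).symm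
    _ ↔ k * h * k⁻¹ ∈ Subgroup.centralizer {x} := by
        rw [← hka', Subgroup.mem_centralizer_singleton_iff]; rfl

/-- The noncentral elements commuting with some conjugate of `x`. In a group all of whose proper
subgroups are abelian, this is the union of the conjugates of `C_G(x) \ Z(G)`. -/
def conjCentralizerDiffCenter (x : G) : Set G :=
  {a | a ∉ Subgroup.center G ∧ ∃ g : G, Commute (g⁻¹ * a * g) x}

lemma card_le_two_mul_ncard_conjCentralizerDiffCenter [Finite G]
    (hprop : ∀ K : Subgroup G, K ≠ ⊤ → IsMulCommutative K) {x : G}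
    (hx : ¬ (Subgroup.centralizer {x}).Normal) :
    Nat.card G ≤ 2 * (conjCentralizerDiffCenter x).ncard := by
  set C := Subgroup.centralizer {x}
  have hxZ := notMem_center_of_not_normal_centralizer hx
  set T : Set G := (C : Set G) \ Subgroup.center G
  have hTcard : T.ncard + Nat.card (Subgroup.center G) = Nat.card C :=
    Set.ncard_sdiff_add_ncard_of_subset (Subgroup.center_le_centralizer _)
  have hinj : Set.InjOn (fun p : (G ⧸ C) × G => p.1.out * p.2 * p.1.out⁻¹)
      (Set.univ ×ˢ T) := by
    rintro ⟨u, a⟩ ⟨-, haC, haZ⟩ ⟨v, b⟩ ⟨-, hbC, -⟩ (heq : _ * a * _⁻¹ = _ * b * _⁻¹)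
    have hconj : (v.out⁻¹ * u.out) * a * (v.out⁻¹ * u.out)⁻¹ = b := by
      have := congrArg (fun g => v.out⁻¹ * g * v.out) heq
      simpa [mul_assoc] using this
    have hmem : v.out⁻¹ * u.out ∈ C := mem_centralizer_singleton_of_commute_conj hprop hx haZ
      (Subgroup.mem_centralizer_singleton_iff.1 haC) (by
        rw [hconj]
        exact Subgroup.mem_centralizer_singleton_iff.1 hbC)
    obtain rfl : v = u := by simpa using QuotientGroup.eq.2 hmem
    simpa using heq
  have hmaps : Set.MapsTo (fun p : (G ⧸ C) × G => p.1.out * p.2 * p.1.out⁻¹)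
      (Set.univ ×ˢ T) (conjCentralizerDiffCenter x) := by
    rintro ⟨u, a⟩ ⟨-, haC, haZ⟩
    have hconj : u.out⁻¹ * (u.out * a * u.out⁻¹) * u.out = a := by group
    refine ⟨fun h => haZ ?_, u.out, ?_⟩
    · rw [← hconj]
      exact conj_mem_center_iff.2 h
    · rw [hconj]
      exact Subgroup.mem_centralizer_singleton_iff.1 haC
  have hle := Set.ncard_le_ncard_of_injOn _ hmaps hinj (Set.toFinite _)
  rw [Set.ncard_prod, Set.ncard_univ] at hle
  have htwo := two_mul_card_center_le_card_centralizer hxZ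
  have hlag : Nat.card G = Nat.card (G ⧸ C) * Nat.card C :=
    C.card_eq_card_quotient_mul_card_subgroup
  nlinarith

lemma exists_notMem_center_normal_centralizer [Finite G]
    (hnc : Subgroup.center G ≠ ⊤)
    (hprop : ∀ K : Subgroup G, K ≠ ⊤ → IsMulCommutative K) :
    ∃ x, x ∉ Subgroup.center G ∧ (Subgroup.centralizer {x}).Normal := by
  by_contra! hcon
  obtain ⟨x, hx⟩ : ∃ x, x ∉ Subgroup.center G := by
    simpa [Subgroup.eq_top_iff'] using hnc
  have hxC : Subgroup.centralizer {x} ≠ ⊤ := fun h => hcon x hx (h ▸ inferInstance)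
  obtain ⟨y, hy⟩ := exists_forall_conj_notMem hxC
  have hyZ : y ∉ Subgroup.center G := fun h => hy 1 <| by
    simpa using Subgroup.center_le_centralizer _ h
  have hdisj : Disjoint (conjCentralizerDiffCenter x) (conjCentralizerDiffCenter y) := by
    refine Set.disjoint_left.2 ?_
    rintro a ⟨haZ, g, hg⟩ ⟨-, h, hh⟩
    have hya : Commute y (h⁻¹ * a * h) := hh.symm
    have hcomm : Commute (g⁻¹ * h * y * (g⁻¹ * h)⁻¹) (g⁻¹ * a * g) := by
      have := (Commute.conj_iff (g⁻¹ * h)).2 hya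
      simpa [mul_assoc] using this
    refine hy (h⁻¹ * g) ?_
    have hgZ : g⁻¹ * a * g ∉ Subgroup.center G := fun h => haZ (conj_mem_center_iff.1 h)
    rw [← centralizer_singleton_eq_of_commute hprop hgZ hx hg,
      Subgroup.mem_centralizer_singleton_iff]
    simpa [mul_assoc] using hcomm.eq
  have hone : conjCentralizerDiffCenter x ∪ conjCentralizerDiffCenter y ⊆ {1}ᶜ := by
    rintro a (ha | ha) rfl <;> exact ha.1 (one_mem _)
  have hcard := Set.ncard_le_ncard hone
  rw [Set.ncard_union_eq hdisj, Set.ncard_compl, Set.ncard_singleton] at hcard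
  have hxcard := card_le_two_mul_ncard_conjCentralizerDiffCenter hprop (hcon x hx)
  have hycard := card_le_two_mul_ncard_conjCentralizerDiffCenter hprop (hcon y hyZ)
  have hpos : 0 < Nat.card G := Nat.card_pos
  omega

lemma exists_conj_commute_pow_commute_of_minimal_nonabelian [Finite G]
    (hnc : Subgroup.center G ≠ ⊤)
    (hprop : ∀ K : Subgroup G, K ≠ ⊤ → IsMulCommutative K) :
    ∃ (x y : G) (s : ℕ), s.Prime ∧ s ∣ Nat.card G ∧ ¬ Commute x y ∧ Commute (y ^ s) x ∧
      ∀ g h : G, Commute (g * x * g⁻¹) (h * x * h⁻¹) := by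
  obtain ⟨x, hx, hnormal⟩ := exists_notMem_center_normal_centralizer hnc hprop
  set C := Subgroup.centralizer {x}
  have hC : C ≠ ⊤ := fun h => hx (by simpa using Subgroup.centralizer_eq_top_iff_subset.1 h)
  have := hprop C hC
  obtain ⟨s, hs, hsC⟩ := Nat.exists_prime_and_dvd fun h => hC (Subgroup.index_eq_one.1 h)
  have := Fact.mk hs
  obtain ⟨z, hz⟩ := exists_prime_orderOf_dvd_card' (G := G ⧸ C) s hsC
  obtain ⟨y, rfl⟩ := QuotientGroup.mk_surjective z
  refine ⟨x, y, s, hs, hsC.trans (Subgroup.index_dvd_card C), fun hxy => ?_, ?_, fun g h => ?_⟩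
  · have hy : y ∈ C := Subgroup.mem_centralizer_singleton_iff.2 hxy.symm
    rw [(QuotientGroup.eq_one_iff y).2 hy, orderOf_one] at hz
    exact hs.one_lt.ne hz
  · have hys : ((y ^ s : G) : G ⧸ C) = 1 := by
      rw [QuotientGroup.mk_pow, ← hz, pow_orderOf_eq_one]
    exact Subgroup.mem_centralizer_singleton_iff.1 ((QuotientGroup.eq_one_iff _).1 hys)
  · have hxC : x ∈ C := Subgroup.mem_centralizer_singleton_iff.2 rfl
    exact setLike_mul_comm (hnormal.conj_mem x hxC g) (hnormal.conj_mem x hxC h)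

lemma ncard_setOf_smul_mem_mul_ncard_orbit_le {X : Type*} [Finite G] [MulAction G X]
    {A : Set X} (hA : A.Finite) (x : X) :
    {g : G | g • x ∈ A}.ncard * (MulAction.orbit G x).ncard ≤ Nat.card G * A.ncard := by
  classical
  have := Fintype.ofFinite G
  have hfiber : ∀ y ∈ hA.toFinset, ({g ∈ {g : G | g • x ∈ A}.toFinset | g • x = y}).card ≤
      (MulAction.stabilizer G x : Set G).toFinset.card := by
    intro y _
    obtain h | ⟨g₀, hg₀⟩ := Finset.eq_empty_or_nonempty
      ({g ∈ {g : G | g • x ∈ A}.toFinset | g • x = y})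
    · rw [h, Finset.card_empty]
      exact Nat.zero_le _
    · refine Finset.card_le_card_of_injOn (g₀⁻¹ * ·) (fun g hg => ?_)
        (fun _ _ _ _ => mul_left_cancel)
      have hgy : g • x = y := (Finset.mem_filter.1 hg).2
      have hg₀y : g₀ • x = y := (Finset.mem_filter.1 hg₀).2
      simp [mul_smul, hgy, ← hg₀y]
  have hcard := Finset.card_le_mul_card_image_of_maps_to (f := fun g : G => g • x)
    (s := {g : G | g • x ∈ A}.toFinset) (t := hA.toFinset) (by simp) _ hfiber
  rw [← Set.ncard_eq_toFinset_card A hA, ← Set.ncard_eq_toFinset_card',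
    ← Set.ncard_eq_toFinset_card'] at hcard
  calc _ ≤ Nat.card (MulAction.stabilizer G x) * A.ncard * (MulAction.orbit G x).ncard :=
        Nat.mul_le_mul_right _ hcard
    _ = Nat.card G * A.ncard := by
        rw [← (MulAction.stabilizer G x).card_mul_index, MulAction.index_stabilizer]
        ring

lemma exists_three_smul_notMem_of_card_pow_lt {X : Type*} [Finite G] [MulAction G X]
    {A : Set X} (hA : A.Finite) {c : ℕ} (hc : ∀ a ∈ A, c ≤ (MulAction.orbit G a).ncard)
    (hlt : A.ncard ^ 4 < c ^ 3) :
    ∃ x y z : G, ∀ a ∈ A, x • a ∈ A → y • a ∈ A → z • a ∉ A := by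
  classical
  by_contra! hcon
  let bad (a : X) : Set G := {g | g • a ∈ A}
  have hbad : ∀ a ∈ A, (bad a).ncard * c ≤ Nat.card G * A.ncard := fun a ha =>
    (Nat.mul_le_mul_left _ (hc a ha)).trans (ncard_setOf_smul_mem_mul_ncard_orbit_le hA a)
  have hcover : (Set.univ : Set (G × G × G)) ⊆ ⋃ a ∈ hA.toFinset, bad a ×ˢ bad a ×ˢ bad a := by
    rintro ⟨x, y, z⟩ -
    obtain ⟨a, ha, hx, hy, hz⟩ := hcon x y z
    exact Set.mem_biUnion (hA.mem_toFinset.2 ha) ⟨hx, hy, hz⟩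
  have hunion : Nat.card G ^ 3 ≤ ∑ a ∈ hA.toFinset, (bad a).ncard ^ 3 := by
    have hle := (Set.ncard_le_ncard hcover (Set.toFinite _)).trans
      (Finset.set_ncard_biUnion_le _ _)
    simp only [Set.ncard_univ, Set.ncard_prod, Nat.card_prod] at hle
    simpa only [pow_succ, pow_zero, one_mul, mul_assoc] using hle
  have hpow : Nat.card G ^ 3 * c ^ 3 ≤ Nat.card G ^ 3 * A.ncard ^ 4 := calc
    Nat.card G ^ 3 * c ^ 3 ≤ ∑ a ∈ hA.toFinset, ((bad a).ncard * c) ^ 3 := by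
      simpa only [mul_pow, ← Finset.sum_mul] using Nat.mul_le_mul_right (c ^ 3) hunion
    _ ≤ ∑ _a ∈ hA.toFinset, (Nat.card G * A.ncard) ^ 3 :=
      Finset.sum_le_sum fun a ha => Nat.pow_le_pow_left (hbad a (hA.mem_toFinset.1 ha)) 3
    _ = Nat.card G ^ 3 * A.ncard ^ 4 := by
      rw [Finset.sum_const, ← Set.ncard_eq_toFinset_card A hA, smul_eq_mul]
      ring
  exact hlt.not_ge (Nat.le_of_mul_le_mul_left hpow (pow_pos Nat.card_pos 3))

lemma exists_three_conj_eq_one_of_card_pow_lt [Finite G] {H S : Subgroup G} {c : ℕ}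
    (hc : ∀ g ∈ H, g ≠ 1 → c ≤ ((fun x : G => x * g * x⁻¹) '' (S : Set G)).ncard)
    (hlt : Nat.card H ^ 4 < c ^ 3) :
    ∃ x ∈ S, ∃ y ∈ S, ∃ z ∈ S, ∀ g ∈ H,
      x * g * x⁻¹ ∈ H → y * g * y⁻¹ ∈ H → z * g * z⁻¹ ∈ H → g = 1 := by
  have horbit (g : G) : MulAction.orbit (S.map MulAut.conj) g =
      (fun x : G => x * g * x⁻¹) '' (S : Set G) := by
    ext a
    simp [MulAction.mem_orbit_iff, Subgroup.smul_def]
  have hle : ((H : Set G) \ {1}).ncard ≤ Nat.card H := Set.ncard_le_ncard Set.sdiff_subset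
  obtain ⟨⟨_, x, hx, rfl⟩, ⟨_, y, hy, rfl⟩, ⟨_, z, hz, rfl⟩, hxyz⟩ :=
    exists_three_smul_notMem_of_card_pow_lt (G := S.map MulAut.conj)
      (A := (H : Set G) \ {1}) (Set.toFinite _) (c := c)
      (fun g hg => by rw [horbit]; exact hc g hg.1 hg.2)
      ((Nat.pow_le_pow_left hle 4).trans_lt hlt)
  refine ⟨x, hx, y, hy, z, hz, fun g hg hgx hgy hgz => by_contra fun hne => ?_⟩
  have hconj (u : G) : u * g * u⁻¹ ≠ 1 := fun h => hne (conj_eq_one_iff.1 h)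
  exact hxyz g ⟨hg, hne⟩ ⟨hgx, hconj x⟩ ⟨hgy, hconj y⟩ ⟨hgz, hconj z⟩

end FiniteGroup

section OddPermutationGroup

/-- The function `a ↦ (13/5)^(a+1) / (4(a+1))` bounding the order of an odd-order permutation group
of degree `a ≥ 7`. -/
noncomputable def oddPermBoundTail (a : ℕ) : ℝ := (13 / 5 : ℝ) ^ (a + 1) / (4 * (a + 1))

/-- An upper bound for the order of an odd-order permutation group of degree `a`: the maximal order
for `a ≤ 6`, and values chosen so that `mul_oddPermBound_sq_mul_le` holds for larger `a`. -/
noncomputable def oddPermBound (a : ℕ) : ℝ :=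
  if a ≤ 2 then 1 else if a ≤ 4 then 3 else if a = 5 then 5 else if a = 6 then 9
  else oddPermBoundTail a

lemma oddPermBound_pos (a : ℕ) : 0 < oddPermBound a := by
  unfold oddPermBound
  split_ifs <;> first | (unfold oddPermBoundTail; positivity) | norm_num

lemma oddPermBound_of_seven_le {a : ℕ} (h : 7 ≤ a) : oddPermBound a = oddPermBoundTail a := by
  unfold oddPermBound
  rw [if_neg (by omega), if_neg (by omega), if_neg (by omega), if_neg (by omega)]

lemma mul_oddPermBound_sq_le_tail {e : ℕ} (he : 3 ≤ e) :
    ((2 * e + 1 : ℕ) : ℝ) * oddPermBound e ^ 2 ≤ oddPermBoundTail (2 * e + 1) := by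
  by_cases h : 7 ≤ e
  · rw [oddPermBound_of_seven_le h]
    unfold oddPermBoundTail
    have hsq : ((13 / 5 : ℝ) ^ (e + 1) / (4 * ((e : ℝ) + 1))) ^ 2 =
        (13 / 5 : ℝ) ^ (2 * e + 1 + 1) / (16 * ((e : ℝ) + 1) ^ 2) := by
      rw [div_pow]
      ring
    rw [hsq]
    push_cast
    rw [mul_div_assoc', div_le_div_iff₀ (by positivity) (by positivity)]
    have hpow : (0 : ℝ) < (13 / 5 : ℝ) ^ (2 * e + 1 + 1) := by positivity
    have hpoly : (2 * (e : ℝ) + 1) * (4 * (2 * (e : ℝ) + 1 + 1)) ≤ 16 * ((e : ℝ) + 1) ^ 2 := by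
      nlinarith [(Nat.cast_nonneg e : (0 : ℝ) ≤ e)]
    nlinarith [mul_le_mul_of_nonneg_left hpoly hpow.le]
  · interval_cases e <;> norm_num [oddPermBound, oddPermBoundTail]

lemma oddPermBound_mul_le (c : ℕ) : oddPermBound c * (8 + c) ≤ 8 * (13 / 5 : ℝ) ^ c := by
  by_cases h : 7 ≤ c
  · rw [oddPermBound_of_seven_le h]
    unfold oddPermBoundTail
    rw [div_mul_eq_mul_div, div_le_iff₀ (by positivity), pow_succ]
    have hpow : (0 : ℝ) < (13 / 5 : ℝ) ^ c := by positivity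
    have : (7 : ℝ) ≤ c := by exact_mod_cast h
    nlinarith
  · interval_cases c <;> norm_num [oddPermBound]

lemma oddPermBoundTail_mul_oddPermBound_le {b : ℕ} (hb : 7 ≤ b) (c : ℕ) :
    oddPermBoundTail b * oddPermBound c ≤ oddPermBoundTail (b + c) := by
  have hb' : (7 : ℝ) ≤ b := by exact_mod_cast hb
  have hc0 : (0 : ℝ) ≤ c := Nat.cast_nonneg c
  have hpos := oddPermBound_pos c
  have hkey : oddPermBound c * (b + c + 1) ≤ (13 / 5 : ℝ) ^ c * (b + 1) := by
    nlinarith [oddPermBound_mul_le c,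
      mul_nonneg hpos.le (mul_nonneg hc0 (by linarith : (0 : ℝ) ≤ b - 7))]
  unfold oddPermBoundTail
  rw [div_mul_eq_mul_div, div_le_div_iff₀ (by positivity) (by positivity),
    show b + c + 1 = (b + 1) + c by ring, pow_add _ (b + 1)]
  push_cast
  nlinarith [mul_le_mul_of_nonneg_left hkey (by positivity : (0 : ℝ) ≤ (13 / 5) ^ (b + 1))]

lemma mul_oddPermBound_le_of_le_two {e : ℕ} (he : e ≤ 2) (c : ℕ) :
    ((2 * e + 1 : ℕ) : ℝ) * oddPermBound c ≤ oddPermBound (2 * e + 1 + c) := by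
  by_cases hc : 7 ≤ c
  · rw [oddPermBound_of_seven_le hc, oddPermBound_of_seven_le (by omega)]
    unfold oddPermBoundTail
    have hc' : (7 : ℝ) ≤ c := by exact_mod_cast hc
    have hkey : (2 * (e : ℝ) + 1) * (2 * e + 1 + c + 1) ≤ (13 / 5 : ℝ) ^ (2 * e + 1) * (c + 1) := by
      interval_cases e <;> norm_num <;> linarith
    rw [mul_div_assoc', div_le_div_iff₀ (by positivity) (by positivity),
      show 2 * e + 1 + c + 1 = (2 * e + 1) + (c + 1) by ring, pow_add _ (2 * e + 1)]
    push_cast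
    nlinarith [mul_le_mul_of_nonneg_left hkey (by positivity : (0 : ℝ) ≤ (13 / 5) ^ (c + 1))]
  · interval_cases e <;> interval_cases c <;> norm_num [oddPermBound, oddPermBoundTail]

lemma mul_oddPermBound_sq_mul_le (e c : ℕ) :
    ((2 * e + 1 : ℕ) : ℝ) * oddPermBound e ^ 2 * oddPermBound c ≤
      oddPermBound (2 * e + 1 + c) := by
  by_cases he : 3 ≤ e
  · rw [oddPermBound_of_seven_le (show 7 ≤ 2 * e + 1 + c by omega)]
    exact (mul_le_mul_of_nonneg_right (mul_oddPermBound_sq_le_tail he)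
      (oddPermBound_pos c).le).trans (oddPermBoundTail_mul_oddPermBound_le (by omega) c)
  · have hone : oddPermBound e = 1 := by
      unfold oddPermBound
      rw [if_pos (by omega)]
    rw [hone, one_pow, mul_one]
    exact mul_oddPermBound_le_of_le_two (by omega) c

lemma oddPermBound_sq_le_of_le_seven {a : ℕ} (ha : a ≤ 7) :
    oddPermBound a ^ 2 ≤ (33 / 10 : ℝ) ^ a := by
  interval_cases a <;> norm_num [oddPermBound, oddPermBoundTail]

lemma oddPermBound_sq_le (a : ℕ) : oddPermBound a ^ 2 ≤ (169 / 25 : ℝ) ^ a := by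
  have hbound : oddPermBound a ≤ (13 / 5 : ℝ) ^ a := by
    have := oddPermBound_mul_le a
    nlinarith [mul_nonneg (oddPermBound_pos a).le (Nat.cast_nonneg (α := ℝ) a)]
  calc oddPermBound a ^ 2 ≤ ((13 / 5 : ℝ) ^ a) ^ 2 :=
        pow_le_pow_left₀ (oddPermBound_pos a).le hbound 2
    _ = (169 / 25 : ℝ) ^ a := by rw [← pow_mul, mul_comm, pow_mul]; norm_num

variable {G X : Type*} [Group G] [MulAction G X]

lemma eq_of_smul_eq_of_smul_eq_of_odd {g : G} (hg : Odd (orderOf g)) {y z : X}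
    (hyz : g • y = z) (hzy : g • z = y) : y = z := by
  obtain ⟨r, hr⟩ := hg
  have hsq : g ^ 2 ∈ MulAction.stabilizer G y := by
    rw [MulAction.mem_stabilizer_iff, pow_two, mul_smul, hyz, hzy]
  have hg : (g ^ 2) ^ (r + 1) = g := by
    rw [← pow_mul, show 2 * (r + 1) = (2 * r + 1) + 1 by ring, ← hr, pow_succ,
      pow_orderOf_eq_one, one_mul]
  have hmem := (MulAction.stabilizer G y).pow_mem hsq (r + 1)
  rw [hg, MulAction.mem_stabilizer_iff] at hmem
  rw [← hmem, hyz]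

/- An element swapping `y` and `z` would have even order, so the orbits of `(y, z)` and `(z, y)`
differ; orient the pair by comparing them in a well-order on the set of orbits. -/
lemma exists_invariant_tournament (hG : Odd (Nat.card G)) :
    ∃ r : X → X → Prop, (∀ (g : G) y z, r (g • y) (g • z) ↔ r y z) ∧
      (∀ y z, r y z → ¬ r z y) ∧ ∀ y z, y ≠ z → r y z ∨ r z y := by
  let orb (y z : X) : MulAction.orbitRel.Quotient G (X × X) := Quotient.mk _ (y, z)
  have horb (g : G) (y z : X) : orb (g • y) (g • z) = orb y z := Quotient.sound ⟨g, rfl⟩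
  refine ⟨fun y z => WellOrderingRel (orb y z) (orb z y), fun g y z => ?_,
    fun y z => asymm_of WellOrderingRel, fun y z hyz => ?_⟩
  · simp only [horb]
  · obtain h | h | h := trichotomous_of WellOrderingRel (orb y z) (orb z y)
    · exact Or.inl h
    · obtain ⟨g, hg⟩ := Quotient.exact h
      have hodd : Odd (orderOf g) := hG.of_dvd_nat (orderOf_dvd_natCard g)
      exact absurd (eq_of_smul_eq_of_smul_eq_of_odd hodd (congrArg Prod.snd hg)
        (congrArg Prod.fst hg)) hyz
    · exact Or.inr h

lemma ncard_orbit_rel_eq [Finite X] {r : X → X → Prop}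
    (hr : ∀ (g : G) y z, r (g • y) (g • z) ↔ r y z) (x : X) :
    {z ∈ MulAction.orbit G x | r x z}.ncard = {z ∈ MulAction.orbit G x | r z x}.ncard := by
  classical
  have := Fintype.ofFinite X
  set O : Finset X := (MulAction.orbit G x).toFinset
  have hconst (r : X → X → Prop) (hr : ∀ (g : G) y z, r (g • y) (g • z) ↔ r y z) :
      ∀ y ∈ O, (O.filter (r y)).card = {z ∈ MulAction.orbit G x | r x z}.ncard := by
    intro y hy
    obtain ⟨g, rfl⟩ := Set.mem_toFinset.1 hy
    rw [← Set.ncard_coe_finset]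
    symm
    refine Set.ncard_congr (fun z _ => g • z) (fun z hz => ?_)
      (fun _ _ _ _ => smul_left_cancel g) (fun z hz => ⟨g⁻¹ • z, ?_, smul_inv_smul g z⟩)
    · exact Finset.mem_coe.2 (Finset.mem_filter.2
        ⟨Set.mem_toFinset.2 (MulAction.mem_orbit_of_mem_orbit g hz.1), (hr g x z).2 hz.2⟩)
    · obtain ⟨hzO, hz⟩ := Finset.mem_filter.1 (Finset.mem_coe.1 hz)
      exact ⟨MulAction.mem_orbit_of_mem_orbit g⁻¹ (Set.mem_toFinset.1 hzO),
        (hr g x _).1 (by rwa [smul_inv_smul])⟩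
  have hsum := Finset.sum_card_bipartiteAbove_eq_sum_card_bipartiteBelow (s := O) (t := O) r
  have habove := Finset.sum_congr rfl (hconst r hr)
  have hbelow := Finset.sum_congr rfl (hconst (flip r) fun g y z => hr g z y)
  have hpos : 0 < O.card := Finset.card_pos.2 ⟨x, by simp [O]⟩
  refine Nat.eq_of_mul_eq_mul_left hpos ?_
  rw [Finset.sum_const, smul_eq_mul] at habove hbelow
  exact habove.symm.trans (hsum.trans hbelow)

lemma exists_orbit_eq_insert_union_of_odd [Finite X] (hG : Odd (Nat.card G)) (x : X) :
    ∃ A B : Set X, MulAction.orbit G x = insert x (A ∪ B) ∧ A.ncard = B.ncard ∧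
      (MulAction.orbit G x).ncard = 2 * A.ncard + 1 ∧
      ∀ g ∈ MulAction.stabilizer G x, (∀ z ∈ A, g • z ∈ A) ∧ ∀ z ∈ B, g • z ∈ B := by
  obtain ⟨r, hr, hasymm, htotal⟩ := exists_invariant_tournament (X := X) hG
  have hirrefl : ¬ r x x := fun h => hasymm x x h h
  set A := {z ∈ MulAction.orbit G x | r x z}
  set B := {z ∈ MulAction.orbit G x | r z x}
  have hAB : A.ncard = B.ncard := ncard_orbit_rel_eq hr x
  have horbit : MulAction.orbit G x = insert x (A ∪ B) := by
    ext z
    refine ⟨fun hz => ?_, ?_⟩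
    · by_cases hzx : z = x
      · exact Or.inl hzx
      · exact Or.inr ((htotal x z (Ne.symm hzx)).imp (⟨hz, ·⟩) (⟨hz, ·⟩))
    · rintro (rfl | h | h)
      exacts [MulAction.mem_orbit_self z, h.1, h.1]
  have hx : x ∉ A ∪ B := fun h => h.elim (fun h => hirrefl h.2) (fun h => hirrefl h.2)
  have hdisj : Disjoint A B := Set.disjoint_left.2 fun z hz hz' => hasymm x z hz.2 hz'.2
  refine ⟨A, B, horbit, hAB, ?_, fun g hg => ⟨fun z hz => ?_, fun z hz => ?_⟩⟩
  · rw [horbit, Set.ncard_insert_of_notMem hx, Set.ncard_union_eq hdisj, ← hAB, two_mul]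
  · have h := hr g x z
    rw [MulAction.mem_stabilizer_iff.1 hg] at h
    exact ⟨MulAction.mem_orbit_of_mem_orbit g hz.1, h.2 hz.2⟩
  · have h := hr g z x
    rw [MulAction.mem_stabilizer_iff.1 hg] at h
    exact ⟨MulAction.mem_orbit_of_mem_orbit g hz.1, h.2 hz.2⟩

lemma natCard_eq_ncard_orbit_mul_natCard_inf_stabilizer (K : Subgroup G) (x : X) :
    Nat.card K = (MulAction.orbit K x).ncard *
      Nat.card (K ⊓ MulAction.stabilizer G x : Subgroup G) := by
  have hindex : (MulAction.orbit K x).ncard = (MulAction.stabilizer G x).relIndex K :=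
    (MulAction.index_stabilizer K x).symm
  rw [hindex, ← Subgroup.inf_relIndex_left, ← Subgroup.relIndex_bot_left,
    ← Subgroup.relIndex_bot_left, mul_comm, Subgroup.relIndex_mul_relIndex _ _ _ bot_le inf_le_left]

lemma inf_fixingSubgroup_insert_union_union (K : Subgroup G) (x : X) (A B T : Set X) :
    K ⊓ fixingSubgroup G (insert x (A ∪ B) ∪ T) = K ⊓ MulAction.stabilizer G x ⊓
      fixingSubgroup G A ⊓ fixingSubgroup G B ⊓ fixingSubgroup G T := by
  have hsingle : fixingSubgroup G {x} = MulAction.stabilizer G x := by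
    ext g
    simp [mem_fixingSubgroup_iff]
  rw [fixingSubgroup_union, Set.insert_eq, fixingSubgroup_union, fixingSubgroup_union, hsingle]
  simp only [inf_assoc]

lemma mul_le_oddPermBound_mul_of_le {a b : ℕ} {x y z w : ℝ} (hx : x ≤ oddPermBound a * y)
    (hy : y ≤ oddPermBound a * z) (hz : z ≤ oddPermBound b * w) (hw : 0 ≤ w) :
    (2 * a + 1 : ℕ) * x ≤ oddPermBound (2 * a + 1 + b) * w := by
  have ha := (oddPermBound_pos a).le
  calc (2 * a + 1 : ℕ) * x
      ≤ (2 * a + 1 : ℕ) * (oddPermBound a * (oddPermBound a * (oddPermBound b * w))) := by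
        gcongr
        exact hx.trans (mul_le_mul_of_nonneg_left
          (hy.trans (mul_le_mul_of_nonneg_left hz ha)) ha)
    _ = (2 * a + 1 : ℕ) * oddPermBound a ^ 2 * oddPermBound b * w := by ring
    _ ≤ oddPermBound (2 * a + 1 + b) * w :=
        mul_le_mul_of_nonneg_right (mul_oddPermBound_sq_mul_le a b) hw

lemma natCard_le_oddPermBound_mul [Finite G] [Finite X] (K : Subgroup G)
    (hK : Odd (Nat.card K)) (S : Set X) (hS : ∀ k ∈ K, ∀ x ∈ S, k • x ∈ S) :
    (Nat.card K : ℝ) ≤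
      oddPermBound S.ncard * Nat.card (K ⊓ fixingSubgroup G S : Subgroup G) := by
  induction hn : S.ncard using Nat.strong_induction_on generalizing K S with
  | _ n ih =>
  subst hn
  obtain rfl | ⟨x, hx⟩ := S.eq_empty_or_nonempty
  · simp [oddPermBound]
  obtain ⟨A, B, hO, hAB, hOcard, hstab⟩ := exists_orbit_eq_insert_union_of_odd hK x
  set O := MulAction.orbit K x
  have hOS : O ⊆ S := by
    rintro _ ⟨k, rfl⟩
    exact hS k k.2 x hx
  have hScard : 2 * A.ncard + 1 + (S \ O).ncard = S.ncard := by
    rw [← hOcard, add_comm, Set.ncard_sdiff_add_ncard_of_subset hOS]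
  have hbound {L : Subgroup G} (hL : L ≤ K) {T : Set X} (hT : ∀ k ∈ L, ∀ z ∈ T, k • z ∈ T)
      (hlt : T.ncard < S.ncard) : (Nat.card L : ℝ) ≤
        oddPermBound T.ncard * Nat.card (L ⊓ fixingSubgroup G T : Subgroup G) :=
    ih _ hlt L (hK.of_dvd_nat (Subgroup.card_dvd_of_le hL)) T hT rfl
  let K₀ := K ⊓ MulAction.stabilizer G x
  let K₁ := K₀ ⊓ fixingSubgroup G A
  let K₂ := K₁ ⊓ fixingSubgroup G B
  have hK₁ : K₁ ≤ K₀ := inf_le_left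
  have hK₂ : K₂ ≤ K := inf_le_left.trans (hK₁.trans inf_le_left)
  have hbound₀ := hbound (L := K₀) inf_le_left
    (fun k hk => (hstab ⟨k, hk.1⟩ hk.2).1) (by omega)
  have hbound₁ := hbound (L := K₁) (hK₁.trans inf_le_left)
    (fun k hk => (hstab ⟨k, (hK₁ hk).1⟩ (hK₁ hk).2).2) (by omega)
  have hbound₂ := hbound hK₂ (T := S \ O) (fun k hk z hz => ⟨hS k (hK₂ hk) z hz.1, fun h => hz.2 <|
    inv_smul_smul (⟨k, hK₂ hk⟩ : K) z ▸ MulAction.mem_orbit_of_mem_orbit _ h⟩) (by omega)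
  have hfix : K₂ ⊓ fixingSubgroup G (S \ O) = K ⊓ fixingSubgroup G S := by
    rw [← inf_fixingSubgroup_insert_union_union, ← hO, Set.union_sdiff_cancel hOS]
  rw [← hAB] at hbound₁
  rw [hfix] at hbound₂
  rw [natCard_eq_ncard_orbit_mul_natCard_inf_stabilizer K x, hOcard, Nat.cast_mul, ← hScard]
  exact mul_le_oddPermBound_mul_of_le hbound₀ hbound₁ hbound₂ (Nat.cast_nonneg _)

end OddPermutationGroup

section Isometry

open Module (finrank)
open MulAction (stabilizer)

variable {F V : Type*} [Field F] [AddCommGroup V] [Module F V]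

/-- The isometry group of a bilinear form `B`, as a subgroup of the linear automorphisms. -/
def formIsometryGroup (B : LinearMap.BilinForm F V) : Subgroup (V ≃ₗ[F] V) where
  carrier := {g | ∀ u v, B (g u) (g v) = B u v}
  one_mem' _ _ := rfl
  mul_mem' ha hb u v := (ha _ _).trans (hb u v)
  inv_mem' {a} ha u v := by
    rw [← ha, ← LinearEquiv.mul_apply, ← LinearEquiv.mul_apply, mul_inv_cancel]
    rfl

/-- The residual space `(g - 1) V` of a linear automorphism `g`; for an isometry it is the
orthogonal complement of the fixed space. -/
def residualSpace (g : V ≃ₗ[F] V) : Submodule F V :=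
  LinearMap.range ((g : V →ₗ[F] V) - LinearMap.id)

lemma mem_residualSpace {g : V ≃ₗ[F] V} {v : V} : v ∈ residualSpace g ↔ ∃ w, g w - w = v := by
  simp [residualSpace]

lemma sub_mem_residualSpace (g : V ≃ₗ[F] V) (w : V) : g w - w ∈ residualSpace g :=
  mem_residualSpace.2 ⟨w, rfl⟩

lemma residualSpace_eq_bot_iff {g : V ≃ₗ[F] V} : residualSpace g = ⊥ ↔ g = 1 := by
  rw [residualSpace, LinearMap.range_eq_bot, sub_eq_zero]
  exact LinearEquiv.toLinearMap_inj (e₂ := 1)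

lemma finrank_residualSpace_add_finrank_fixedSubmodule [FiniteDimensional F V] (g : V ≃ₗ[F] V) :
    finrank F (residualSpace g) + finrank F g.fixedSubmodule = finrank F V := by
  rw [LinearMap.fixedSubmodule_eq_ker]
  exact LinearMap.finrank_range_add_finrank_ker _

lemma orthogonal_residualSpace {B : LinearMap.BilinForm F V} (hB : B.Nondegenerate)
    {g : V ≃ₗ[F] V} (hg : g ∈ formIsometryGroup B) :
    B.orthogonal (residualSpace g) = g.fixedSubmodule := by
  ext u
  rw [LinearMap.BilinForm.mem_orthogonal_iff, LinearMap.mem_fixedSubmodule_iff]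
  refine ⟨fun h => sub_eq_zero.1 (hB.2 _ fun w => ?_), fun h n hn => ?_⟩
  · obtain ⟨w, rfl⟩ := g.surjective w
    have hw := h _ (sub_mem_residualSpace g w)
    rw [map_sub, LinearMap.sub_apply, sub_eq_zero] at hw
    exact (map_sub _ _ _).trans (by rw [LinearEquiv.coe_toLinearMap, hg, hw, sub_self])
  · obtain ⟨w, rfl⟩ := mem_residualSpace.1 hn
    rw [map_sub, LinearMap.sub_apply]
    nth_rewrite 1 [← h]
    rw [LinearEquiv.coe_toLinearMap, hg, sub_self]

lemma pow_apply_eq_add_smul {g : V ≃ₗ[F] V} {v w : V} (hw : g w = w + v) (hv : g v = v) (i : ℕ) :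
    (g ^ i) w = w + (i : F) • v := by
  induction i with
  | zero => simp
  | succ i ih =>
    rw [pow_succ', LinearEquiv.mul_apply, ih, map_add, map_smul, hw, hv]
    push_cast
    module

lemma disjoint_residualSpace_fixedSubmodule {g : V ≃ₗ[F] V} {N : ℕ} (hgN : g ^ N = 1)
    (hN : (N : F) ≠ 0) : Disjoint (residualSpace g) g.fixedSubmodule := by
  rw [Submodule.disjoint_def]
  rintro v hv (hfix : g v = v)
  obtain ⟨w, hw⟩ := mem_residualSpace.1 hv
  have hpow := pow_apply_eq_add_smul (by rw [← hw, add_sub_cancel]) hfix N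
  rw [hgN, LinearEquiv.coe_one, id, left_eq_add] at hpow
  exact (smul_eq_zero.1 hpow).resolve_left hN

lemma residualSpace_conj (g y : V ≃ₗ[F] V) :
    residualSpace (y * g * y⁻¹) = y • residualSpace g := by
  ext v
  simp only [Submodule.mem_smul_pointwise_iff_exists, mem_residualSpace]
  constructor
  · rintro ⟨w, rfl⟩
    exact ⟨_, ⟨y⁻¹ w, rfl⟩, by simp [LinearEquiv.mul_apply]⟩
  · rintro ⟨_, ⟨w, rfl⟩, rfl⟩
    exact ⟨y w, by simp [LinearEquiv.mul_apply]⟩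

lemma finrank_residualSpace_conj (g y : V ≃ₗ[F] V) :
    finrank F (residualSpace (y * g * y⁻¹)) = finrank F (residualSpace g) := by
  rw [residualSpace_conj]
  exact LinearEquiv.finrank_map_eq y (residualSpace g)

lemma isSemisimple_of_pow_eq_one [FiniteDimensional F V] {g : V ≃ₗ[F] V} {N : ℕ} (hgN : g ^ N = 1)
    (hN : (N : F) ≠ 0) : Module.End.IsSemisimple (g : Module.End F V) := by
  have hsep : (Polynomial.X ^ N - 1 : Polynomial F).Separable :=
    Polynomial.X_pow_sub_one_separable_iff.2 hN
  have hpow : (g : Module.End F V) ^ N = 1 := by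
    have := congrArg (LinearEquiv.automorphismGroup.toLinearMapMonoidHom (R := F) (M := V)) hgN
    rwa [map_pow, map_one] at this
  exact Module.End.isSemisimple_of_squarefree_aeval_eq_zero hsep.squarefree (by simp [hpow])

lemma mem_stabilizer_submodule_iff {X : Submodule F V} {g : V ≃ₗ[F] V} :
    g ∈ stabilizer (V ≃ₗ[F] V) X ↔ ∀ v, g v ∈ X ↔ v ∈ X := by
  rw [Submodule.stabilizer_coe, MulAction.mem_stabilizer_set]
  rfl

lemma mem_stabilizer_submodule_of_forall_mem [FiniteDimensional F V] {X : Submodule F V}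
    {g : V ≃ₗ[F] V} (h : ∀ v ∈ X, g v ∈ X) : g ∈ stabilizer (V ≃ₗ[F] V) X :=
  Submodule.eq_of_le_of_finrank_eq (Submodule.map_le_iff_le_comap.2 h)
    (LinearEquiv.finrank_map_eq g X)

lemma mem_stabilizer_orthogonal {B : LinearMap.BilinForm F V} {g : V ≃ₗ[F] V}
    (hg : g ∈ formIsometryGroup B) {X : Submodule F V} (h : g ∈ stabilizer (V ≃ₗ[F] V) X) :
    g ∈ stabilizer (V ≃ₗ[F] V) (B.orthogonal X) := by
  rw [mem_stabilizer_submodule_iff] at h ⊢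
  intro v
  simp only [LinearMap.BilinForm.mem_orthogonal_iff]
  refine ⟨fun hv n hn => ?_, fun hv n hn => ?_⟩
  · rw [← hg]
    exact hv (g n) ((h n).2 hn)
  · obtain ⟨m, rfl⟩ := g.surjective n
    rw [hg]
    exact hv m ((h m).1 hn)

/-- The restriction of the automorphisms preserving a subspace `X` to automorphisms of `X`. -/
def restrictStabilizer (X : Submodule F V) : stabilizer (V ≃ₗ[F] V) X →* (X ≃ₗ[F] X) where
  toFun g := (g : V ≃ₗ[F] V).ofSubmodules X X g.2
  map_one' := rfl
  map_mul' _ _ := rfl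

lemma restrictStabilizer_mem_isometryGroup {B : LinearMap.BilinForm F V} {X : Submodule F V}
    (g : stabilizer (V ≃ₗ[F] V) X) (hg : (g : V ≃ₗ[F] V) ∈ formIsometryGroup B) :
    restrictStabilizer X g ∈ formIsometryGroup (B.restrict X) := fun u v => hg u v

/-- The extension of the automorphisms of a subspace `X` to the whole space by the identity on a
complement `Y`. -/
noncomputable def extendOfIsCompl {X Y : Submodule F V} (h : IsCompl X Y) :
    (X ≃ₗ[F] X) →* (V ≃ₗ[F] V) where
  toFun a := (Submodule.prodEquivOfIsCompl X Y h).symm ≪≫ₗ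
    (a.prodCongr (LinearEquiv.refl F Y)) ≪≫ₗ (Submodule.prodEquivOfIsCompl X Y h)
  map_one' := by
    ext v
    obtain ⟨p, rfl⟩ := (Submodule.prodEquivOfIsCompl X Y h).surjective v
    simp
  map_mul' a b := by
    ext v
    obtain ⟨p, rfl⟩ := (Submodule.prodEquivOfIsCompl X Y h).surjective v
    simp

section extendOfIsCompl

variable {X Y : Submodule F V} (h : IsCompl X Y) (a : X ≃ₗ[F] X)

lemma extendOfIsCompl_apply_add (x : X) (y : Y) : extendOfIsCompl h a (x + y : V) = a x + y := by
  rw [← Submodule.coe_prodEquivOfIsCompl' X Y h (x, y)]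
  simp [extendOfIsCompl]

lemma extendOfIsCompl_apply_left (x : X) : extendOfIsCompl h a x = a x := by
  simpa using extendOfIsCompl_apply_add h a x 0

lemma extendOfIsCompl_injective : Function.Injective (extendOfIsCompl h) := fun a b hab => by
  ext x
  rw [← extendOfIsCompl_apply_left h, ← extendOfIsCompl_apply_left h, hab]

lemma residualSpace_extendOfIsCompl :
    residualSpace (extendOfIsCompl h a) = (residualSpace a).map X.subtype := by
  ext v
  simp only [mem_residualSpace, Submodule.mem_map]
  constructor
  · rintro ⟨w, rfl⟩
    obtain ⟨⟨x, y⟩, rfl⟩ := (Submodule.prodEquivOfIsCompl X Y h).surjective w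
    refine ⟨a x - x, ⟨x, rfl⟩, ?_⟩
    rw [Submodule.coe_prodEquivOfIsCompl', extendOfIsCompl_apply_add, add_sub_add_right_eq_sub]
    rfl
  · rintro ⟨_, ⟨x, rfl⟩, rfl⟩
    exact ⟨x, by rw [extendOfIsCompl_apply_left]; rfl⟩

lemma extendOfIsCompl_mem_isometryGroup {B : LinearMap.BilinForm F V} (hs : B.IsSymm)
    (h : IsCompl X (B.orthogonal X)) {a : X ≃ₗ[F] X} (ha : a ∈ formIsometryGroup (B.restrict X)) :
    extendOfIsCompl h a ∈ formIsometryGroup B := by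
  intro u v
  obtain ⟨⟨x, y⟩, rfl⟩ := (Submodule.prodEquivOfIsCompl X _ h).surjective u
  obtain ⟨⟨x', y'⟩, rfl⟩ := (Submodule.prodEquivOfIsCompl X _ h).surjective v
  have hxy (x : X) (y : B.orthogonal X) : B x y = 0 := y.2 x x.2
  have hyx (x : X) (y : B.orthogonal X) : B y x = 0 := hs.eq_iff.1 (hxy x y)
  have hxx : B (a x) (a x') = B x x' := ha x x'
  simp only [Submodule.coe_prodEquivOfIsCompl']
  rw [extendOfIsCompl_apply_add, extendOfIsCompl_apply_add]
  simp only [map_add, LinearMap.add_apply, hxy, hyx, hxx]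

end extendOfIsCompl

lemma exists_self_ne_zero [Nontrivial V] {B : LinearMap.BilinForm F V} (hB : B.Nondegenerate)
    (hs : B.IsSymm) (h2 : (2 : F) ≠ 0) : ∃ v, B v v ≠ 0 := by
  have := invertibleOfNonzero h2
  exact LinearMap.BilinForm.exists_bilinForm_self_ne_zero hB.ne_zero
    (LinearMap.BilinForm.isSymm_iff.1 hs)

lemma exists_mem_stabilizer_finrank_lt {g : V ≃ₗ[F] V} {s : ℕ} (hs : 0 < s) (hgs : g ^ s = 1)
    [FiniteDimensional F V] {v : V} (hv : v ∈ residualSpace g) :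
    ∃ E ≤ residualSpace g, v ∈ E ∧ g ∈ stabilizer (V ≃ₗ[F] V) E ∧ finrank F E < s := by
  classical
  obtain ⟨w, rfl⟩ := mem_residualSpace.1 hv
  let f (i : ℕ) : V := (g ^ i) (g w - w)
  have hf (i : ℕ) : f i = (g ^ (i + 1)) w - (g ^ i) w := by
    simp only [f, map_sub, pow_succ, LinearEquiv.mul_apply]
  have hgf (i : ℕ) : g (f i) = f (i + 1) := by
    simp only [f, pow_succ', LinearEquiv.mul_apply]
  have hsum : ∑ i ∈ Finset.range s, f i = 0 := by
    simp only [hf]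
    rw [Finset.sum_range_sub fun i => (g ^ i) w, hgs, pow_zero, sub_self]
  let E := Submodule.span F ((Finset.range (s - 1)).image f : Set V)
  have hlt {i : ℕ} (hi : i < s - 1) : f i ∈ E :=
    Submodule.subset_span (Finset.mem_image_of_mem f (Finset.mem_range.2 hi))
  have hlast : f (s - 1) ∈ E := by
    rw [← Nat.succ_pred_eq_of_pos hs, Finset.sum_range_succ] at hsum
    rw [← Nat.pred_eq_sub_one, eq_neg_of_add_eq_zero_right hsum]
    exact E.neg_mem (E.sum_mem fun i hi => hlt (Finset.mem_range.1 hi))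
  have hmem (i : ℕ) : f i ∈ E := by
    have hmod : f i = f (i % s) := by
      simp only [f]
      rw [pow_eq_pow_mod i hgs]
    rw [hmod]
    obtain h | h := (Nat.le_sub_one_of_lt (Nat.mod_lt i hs)).lt_or_eq
    exacts [hlt h, h ▸ hlast]
  refine ⟨E, Submodule.span_le.2 ?_, hmem 0, mem_stabilizer_submodule_of_forall_mem ?_, ?_⟩
  · rintro _ hx
    obtain ⟨i, -, rfl⟩ := Finset.mem_image.1 hx
    refine mem_residualSpace.2 ⟨(g ^ i) w, ?_⟩
    rw [hf, pow_succ', LinearEquiv.mul_apply]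
  · refine fun x hx => (Submodule.span_le (p := E.comap (g : V →ₗ[F] V))).2 ?_ hx
    rintro _ hx
    obtain ⟨i, -, rfl⟩ := Finset.mem_image.1 hx
    exact SetLike.mem_coe.2 (Submodule.mem_comap.2 ((hgf i).symm ▸ hmem (i + 1)))
  · have hcard := (finrank_span_finset_le_card (R := F) _).trans
      (Finset.card_image_le (s := Finset.range (s - 1)) (f := f))
    rw [Finset.card_range] at hcard
    exact hcard.trans_lt (by omega)

/- `X` is a `g`-invariant complement of the radical of `E`, which exists because `g` is
semisimple. -/
lemma exists_disjoint_orthogonal_le_sup [FiniteDimensional F V] {B : LinearMap.BilinForm F V}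
    (hs : B.IsSymm) {g : V ≃ₗ[F] V} (hg : g ∈ formIsometryGroup B)
    (hss : Module.End.IsSemisimple (g : Module.End F V)) {E : Submodule F V}
    (hgE : g ∈ stabilizer (V ≃ₗ[F] V) E) :
    ∃ X ≤ E, g ∈ stabilizer (V ≃ₗ[F] V) X ∧ Disjoint X (B.orthogonal X) ∧
      E ≤ E ⊓ B.orthogonal E ⊔ X := by
  have hgE' := mem_stabilizer_submodule_iff.1 hgE
  have hgorth := mem_stabilizer_submodule_iff.1 (mem_stabilizer_orthogonal hg hgE)
  obtain ⟨R, hgR, hR⟩ := Module.End.isSemisimple_iff.1 hss (E ⊓ B.orthogonal E)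
    ((Module.End.mem_invtSubmodule _).2 fun x hx => ⟨(hgE' x).2 hx.1, (hgorth x).2 hx.2⟩)
  have hle : E ≤ E ⊓ B.orthogonal E ⊔ R ⊓ E := by
    rw [← sup_inf_assoc_of_le R inf_le_left, hR.sup_eq_top, top_inf_eq]
  refine ⟨R ⊓ E, inf_le_right, mem_stabilizer_submodule_of_forall_mem fun x hx =>
    ⟨(Module.End.mem_invtSubmodule _).1 hgR hx.1, (hgE' x).2 hx.2⟩, ?_, hle⟩
  refine Submodule.disjoint_def.2 fun x hx hxorth => ?_
  refine Submodule.disjoint_def.1 hR.disjoint x ⟨hx.2, fun n hn => ?_⟩ hx.1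
  obtain ⟨r, hr, y, hy, rfl⟩ := Submodule.mem_sup.1 (hle hn)
  have hyx : B y x = 0 := hxorth y hy
  have hrx : B r x = 0 := hs.eq_iff.1 (hr.2 x hx.2)
  rw [map_add, LinearMap.add_apply, hyx, hrx, add_zero]

lemma exists_orderOf_eq_finrank_residualSpace_lt [FiniteDimensional F V]
    {B : LinearMap.BilinForm F V} (hB : B.Nondegenerate) (hs : B.IsSymm) (h2 : (2 : F) ≠ 0)
    {g : V ≃ₗ[F] V} (hg : g ∈ formIsometryGroup B) (hp : (orderOf g).Prime)
    (hF : (orderOf g : F) ≠ 0) :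
    ∃ a ∈ formIsometryGroup B, orderOf a = orderOf g ∧ finrank F (residualSpace a) < orderOf g := by
  have hg1 : g ≠ 1 := by
    rintro rfl
    exact hp.ne_one orderOf_one
  have hpow := pow_orderOf_eq_one g
  have hdisj := disjoint_residualSpace_fixedSubmodule hpow hF
  have := (Submodule.nontrivial_iff_ne_bot).2 (residualSpace_eq_bot_iff.not.2 hg1)
  obtain ⟨⟨v, hv⟩, hvv⟩ := exists_self_ne_zero
    (B.nondegenerate_restrict_of_disjoint_orthogonal hs.isRefl
      (by rwa [orthogonal_residualSpace hB hg])) (hs.restrict (residualSpace g)) h2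
  obtain ⟨E, hE, hvE, hgE, hEs⟩ := exists_mem_stabilizer_finrank_lt hp.pos hpow hv
  obtain ⟨X, hXE, hgX, hX, hEX⟩ :=
    exists_disjoint_orthogonal_le_sup hs hg (isSemisimple_of_pow_eq_one hpow hF) hgE
  have hX0 : X ≠ ⊥ := by
    rintro rfl
    rw [sup_bot_eq] at hEX
    exact hvv ((hEX hvE).2 v hvE)
  have hcompl := (LinearMap.BilinForm.isCompl_orthogonal_iff_disjoint hs.isRefl).2 hX
  set a := restrictStabilizer X ⟨g, hgX⟩
  have ha : a ^ orderOf g = 1 := by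
    rw [← map_pow, ← map_one (restrictStabilizer X)]
    exact congrArg _ (Subtype.ext hpow)
  have ha1 : a ≠ 1 := fun h => by
    obtain ⟨x, hx, hx0⟩ := Submodule.exists_mem_ne_zero_of_ne_bot hX0
    have hgx : g x = x := congrArg (fun b : X ≃ₗ[F] X => (b ⟨x, hx⟩ : V)) h
    exact hx0 (Submodule.disjoint_def.1 hdisj x (hE (hXE hx)) hgx)
  have := Fact.mk hp
  refine ⟨extendOfIsCompl hcompl a, extendOfIsCompl_mem_isometryGroup hs hcompl
    (restrictStabilizer_mem_isometryGroup _ hg), ?_, lt_of_le_of_lt ?_ hEs⟩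
  · rw [orderOf_injective _ (extendOfIsCompl_injective hcompl), orderOf_eq_prime ha ha1]
  · rw [residualSpace_extendOfIsCompl]
    exact Submodule.finrank_mono ((Submodule.map_subtype_le X _).trans hXE)

end Isometry

/-! ### Simultaneous eigenspaces of commuting isometries -/

section SignedTranslates
variable {α K : Type*} {s : ℕ}

lemma dvd_of_periodic {f : ℤ → α} (hs : s.Prime) (hper : Function.Periodic f s)
    (hne : ¬ Function.Periodic f 1) {d : ℤ} (hd : Function.Periodic f d) : (s : ℤ) ∣ d := by
  by_contra hdvd
  obtain ⟨a, b, hab⟩ := (Nat.prime_iff_prime_int.1 hs).coprime_iff_not_dvd.2 hdvd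
  exact hne (hab ▸ (hper.int_mul a).add_period (hd.int_mul b))

lemma eq_of_intCast_dvd_sub {j k : Fin s} (h : (s : ℤ) ∣ (j : ℤ) - (k : ℤ)) : j = k := by
  have := Int.eq_zero_of_abs_lt_dvd h (by rw [abs_lt]; omega)
  omega

lemma eq_one_of_inv_eq_of_odd_pow_eq_one [GroupWithZero K] {a : K} {N : ℕ} (hN : Odd N)
    (haN : a ^ N = 1) (ha : a⁻¹ = a) : a = 1 := by
  have ha0 : a ≠ 0 := (IsUnit.of_pow_eq_one haN hN.pos.ne').ne_zero
  have ha2 : a ^ 2 = 1 := by rw [sq, ← mul_inv_cancel₀ ha0, ha]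
  exact orderOf_eq_one_iff.1 <| Nat.eq_one_of_dvd_coprimes
    (Nat.coprime_two_right.2 hN) (orderOf_dvd_of_pow_eq_one haN) (orderOf_dvd_of_pow_eq_one ha2)

/-- The translates `χ (· + j)`, for `0 ≤ j < s`, of a function on the integers, together with their
inverses. -/
def signedTranslate [Inv K] (s : ℕ) (χ : ℤ → K) : Fin s ⊕ Fin s → ℤ → K :=
  Sum.elim (fun j i => χ (i + j)) (fun j i => (χ (i + j))⁻¹)

lemma signedTranslate_injective [GroupWithZero K] {χ : ℤ → K} {N : ℕ} (hs : s.Prime)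
    (hs2 : Odd s) (hper : Function.Periodic χ s) (hne : ¬ Function.Periodic χ 1) (hN : Odd N)
    (hχ : ∀ i, χ i ^ N = 1) : Function.Injective (signedTranslate s χ) := by
  have key {f : ℤ → K} {j k : Fin s} (h : ∀ i, χ (i + j) = f (i + k)) (i : ℤ) :
      χ (i + (j - k)) = f i := by
    rw [← sub_add_cancel i (k : ℤ), ← h]
    ring_nf
  have hpos {j k : Fin s} (h : ∀ i : ℤ, χ (i + j) = χ (i + k)) : j = k :=
    eq_of_intCast_dvd_sub (dvd_of_periodic hs hper hne (key h))
  have hneg {j k : Fin s} : ¬ ∀ i : ℤ, χ (i + j) = (χ (i + k))⁻¹ := fun h => by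
    replace h := key (f := fun i => (χ i)⁻¹) h
    have hdvd : (s : ℤ) ∣ 2 * ((j : ℤ) - k) := dvd_of_periodic hs hper hne fun i => by
      rw [two_mul, ← add_assoc, h, h, inv_inv]
    have hcop : IsCoprime (s : ℤ) 2 := by
      exact_mod_cast Nat.isCoprime_iff_coprime.2 (Nat.coprime_two_right.2 hs2)
    have hjk := eq_of_intCast_dvd_sub (hcop.dvd_of_dvd_mul_left hdvd)
    have hone (i : ℤ) : χ i = 1 :=
      eq_one_of_inv_eq_of_odd_pow_eq_one hN (hχ i) (by rw [← h, hjk, sub_self, add_zero])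
    exact hne fun i => by rw [hone, hone]
  rintro (j | j) (k | k) h
  · rw [hpos (congrFun h)]
  · exact (hneg (congrFun h)).elim
  · exact (hneg fun i => (congrFun h i).symm).elim
  · rw [hpos fun i => inv_injective (congrFun h i)]

lemma signedTranslate_ne_one [GroupWithZero K] {χ : ℤ → K} (hne : ¬ Function.Periodic χ 1)
    (a : Fin s ⊕ Fin s) : signedTranslate s χ a ≠ 1 := by
  have key (j : Fin s) : ¬ ∀ i : ℤ, χ (i + j) = 1 := fun h => hne fun i => by
    rw [← sub_add_cancel i (j : ℤ), h, add_right_comm, h]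
  rcases a with j | j <;> intro h
  · exact key j (congrFun h)
  · exact key j fun i => inv_eq_one.1 (congrFun h i)

end SignedTranslates

section WeightSpace
open Module (finrank)

variable {K V ι : Type*} [Field K] [AddCommGroup V] [Module K V]

/-- The simultaneous eigenspace of a family of automorphisms for a family of eigenvalues. -/
def weightSpace (X : ι → V ≃ₗ[K] V) (χ : ι → K) : Submodule K V :=
  ⨅ i, Module.End.eigenspace (X i : Module.End K V) (χ i)

variable {X : ι → V ≃ₗ[K] V} {χ : ι → K} {N : ℕ}

lemma mem_weightSpace {v : V} : v ∈ weightSpace X χ ↔ ∀ i, X i v = χ i • v := by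
  simp [weightSpace]

lemma eq_of_weightSpace_ne_bot (hχ : weightSpace X χ ≠ ⊥) {i j : ι} (h : X i = X j) :
    χ i = χ j := by
  obtain ⟨v, hv, hv0⟩ := Submodule.exists_mem_ne_zero_of_ne_bot hχ
  rw [mem_weightSpace] at hv
  exact smul_left_injective K hv0 (by simp only [← hv, h])

lemma pow_eq_one_of_weightSpace_ne_bot (hχ : weightSpace X χ ≠ ⊥) {i : ι} (hX : X i ^ N = 1) :
    χ i ^ N = 1 := by
  obtain ⟨v, hv, hv0⟩ := Submodule.exists_mem_ne_zero_of_ne_bot hχ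
  have hpow (k : ℕ) : (X i ^ k) v = χ i ^ k • v := by
    induction k with
    | zero => simp
    | succ k ih =>
      rw [pow_succ', LinearEquiv.mul_apply, ih, map_smul, mem_weightSpace.1 hv, smul_smul, pow_succ]
  exact smul_left_injective K hv0 (by simp only [← hpow, hX, one_smul, LinearEquiv.coe_one, id])

lemma commute_toLinearMap {a b : V ≃ₗ[K] V} (h : Commute a b) :
    Commute (a : Module.End K V) (b : Module.End K V) :=
  h.map (LinearEquiv.automorphismGroup.toLinearMapMonoidHom (R := K) (M := V))

variable [FiniteDimensional K V]

lemma weightSpace_eq_iInf_maxGenEigenspace (hN : (N : K) ≠ 0) (hX : ∀ i, X i ^ N = 1) :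
    weightSpace X χ = ⨅ i, Module.End.maxGenEigenspace (X i : Module.End K V) (χ i) := by
  simp_rw [weightSpace, (isSemisimple_of_pow_eq_one (hX _) hN).isFinitelySemisimple
    |>.maxGenEigenspace_eq_eigenspace]

lemma iSupIndep_weightSpace (hN : (N : K) ≠ 0) (hX : ∀ i, X i ^ N = 1)
    (hcomm : ∀ i j, Commute (X i) (X j)) : iSupIndep (weightSpace X) := by
  simp_rw [funext fun χ => weightSpace_eq_iInf_maxGenEigenspace (χ := χ) hN hX]
  exact Module.End.independent_iInf_maxGenEigenspace_of_forall_mapsTo _ fun i j φ =>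
    Module.End.mapsTo_maxGenEigenspace_of_comm (commute_toLinearMap (hcomm j i)) φ

variable [IsAlgClosed K]

lemma iSup_weightSpace_eq_top (hN : (N : K) ≠ 0) (hX : ∀ i, X i ^ N = 1)
    (hcomm : ∀ i j, Commute (X i) (X j)) : ⨆ χ, weightSpace X χ = ⊤ := by
  simp_rw [weightSpace_eq_iInf_maxGenEigenspace hN hX]
  exact Module.End.iSup_iInf_maxGenEigenspace_eq_top_of_iSup_maxGenEigenspace_eq_top_of_commute _
    (fun i j _ => commute_toLinearMap (hcomm i j))
    fun i => Module.End.iSup_maxGenEigenspace_eq_top _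

lemma exists_weightSpace_ne_bot_ne (hN : (N : K) ≠ 0) (hX : ∀ i, X i ^ N = 1)
    (hcomm : ∀ i j, Commute (X i) (X j)) {i j : ι} (hij : X i ≠ X j) :
    ∃ χ, weightSpace X χ ≠ ⊥ ∧ χ i ≠ χ j := by
  by_contra! hχ
  have hle : ⨆ χ, weightSpace X χ ≤ LinearMap.eqLocus (X i : V →ₗ[K] V) (X j : V →ₗ[K] V) :=
    iSup_le fun χ v hv => by
      obtain rfl | hv0 := eq_or_ne v 0
      · exact zero_mem _
      · change X i v = X j v
        rw [mem_weightSpace.1 hv, mem_weightSpace.1 hv,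
          hχ χ (Submodule.ne_bot_iff _ |>.2 ⟨v, hv, hv0⟩)]
  rw [iSup_weightSpace_eq_top hN hX hcomm] at hle
  exact hij (LinearEquiv.ext fun v => hle Submodule.mem_top)

lemma weightSpace_inv_ne_bot {B : LinearMap.BilinForm K V} (hB : B.Nondegenerate)
    (hN : (N : K) ≠ 0) (hX : ∀ i, X i ^ N = 1) (hcomm : ∀ i j, Commute (X i) (X j))
    (hXB : ∀ i, X i ∈ formIsometryGroup B) (hχ : weightSpace X χ ≠ ⊥) :
    weightSpace X χ⁻¹ ≠ ⊥ := by
  obtain ⟨v, hv, hv0⟩ := Submodule.exists_mem_ne_zero_of_ne_bot hχ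
  rw [mem_weightSpace] at hv
  intro hbot
  have hle : ⨆ μ, weightSpace X μ ≤ LinearMap.ker (B v) := iSup_le fun μ w hw => by
    by_contra hvw
    have hμ : μ = χ⁻¹ := funext fun i => eq_inv_of_mul_eq_one_right <| by
      have := hXB i v w
      rw [hv, mem_weightSpace.1 hw, map_smul, map_smul, LinearMap.smul_apply, smul_smul] at this
      exact (mul_comm _ _).trans (mul_right_cancel₀ hvw (this.trans (one_mul _).symm))
    rw [hμ, hbot, Submodule.mem_bot] at hw
    exact hvw (by rw [hw]; exact zero_mem _)
  rw [iSup_weightSpace_eq_top hN hX hcomm] at hle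
  exact hv0 (hB.1 v fun w => hle Submodule.mem_top)

end WeightSpace

section CyclicConjugates
open Module (finrank)

variable {K V : Type*} [Field K] [AddCommGroup V] [Module K V] {x y : V ≃ₗ[K] V}

lemma weightSpace_conj_shift_ne_bot {χ : ℤ → K}
    (hχ : weightSpace (fun i : ℤ => MulAut.conj (y ^ i) x) χ ≠ ⊥) (j : ℤ) :
    weightSpace (fun i : ℤ => MulAut.conj (y ^ i) x) (fun i => χ (i + j)) ≠ ⊥ := by
  obtain ⟨v, hv, hv0⟩ := Submodule.exists_mem_ne_zero_of_ne_bot hχ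
  refine Submodule.ne_bot_iff _ |>.2
    ⟨(y ^ (-j)) v, mem_weightSpace.2 fun i => ?_, by simpa using hv0⟩
  have hcomm : MulAut.conj (y ^ i) x * y ^ (-j) = y ^ (-j) * MulAut.conj (y ^ (i + j)) x := by
    simp only [MulAut.conj_apply]
    group
  rw [← LinearEquiv.mul_apply, hcomm, LinearEquiv.mul_apply, mem_weightSpace.1 hv, map_smul]

lemma fixedSubmodule_inf_le_weightSpace_one :
    x.fixedSubmodule ⊓ y.fixedSubmodule ≤ weightSpace (fun i : ℤ => MulAut.conj (y ^ i) x) 1 := by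
  rintro v ⟨hx : x v = v, hy : y v = v⟩
  have hy' (i : ℤ) : (y ^ i) v = v :=
    (MulAction.stabilizer (V ≃ₗ[K] V) v).zpow_mem (x := y) hy i
  refine mem_weightSpace.2 fun i => ?_
  rw [MulAut.conj_apply, ← _root_.zpow_neg, LinearEquiv.mul_apply, LinearEquiv.mul_apply, hy', hx,
    hy', Pi.one_apply, one_smul]

/- Some weight of the conjugates of `x` under powers of `y` is not constant; conjugation by `y` and
the invariance of the form provide `2 * s` weights, none of them trivial. -/
lemma finrank_fixedSubmodule_inf_add_two_mul_le_of_isAlgClosed [IsAlgClosed K]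
    [FiniteDimensional K V] {B : LinearMap.BilinForm K V} (hB : B.Nondegenerate)
    (hx : x ∈ formIsometryGroup B) (hy : y ∈ formIsometryGroup B) {N s : ℕ} (hN : (N : K) ≠ 0)
    (hNo : Odd N) (hxN : x ^ N = 1) (hs : s.Prime) (hs2 : Odd s) (hxy : ¬ Commute x y)
    (hys : Commute (y ^ s) x)
    (hcomm : ∀ i j : ℤ, Commute (MulAut.conj (y ^ i) x) (MulAut.conj (y ^ j) x)) :
    finrank K ↥(x.fixedSubmodule ⊓ y.fixedSubmodule) + 2 * s ≤ finrank K V := by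
  set X : ℤ → V ≃ₗ[K] V := fun i => MulAut.conj (y ^ i) x
  have hXN (i : ℤ) : X i ^ N = 1 := by rw [← map_pow, hxN, map_one]
  have hXB (i : ℤ) : X i ∈ formIsometryGroup B :=
    mul_mem (mul_mem (zpow_mem hy i) hx) (inv_mem (zpow_mem hy i))
  have hXs (i : ℤ) : X (i + s) = X i := by
    have : MulAut.conj (y ^ s) x = x := by rw [MulAut.conj_apply, hys.eq, mul_inv_cancel_right]
    simp only [X, _root_.zpow_add, _root_.zpow_natCast, map_mul, MulAut.mul_apply, this]
  have hX01 : X 0 ≠ X 1 := fun h => by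
    have : x = y * x * y⁻¹ := by simpa [X] using h
    exact hxy (eq_mul_inv_iff_mul_eq.1 this)
  obtain ⟨χ, hχ, hχ01⟩ := exists_weightSpace_ne_bot_ne hN hXN hcomm hX01
  have hne : ¬ Function.Periodic χ 1 := fun h => hχ01 (h 0).symm
  have hper : Function.Periodic χ s := fun i => eq_of_weightSpace_ne_bot hχ (hXs i)
  have hroot (i : ℤ) : χ i ^ N = 1 := pow_eq_one_of_weightSpace_ne_bot hχ (hXN i)
  have hweight (a) : weightSpace X (signedTranslate s χ a) ≠ ⊥ := by
    rcases a with j | j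
    · exact weightSpace_conj_shift_ne_bot hχ j
    · exact weightSpace_inv_ne_bot hB hN hXN hcomm hXB (weightSpace_conj_shift_ne_bot hχ j)
  have hind := iSupIndep_weightSpace hN hXN hcomm
  choose v hv hv0 using fun a => Submodule.exists_mem_ne_zero_of_ne_bot (hweight a)
  have hli : LinearIndependent K v := iSupIndep.linearIndependent _
    (hind.comp (signedTranslate_injective hs hs2 hper hne hNo hroot)) hv hv0
  have hspan : Submodule.span K (Set.range v) ≤ ⨆ χ ≠ 1, weightSpace X χ := by
    rw [Submodule.span_le]
    rintro _ ⟨a, rfl⟩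
    exact le_iSup₂ (f := fun ψ (_ : ψ ≠ 1) => weightSpace X ψ) _ (signedTranslate_ne_one hne a)
      (hv a)
  have hdim := Submodule.finrank_add_finrank_le_of_disjoint
    ((hind 1).mono fixedSubmodule_inf_le_weightSpace_one hspan)
  rw [finrank_span_eq_card hli, Fintype.card_sum, Fintype.card_fin] at hdim
  omega

end CyclicConjugates

section BaseChange
open Module (finrank)
open TensorProduct

variable {F V : Type*} [Field F] [AddCommGroup V] [Module F V]

variable (K : Type*) [Field K] [Algebra F K]

lemma baseChange_nondegenerate [FiniteDimensional F V] {B : LinearMap.BilinForm F V}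
    (hB : B.Nondegenerate) : (B.baseChange K).Nondegenerate := by
  let b := Module.finBasis F V
  have hM : LinearMap.BilinForm.toMatrix (b.baseChange K) (B.baseChange K) =
      (LinearMap.BilinForm.toMatrix b B).map (algebraMap F K) := by
    ext i j
    simp [LinearMap.BilinForm.toMatrix_apply, Algebra.algebraMap_eq_smul_one]
  rw [LinearMap.BilinForm.nondegenerate_iff_det_ne_zero (b.baseChange K), hM,
    ← RingHom.mapMatrix_apply, ← RingHom.map_det]
  exact (map_ne_zero _).2 ((LinearMap.BilinForm.nondegenerate_iff_det_ne_zero b).1 hB)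

/-- Extension of scalars, as a homomorphism between groups of linear automorphisms. -/
noncomputable def baseChangeAut : (V ≃ₗ[F] V) →* (K ⊗[F] V) ≃ₗ[K] (K ⊗[F] V) where
  toFun g := g.baseChange F K V V
  map_one' := LinearEquiv.baseChange_one F K V
  map_mul' := LinearEquiv.baseChange_mul F K V

lemma baseChangeAut_tmul (g : V ≃ₗ[F] V) (a : K) (v : V) :
    baseChangeAut K g (a ⊗ₜ v) = a ⊗ₜ g v := rfl

lemma baseChangeAut_injective : Function.Injective (baseChangeAut (F := F) (V := V) K) :=
  fun _ _ h => LinearEquiv.ext fun v =>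
    Module.FaithfullyFlat.tensorProduct_mk_injective (A := F) (B := K) V
      (congrArg (fun f => f (1 ⊗ₜ v)) h :)

lemma baseChangeAut_mem_formIsometryGroup {B : LinearMap.BilinForm F V} {g : V ≃ₗ[F] V}
    (hg : g ∈ formIsometryGroup B) : baseChangeAut K g ∈ formIsometryGroup (B.baseChange K) := by
  intro u v
  induction u using TensorProduct.induction_on with
  | zero => simp
  | add a b ha hb => simp only [map_add, LinearMap.add_apply, ha, hb]
  | tmul a m =>
    induction v using TensorProduct.induction_on with
    | zero => simp
    | add a b ha hb => simp only [map_add, ha, hb]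
    | tmul a' m' =>
      simp only [baseChangeAut_tmul, LinearMap.BilinForm.baseChange_tmul, hg m m']

lemma finrank_le_finrank_fixedSubmodule_inf_baseChangeAut [FiniteDimensional F V]
    (x y : V ≃ₗ[F] V) :
    finrank F ↥(x.fixedSubmodule ⊓ y.fixedSubmodule) ≤
      finrank K ↥((baseChangeAut K x).fixedSubmodule ⊓ (baseChangeAut K y).fixedSubmodule) := by
  set C := x.fixedSubmodule ⊓ y.fixedSubmodule
  have hle : LinearMap.range (C.subtype.baseChange K) ≤
      (baseChangeAut K x).fixedSubmodule ⊓ (baseChangeAut K y).fixedSubmodule := by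
    rintro _ ⟨t, rfl⟩
    induction t using TensorProduct.induction_on with
    | zero => simp
    | add a b ha hb => rw [map_add]; exact add_mem ha hb
    | tmul a m => exact ⟨congrArg (a ⊗ₜ ·) m.2.1, congrArg (a ⊗ₜ ·) m.2.2⟩
  have hinj : Function.Injective (C.subtype.baseChange K) :=
    Module.Flat.lTensor_preserves_injective_linearMap C.subtype C.injective_subtype
  rw [← Module.finrank_baseChange (R := K), ← LinearMap.finrank_range_of_inj hinj]
  exact Submodule.finrank_mono hle

variable [FiniteDimensional F V]

lemma finrank_fixedSubmodule_inf_add_two_mul_le {B : LinearMap.BilinForm F V}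
    (hB : B.Nondegenerate) {x y : V ≃ₗ[F] V} (hx : x ∈ formIsometryGroup B)
    (hy : y ∈ formIsometryGroup B) {N s : ℕ} (hN : (N : F) ≠ 0) (hNo : Odd N) (hxN : x ^ N = 1)
    (hs : s.Prime) (hs2 : Odd s) (hxy : ¬ Commute x y) (hys : Commute (y ^ s) x)
    (hcomm : ∀ i j : ℤ, Commute (MulAut.conj (y ^ i) x) (MulAut.conj (y ^ j) x)) :
    finrank F ↥(x.fixedSubmodule ⊓ y.fixedSubmodule) + 2 * s ≤ finrank F V := by
  let β := baseChangeAut (F := F) (V := V) (AlgebraicClosure F)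
  rw [← Module.finrank_baseChange (R := AlgebraicClosure F) (S := F) (M' := V)]
  refine le_trans (by gcongr; exact finrank_le_finrank_fixedSubmodule_inf_baseChangeAut _ x y)
    (finrank_fixedSubmodule_inf_add_two_mul_le_of_isAlgClosed
      (baseChange_nondegenerate _ hB) (baseChangeAut_mem_formIsometryGroup _ hx)
      (baseChangeAut_mem_formIsometryGroup _ hy) (N := N) ?_ hNo (x := β x) (y := β y) ?_ hs hs2 ?_
      ?_ fun i j => ?_)
  · rw [← map_natCast (algebraMap F (AlgebraicClosure F))]
    exact (map_ne_zero _).2 hN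
  · rw [← map_pow, hxN, map_one]
  · exact fun h => hxy (baseChangeAut_injective (AlgebraicClosure F) (by simpa [β] using h.eq))
  · simpa using hys.map β
  · have := (hcomm i j).map β
    simp only [MulAut.conj_apply] at this ⊢
    simpa only [map_mul, map_inv, map_zpow] using this

lemma isMulCommutative_of_finrank_lt_finrank_add_two_mul {B : LinearMap.BilinForm F V}
    (hB : B.Nondegenerate) {C : Submodule F V} (M : Subgroup (V ≃ₗ[F] V))
    (hM : M ≤ formIsometryGroup B) (hodd : Odd (Nat.card M)) (hchar : (Nat.card M : F) ≠ 0)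
    (hfix : ∀ g ∈ M, C ≤ g.fixedSubmodule)
    (hsmall : ∀ s : ℕ, s.Prime → s ∣ Nat.card M → finrank F V < finrank F C + 2 * s) :
    IsMulCommutative M := by
  induction hn : Nat.card M using Nat.strong_induction_on generalizing M with | _ n ih
  subst hn
  have : Finite M := Nat.finite_of_card_ne_zero hodd.pos.ne'
  by_contra hM'
  have hcenter : Subgroup.center M ≠ ⊤ := fun h => hM' <| isMulCommutative_iff.2 fun a b =>
    Subgroup.mem_center_iff.1 (h ▸ Subgroup.mem_top b) a
  have hproper (K : Subgroup M) (hK : K ≠ ⊤) : IsMulCommutative K := by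
    have hle : K.map M.subtype ≤ M := Subgroup.map_subtype_le K
    have hcard : Nat.card (K.map M.subtype) = Nat.card K :=
      Subgroup.card_map_of_injective M.subtype_injective
    have hdvd : Nat.card (K.map M.subtype) ∣ Nat.card M := Subgroup.card_dvd_of_le hle
    have := ih _ (hcard ▸ (Subgroup.card_le_card_group K).lt_of_ne
      fun h => hK (Subgroup.eq_top_of_card_eq K h)) (K.map M.subtype) (hle.trans hM)
      (hodd.of_dvd_nat hdvd) (fun h => hchar ?_) (fun g hg => hfix g (hle hg))
      (fun s hs hsd => hsmall s hs (hsd.trans hdvd)) rfl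
    · rw [← Subgroup.comap_map_eq_self_of_injective M.subtype_injective K]
      exact Subgroup.comap_injective_isMulCommutative _ M.subtype_injective
    · obtain ⟨t, ht⟩ := hdvd
      rw [ht, Nat.cast_mul, h, zero_mul]
  obtain ⟨x, y, s, hs, hsd, hxy, hys, hconj⟩ :=
    exists_conj_commute_pow_commute_of_minimal_nonabelian hcenter hproper
  refine (hsmall s hs hsd).not_ge (le_trans ?_ (finrank_fixedSubmodule_inf_add_two_mul_le hB
    (hM x.2) (hM y.2) hchar hodd ?_ hs (hodd.of_dvd_nat hsd) (fun h => hxy (Subtype.ext h))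
    (by exact_mod_cast hys.map M.subtype) fun i j => ?_))
  · refine Nat.add_le_add_right (Submodule.finrank_mono ?_) _
    exact le_inf (hfix x x.2) (hfix y y.2)
  · exact_mod_cast congrArg Subtype.val (pow_card_eq_one' (x := x))
  · simp only [MulAut.conj_apply]
    exact_mod_cast (hconj (y ^ i) (y ^ j)).map M.subtype

end BaseChange

/-! ### Abelian groups of isometries acting freely -/

section FiniteField
open Module (finrank)
open FiniteField (frobeniusAlgEquivOfAlgebraic)

lemma two_mul_orderOf_le_of_pow_eq_one {M : Type*} [Monoid M] {a : M} {m : ℕ} (ha : a ^ m = 1)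
    (hm : Even m) (hm0 : m ≠ 0) (hodd : Odd (orderOf a)) : 2 * orderOf a ≤ m :=
  Nat.le_of_dvd (by omega) <| (Nat.coprime_two_left.2 hodd).mul_dvd_of_dvd_of_dvd
    hm.two_dvd (orderOf_dvd_of_pow_eq_one ha)

variable {F A : Type*} [Field F] [Fintype F] [Field A] [Finite A] [Algebra F A]

/- A field automorphism inverting the generator `a` of the extension is an involution, hence is
`x ↦ x ^ q ^ i` where `i` is either zero or half of the degree. -/
lemma exists_pow_card_pow_add_one_eq_one {a : A} (ha0 : a ≠ 0) (ha : Algebra.adjoin F {a} = ⊤)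
    (hmin : minpoly F a⁻¹ = minpoly F a) :
    ∃ i ≤ finrank F A / 2, a ^ (Fintype.card F ^ i + 1) = 1 := by
  obtain ⟨σ, hσ⟩ := isConjRoot_iff_exists_algEquiv.1 (show IsConjRoot F a⁻¹ a from hmin)
  obtain ⟨⟨i, hi⟩, rfl⟩ := (FiniteField.bijective_frobeniusAlgEquivOfAlgebraic_pow F A).2 σ
  have hinv : (frobeniusAlgEquivOfAlgebraic F A ^ (i * 2)) = 1 := by
    refine AlgEquiv.coe_toAlgHom_injective (AlgHom.ext_of_adjoin_eq_top ha ?_)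
    intro z hz
    rw [Set.mem_singleton_iff.1 hz]
    change (frobeniusAlgEquivOfAlgebraic F A ^ (i * 2)) a = a
    rw [mul_two, pow_add, AlgEquiv.mul_apply, hσ, map_inv₀, hσ, inv_inv]
  have hdvd : finrank F A ∣ i * 2 :=
    FiniteField.orderOf_frobeniusAlgEquivOfAlgebraic F A ▸ orderOf_dvd_of_pow_eq_one hinv
  refine ⟨i, ?_, ?_⟩
  · obtain ⟨u, hu⟩ := hdvd
    have : u < 2 := by
      by_contra! hu2
      have := Nat.mul_le_mul_left (finrank F A) hu2
      omega
    interval_cases u <;> omega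
  · rw [AlgEquiv.coe_pow, FiniteField.coe_frobeniusAlgEquivOfAlgebraic_iterate] at hσ
    change a ^ Fintype.card F ^ i = a⁻¹ at hσ
    rw [pow_succ, hσ, inv_mul_cancel₀ ha0]

lemma two_mul_natCard_le_of_injective {G : Type*} [Group G] [Finite G] (hF : Odd (Fintype.card F))
    {f : G →* A} (hf : Function.Injective f) (hodd : Odd (Nat.card G))
    (hgen : Algebra.adjoin F (Set.range f) = ⊤)
    (hmin : ∀ g, minpoly F (f g⁻¹) = minpoly F (f g)) :
    2 * Nat.card G ≤ Fintype.card F ^ (finrank F A / 2) + 1 := by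
  have : IsCyclic G := isCyclic_of_injective_ringHom f hf
  obtain ⟨g, hg⟩ := IsCyclic.exists_generator (α := G)
  have hadj : Algebra.adjoin F {f g} = ⊤ := by
    rw [eq_top_iff, ← hgen, Algebra.adjoin_le_iff]
    rintro _ ⟨h, rfl⟩
    obtain ⟨k, rfl⟩ := (mem_powers_iff_mem_zpowers).2 (hg h)
    rw [map_pow]
    exact pow_mem (Algebra.self_mem_adjoin_singleton F (f g)) k
  have hf_inv : f g⁻¹ = (f g)⁻¹ :=
    eq_inv_of_mul_eq_one_left (by rw [← map_mul, inv_mul_cancel, map_one])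
  have hf0 : f g ≠ 0 := fun h => by simpa [h] using map_mul f g g⁻¹
  obtain ⟨i, hi, hpow⟩ := exists_pow_card_pow_add_one_eq_one hf0 hadj (hf_inv ▸ hmin g)
  have horder : orderOf (f g) = Nat.card G := by
    rw [orderOf_injective f hf, orderOf_eq_card_of_forall_mem_zpowers hg]
  rw [← horder] at hodd ⊢
  refine (two_mul_orderOf_le_of_pow_eq_one hpow hF.pow.add_one (by omega) hodd).trans ?_
  gcongr
  exact Fintype.card_pos

end FiniteField

section FreeAction
open Module (finrank)

lemma natCard_dvd_natCard_sub_one_of_free {G E : Type*} [Group G] [AddGroup E] [Finite E]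
    [DistribMulAction G E] (hfree : ∀ g : G, g ≠ 1 → ∀ v : E, g • v = v → v = 0) :
    Nat.card G ∣ Nat.card E - 1 := by
  let S : SubMulAction G E := ⟨{0}ᶜ, fun g v hv => (smul_ne_zero_iff_ne g).2 hv⟩
  have hstab (v : S) : MulAction.stabilizer G v = ⊥ := by
    refine (Subgroup.eq_bot_iff_forall _).2 fun g hg => ?_
    by_contra hg1
    exact v.2 (hfree g hg1 v (congrArg Subtype.val hg))
  have hcard : Nat.card S = Nat.card E - 1 := by
    change ({0}ᶜ : Set E).ncard = _
    rw [Set.ncard_compl, Set.ncard_singleton]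
  rw [← hcard, Nat.card_congr (MulAction.selfEquivOrbitsQuotientProd hstab), Nat.card_prod]
  exact dvd_mul_left _ _

variable {F E : Type*} [Field F] [Fintype F] [AddCommGroup E] [Module F E] [FiniteDimensional F E]

lemma two_mul_natCard_le_card_pow_finrank_of_free (hF : Odd (Fintype.card F))
    {G : Subgroup (E ≃ₗ[F] E)} (hodd : Odd (Nat.card G))
    (hfree : ∀ g ∈ G, g ≠ 1 → ∀ v, g v = v → v = 0) {W : Submodule F E} (hW : W ≠ ⊥)
    (hGW : G ≤ MulAction.stabilizer (E ≃ₗ[F] E) W) :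
    2 * Nat.card G ≤ Fintype.card F ^ finrank F W + 1 := by
  let := DistribMulAction.compHom W ((restrictStabilizer W).comp (Subgroup.inclusion hGW))
  have : Finite W := Module.finite_of_finite F
  have hdvd := natCard_dvd_natCard_sub_one_of_free (G := G) (E := W) fun g hg w hgw =>
    Subtype.ext (hfree g g.2 (fun h => hg (Subtype.ext h)) w (congrArg Subtype.val hgw))
  have hcard : Nat.card W = Fintype.card F ^ finrank F W := by
    rw [Module.natCard_eq_pow_finrank (K := F), Nat.card_eq_fintype_card]
  have hone : 1 < Fintype.card F ^ finrank F W :=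
    Nat.one_lt_pow (mt Submodule.finrank_eq_zero.1 hW) Fintype.one_lt_card
  rw [hcard] at hdvd
  have := Nat.le_of_dvd (by omega) <| (Nat.coprime_two_left.2 hodd).mul_dvd_of_dvd_of_dvd
    (Nat.Odd.sub_odd (hF.pow (n := finrank F W)) odd_one).two_dvd hdvd
  omega

end FreeAction

section EnvelopingAlgebra
open Module (finrank)
open LinearEquiv.automorphismGroup (toLinearMapMonoidHom)

variable {F E : Type*} [Field F] [AddCommGroup E] [Module F E]

lemma isAdjointPair_aeval {B : LinearMap.BilinForm F E} {S T : Module.End F E}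
    (h : LinearMap.IsAdjointPair B B S T) (p : Polynomial F) :
    LinearMap.IsAdjointPair B B (Polynomial.aeval S p) (Polynomial.aeval T p) := by
  induction p using Polynomial.induction_on with
  | C a =>
    intro u v
    simp only [Polynomial.aeval_C, Module.algebraMap_end_apply, map_smul, LinearMap.smul_apply]
  | add p q hp hq =>
    rw [map_add, map_add]
    exact hp.add hq
  | monomial n a ih =>
    have hS : Polynomial.aeval S (.C a * .X ^ (n + 1)) =
        Polynomial.aeval S (.C a * .X ^ n) * S := by
      rw [pow_succ, ← mul_assoc, map_mul _ _ Polynomial.X, Polynomial.aeval_X]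
    have hT : Polynomial.aeval T (.C a * .X ^ (n + 1)) =
        T * Polynomial.aeval T (.C a * .X ^ n) := by
      rw [pow_succ, ← mul_assoc, mul_comm, map_mul _ Polynomial.X, Polynomial.aeval_X]
    rw [hS, hT]
    exact ih.mul h

lemma minpoly_eq_of_isAdjointPair [FiniteDimensional F E] {B : LinearMap.BilinForm F E}
    (hB : B.Nondegenerate) {S T : Module.End F E} (h : LinearMap.IsAdjointPair B B S T) :
    minpoly F S = minpoly F T := by
  have hS : Polynomial.aeval S (minpoly F T) = 0 := by
    ext u
    refine hB.1 _ fun v => ?_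
    rw [isAdjointPair_aeval h, minpoly.aeval, LinearMap.zero_apply, map_zero]
  have hT : Polynomial.aeval T (minpoly F S) = 0 := by
    ext v
    refine hB.2 _ fun u => ?_
    rw [← isAdjointPair_aeval h, minpoly.aeval, LinearMap.zero_apply, map_zero,
      LinearMap.zero_apply]
  exact Polynomial.eq_of_monic_of_associated (minpoly.monic (Algebra.IsIntegral.isIntegral S))
    (minpoly.monic (Algebra.IsIntegral.isIntegral T))
    (associated_of_dvd_dvd (minpoly.dvd F S hS) (minpoly.dvd F T hT))

/-- The algebra of endomorphisms generated by a group of linear automorphisms. -/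
def envelopingAlgebra (G : Subgroup (E ≃ₗ[F] E)) : Subalgebra F (Module.End F E) :=
  Algebra.adjoin F (toLinearMapMonoidHom '' (G : Set (E ≃ₗ[F] E)))

/-- The inclusion of a group of linear automorphisms into the algebra it generates. -/
def toEnvelopingAlgebra (G : Subgroup (E ≃ₗ[F] E)) : G →* envelopingAlgebra G where
  toFun g := ⟨toLinearMapMonoidHom g, Algebra.subset_adjoin ⟨g, g.2, rfl⟩⟩
  map_one' := rfl
  map_mul' _ _ := rfl

variable (G : Subgroup (E ≃ₗ[F] E))

lemma toEnvelopingAlgebra_injective : Function.Injective (toEnvelopingAlgebra G) := fun _ _ hgh =>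
  Subtype.ext (LinearEquiv.toLinearMap_injective (congrArg Subtype.val hgh))

lemma adjoin_range_toEnvelopingAlgebra :
    Algebra.adjoin F (Set.range (toEnvelopingAlgebra G)) = ⊤ := by
  have hrange : Set.range (toEnvelopingAlgebra G) =
      Subtype.val ⁻¹' (toLinearMapMonoidHom '' (G : Set (E ≃ₗ[F] E))) := by
    ext z
    refine ⟨?_, fun ⟨g, hg, hgz⟩ => ⟨⟨g, hg⟩, Subtype.ext hgz⟩⟩
    rintro ⟨g, rfl⟩
    exact ⟨g, g.2, rfl⟩
  rw [hrange]
  exact Algebra.adjoin_adjoin_coe_preimage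

variable {G}

lemma isMulCommutative_envelopingAlgebra [IsMulCommutative G] :
    IsMulCommutative (envelopingAlgebra G) := by
  refine Algebra.isMulCommutative_adjoin F ?_
  rintro _ ⟨a, ha, rfl⟩ _ ⟨b, hb, rfl⟩
  rw [← map_mul, ← map_mul, setLike_mul_comm ha hb]

variable [FiniteDimensional F E]

lemma ker_eq_bot_of_mem_envelopingAlgebra [IsMulCommutative G]
    (hirr : ∀ W : Submodule F E, G ≤ MulAction.stabilizer (E ≃ₗ[F] E) W → W = ⊥ ∨ W = ⊤)
    {a : Module.End F E} (ha : a ∈ envelopingAlgebra G) (ha0 : a ≠ 0) : LinearMap.ker a = ⊥ := by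
  refine (hirr (LinearMap.ker a) fun g hg =>
    mem_stabilizer_submodule_of_forall_mem ?_).resolve_right (mt LinearMap.ker_eq_top.1 ha0)
  have := isMulCommutative_envelopingAlgebra (G := G)
  have hcomm : a * (g : Module.End F E) = g * a :=
    setLike_mul_comm ha (toEnvelopingAlgebra G ⟨g, hg⟩).2
  intro w hw
  have := LinearMap.congr_fun hcomm w
  rw [LinearMap.mem_ker] at hw ⊢
  simpa [hw] using this

lemma finrank_envelopingAlgebra_le [Nontrivial E] [IsMulCommutative G]
    (hirr : ∀ W : Submodule F E, G ≤ MulAction.stabilizer (E ≃ₗ[F] E) W → W = ⊥ ∨ W = ⊤) :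
    finrank F (envelopingAlgebra G) ≤ finrank F E := by
  obtain ⟨v, hv⟩ := exists_ne (0 : E)
  refine LinearMap.finrank_le_finrank_of_injective
    (f := (LinearMap.applyₗ v).comp (envelopingAlgebra G).val.toLinearMap) ?_
  rw [← LinearMap.ker_eq_bot, LinearMap.ker_eq_bot']
  intro a ha
  by_contra ha0
  have hker := ker_eq_bot_of_mem_envelopingAlgebra hirr a.2 fun h => ha0 (Subtype.ext h)
  exact hv (LinearMap.ker_eq_bot'.1 hker v ha)

variable [Fintype F]

open scoped IsMulCommutative in
lemma two_mul_natCard_le_of_irreducible [Nontrivial E] [IsMulCommutative G]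
    (hF : Odd (Fintype.card F)) {B : LinearMap.BilinForm F E} (hB : B.Nondegenerate)
    (hG : G ≤ formIsometryGroup B) (hodd : Odd (Nat.card G))
    (hirr : ∀ W : Submodule F E, G ≤ MulAction.stabilizer (E ≃ₗ[F] E) W → W = ⊥ ∨ W = ⊤) :
    2 * Nat.card G ≤ Fintype.card F ^ (finrank F E / 2) + 1 := by
  have : Finite (envelopingAlgebra G) := Module.finite_of_finite F
  have : Finite G := Nat.finite_of_card_ne_zero hodd.pos.ne'
  have : IsMulCommutative (envelopingAlgebra G) := isMulCommutative_envelopingAlgebra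
  have : NoZeroDivisors (envelopingAlgebra G) :=
    ⟨fun {a _} hab => or_iff_not_imp_left.2 fun ha => by
    have hker := ker_eq_bot_of_mem_envelopingAlgebra hirr a.2 fun h => ha (Subtype.ext h)
    exact Subtype.ext <| LinearMap.ext fun v =>
      LinearMap.ker_eq_bot'.1 hker _ (LinearMap.congr_fun (congrArg Subtype.val hab) v)⟩
  have : IsDomain (envelopingAlgebra G) := NoZeroDivisors.to_isDomain _
  let : Field (envelopingAlgebra G) := (Finite.isField_of_domain _).toField
  have hmin (g : G) :
      minpoly F (toEnvelopingAlgebra G g⁻¹) = minpoly F (toEnvelopingAlgebra G g) := by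
    rw [← minpoly.algHom_eq (envelopingAlgebra G).val Subtype.val_injective,
      ← minpoly.algHom_eq (envelopingAlgebra G).val Subtype.val_injective]
    refine minpoly_eq_of_isAdjointPair hB fun u v => ?_
    refine (hG g.2 _ v).symm.trans (congrArg (fun w => B w (g.1 v)) ?_)
    exact g.1.apply_symm_apply u
  refine (two_mul_natCard_le_of_injective hF (toEnvelopingAlgebra_injective G) hodd
    (adjoin_range_toEnvelopingAlgebra G) hmin).trans ?_
  gcongr
  · exact Fintype.card_pos
  · exact finrank_envelopingAlgebra_le hirr

/- An invariant subspace of at most half the dimension already gives the bound, and otherwise the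
group acts irreducibly, since a proper invariant subspace or its orthogonal would be that small. -/
lemma two_mul_natCard_le_card_pow_half_finrank [Nontrivial E] [IsMulCommutative G]
    (hF : Odd (Fintype.card F)) {B : LinearMap.BilinForm F E} (hB : B.Nondegenerate)
    (hG : G ≤ formIsometryGroup B) (hodd : Odd (Nat.card G))
    (hfree : ∀ g ∈ G, g ≠ 1 → ∀ v, g v = v → v = 0) :
    2 * Nat.card G ≤ Fintype.card F ^ (finrank F E / 2) + 1 := by
  by_contra hbound
  have hlarge (W : Submodule F E) (hW : W ≠ ⊥) (hGW : G ≤ MulAction.stabilizer (E ≃ₗ[F] E) W) :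
      finrank F E < 2 * finrank F W := by
    by_contra! hle
    refine hbound ((two_mul_natCard_le_card_pow_finrank_of_free hF hodd hfree hW hGW).trans ?_)
    gcongr
    · exact Fintype.card_pos
    · omega
  refine hbound (two_mul_natCard_le_of_irreducible hF hB hG hodd fun W hGW => ?_)
  by_contra! hW
  have hGO : G ≤ MulAction.stabilizer (E ≃ₗ[F] E) (B.orthogonal W) := fun g hg =>
    mem_stabilizer_orthogonal (hG hg) (hGW hg)
  have hdim := LinearMap.BilinForm.finrank_orthogonal hB W
  have hWE := Submodule.finrank_lt hW.2
  have hOW : B.orthogonal W ≠ ⊥ := fun h => by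
    rw [h, finrank_bot] at hdim
    omega
  have h1 := hlarge W hW.1 hGW
  have h2 := hlarge _ hOW hGO
  omega

end EnvelopingAlgebra

/-! ### Hall subgroups of isometry groups -/

section RestrictSubgroup
open Module (finrank)
open MulAction (stabilizer)

/-- All prime divisors of the order of `G` lie in `π`. -/
def IsPiGroup (π : Set ℕ) (G : Type*) [Group G] : Prop :=
  ∀ r : ℕ, r.Prime → r ∣ Nat.card G → r ∈ π

lemma IsPiGroup.of_natCard_dvd {π : Set ℕ} {G G' : Type*} [Group G] [Group G']
    (h : IsPiGroup π G) (hdvd : Nat.card G' ∣ Nat.card G) : IsPiGroup π G' :=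
  fun r hr hrd => h r hr (hrd.trans hdvd)

lemma IsPiGroup.of_le {π : Set ℕ} {G : Type*} [Group G] {H K : Subgroup G} (h : IsPiGroup π K)
    (hle : H ≤ K) : IsPiGroup π H :=
  h.of_natCard_dvd (Subgroup.card_dvd_of_le hle)

/-- `π` consists of odd primes other than the characteristic of `F`. -/
structure IsOddCrossCharacteristic (F : Type*) [Field F] (π : Set ℕ) : Prop where
  prime : ∀ r ∈ π, r.Prime
  two_notMem : 2 ∉ π
  cast_ne_zero : ∀ r ∈ π, (r : F) ≠ 0

namespace IsOddCrossCharacteristic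

variable {F : Type*} [Field F] {π : Set ℕ} {G : Type*} [Group G]

lemma odd_natCard (hπ : IsOddCrossCharacteristic F π) (hG : IsPiGroup π G) : Odd (Nat.card G) := by
  rw [← Nat.not_even_iff_odd]
  exact fun h => hπ.two_notMem (hG 2 Nat.prime_two h.two_dvd)

lemma natCard_cast_ne_zero (hπ : IsOddCrossCharacteristic F π) (hG : IsPiGroup π G) :
    (Nat.card G : F) ≠ 0 := by
  intro h0
  have hdvd := (ringChar.spec F _).1 h0
  rcases CharP.char_is_prime_or_zero F (ringChar F) with hp | hp
  · exact hπ.cast_ne_zero _ (hG _ hp hdvd) ringChar.Nat.cast_ringChar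
  · rw [hp, zero_dvd_iff] at hdvd
    exact (hπ.odd_natCard hG).pos.ne' hdvd

end IsOddCrossCharacteristic

variable {F V : Type*} [Field F] [AddCommGroup V] [Module F V]

/-- The group of automorphisms of `W` induced by the elements of `K` that stabilize `W`. -/
def restrictSubgroup (W : Submodule F V) (K : Subgroup (V ≃ₗ[F] V)) : Subgroup (W ≃ₗ[F] W) :=
  (K.subgroupOf (stabilizer (V ≃ₗ[F] V) W)).map (restrictStabilizer W)

lemma mem_restrictSubgroup {W : Submodule F V} {K : Subgroup (V ≃ₗ[F] V)} {a : W ≃ₗ[F] W} :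
    a ∈ restrictSubgroup W K ↔
      ∃ g ∈ K, ∃ hg : g ∈ stabilizer (V ≃ₗ[F] V) W, restrictStabilizer W ⟨g, hg⟩ = a := by
  constructor
  · rintro ⟨⟨g, hg⟩, hgK, rfl⟩
    exact ⟨g, hgK, hg, rfl⟩
  · rintro ⟨g, hgK, hg, rfl⟩
    exact ⟨⟨g, hg⟩, hgK, rfl⟩

lemma restrictSubgroup_mono (W : Submodule F V) {K L : Subgroup (V ≃ₗ[F] V)} (hKL : K ≤ L) :
    restrictSubgroup W K ≤ restrictSubgroup W L :=
  Subgroup.map_mono (Subgroup.comap_mono hKL)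

lemma natCard_restrictSubgroup_dvd (W : Submodule F V) (K : Subgroup (V ≃ₗ[F] V)) :
    Nat.card (restrictSubgroup W K) ∣ Nat.card K := by
  refine (Subgroup.card_map_dvd _ _).trans ?_
  rw [← Subgroup.card_map_of_injective (stabilizer (V ≃ₗ[F] V) W).subtype_injective,
    Subgroup.subgroupOf_map_subtype]
  exact Subgroup.card_dvd_of_le inf_le_left

lemma restrictSubgroup_le_formIsometryGroup {B : LinearMap.BilinForm F V} (W : Submodule F V)
    {K : Subgroup (V ≃ₗ[F] V)} (hK : K ≤ formIsometryGroup B) :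
    restrictSubgroup W K ≤ formIsometryGroup (B.restrict W) := by
  intro a ha
  obtain ⟨g, hgK, hg, rfl⟩ := mem_restrictSubgroup.1 ha
  exact restrictStabilizer_mem_isometryGroup ⟨g, hg⟩ (hK hgK)

lemma natCard_le_prod_natCard_restrictSubgroup [Finite V] {N : Subgroup (V ≃ₗ[F] V)}
    {S : Finset (Submodule F V)} {W : Submodule F V}
    (hNS : ∀ X ∈ S, N ≤ stabilizer (V ≃ₗ[F] V) X) (hNW : N ≤ stabilizer (V ≃ₗ[F] V) W)
    (hsup : S.sup id ⊔ W = ⊤) :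
    Nat.card N ≤
      (∏ X ∈ S, Nat.card (restrictSubgroup X N)) * Nat.card (restrictSubgroup W N) := by
  have (X : Submodule F V) : Finite (X ≃ₗ[F] X) := DFunLike.finite _
  let f (g : N) : (∀ X : S, restrictSubgroup X.1 N) × restrictSubgroup W N :=
    (fun X => ⟨_, mem_restrictSubgroup.2 ⟨g, g.2, hNS X X.2 g.2, rfl⟩⟩,
      ⟨_, mem_restrictSubgroup.2 ⟨g, g.2, hNW g.2, rfl⟩⟩)
  have hf : Function.Injective f := by
    intro g h hgh
    have hagree {X : Submodule F V} {a b : X ≃ₗ[F] X} (hab : a = b) (v : X) : (a v : V) = b v :=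
      by rw [hab]
    have heq : ⊤ ≤ LinearMap.eqLocus (g.1 : V →ₗ[F] V) (h.1 : V →ₗ[F] V) := by
      rw [← hsup]
      refine sup_le (Finset.sup_le fun X hX v hv => ?_) fun v hv => ?_
      · exact hagree (congrArg Subtype.val (congrFun (congrArg Prod.fst hgh) ⟨X, hX⟩)) ⟨v, hv⟩
      · exact hagree (congrArg Subtype.val (congrArg Prod.snd hgh)) ⟨v, hv⟩
    exact Subtype.ext (LinearEquiv.ext fun v => heq (Submodule.mem_top : v ∈ ⊤))
  have hcard := Nat.card_le_card_of_injective f hf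
  rwa [Nat.card_prod, Nat.card_pi, Finset.prod_coe_sort S
    fun X => Nat.card (restrictSubgroup X N)] at hcard

lemma restrictSubgroup_formIsometryGroup [FiniteDimensional F V] {B : LinearMap.BilinForm F V}
    (hs : B.IsSymm) {W : Submodule F V} (hW : IsCompl W (B.orthogonal W)) :
    restrictSubgroup W (formIsometryGroup B) = formIsometryGroup (B.restrict W) := by
  refine le_antisymm (restrictSubgroup_le_formIsometryGroup W le_rfl) fun a ha => ?_
  have hstab : extendOfIsCompl hW a ∈ stabilizer (V ≃ₗ[F] V) W :=
    mem_stabilizer_submodule_of_forall_mem fun v hv =>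
      extendOfIsCompl_apply_left hW a ⟨v, hv⟩ ▸ (a ⟨v, hv⟩).2
  refine mem_restrictSubgroup.2 ⟨_, extendOfIsCompl_mem_isometryGroup hs hW ha, hstab, ?_⟩
  ext x
  exact extendOfIsCompl_apply_left hW a x

lemma isHallSubgroupIn_restrictSubgroup [FiniteDimensional F V] {B : LinearMap.BilinForm F V}
    (hs : B.IsSymm) {π : Set ℕ} {H : Subgroup (V ≃ₗ[F] V)}
    (hH : IsHallSubgroupIn π (formIsometryGroup B) H) {W : Submodule F V}
    (hW : IsCompl W (B.orthogonal W)) (hHW : H ≤ stabilizer (V ≃ₗ[F] V) W) :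
    IsHallSubgroupIn π (formIsometryGroup (B.restrict W)) (restrictSubgroup W H) := by
  obtain ⟨hle, hpi, hidx⟩ := hH
  refine ⟨restrictSubgroup_le_formIsometryGroup W hle,
    IsPiGroup.of_natCard_dvd hpi (natCard_restrictSubgroup_dvd W H),
    fun r hr hrd => hidx r hr (hrd.trans ?_)⟩
  set S := stabilizer (V ≃ₗ[F] V) W
  calc (restrictSubgroup W H).relIndex (formIsometryGroup (B.restrict W))
      = ((restrictSubgroup W H).comap (restrictStabilizer W)).relIndex
          ((formIsometryGroup B).subgroupOf S) := by
        rw [← restrictSubgroup_formIsometryGroup hs hW, Subgroup.relIndex_comap]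
        rfl
    _ ∣ (H.subgroupOf S).relIndex ((formIsometryGroup B).subgroupOf S) :=
        Subgroup.relIndex_dvd_of_le_left _ (Subgroup.le_comap_map _ _)
    _ = H.relIndex (formIsometryGroup B ⊓ S) := by
        rw [Subgroup.subgroupOf, Subgroup.relIndex_comap, Subgroup.subgroupOf_map_subtype]
    _ ∣ H.relIndex (formIsometryGroup B) := by
        rw [← Subgroup.relIndex_mul_relIndex _ _ _ (le_inf hle hHW) inf_le_left]
        exact dvd_mul_right _ _

end RestrictSubgroup

section ResidualRank
open Module (finrank)
open MulAction (stabilizer)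

variable {F V : Type*} [Field F] [AddCommGroup V] [Module F V]

/-- Every isometry of `B` whose order lies in `π` moves a space of dimension at least `k`. It is
used for the largest such `k`. -/
def ResidualRankGE (B : LinearMap.BilinForm F V) (π : Set ℕ) (k : ℕ) : Prop :=
  ∀ g ∈ formIsometryGroup B, orderOf g ∈ π → k ≤ finrank F (residualSpace g)

variable {B : LinearMap.BilinForm F V} {π : Set ℕ} {k : ℕ} {H : Subgroup (V ≃ₗ[F] V)}
  {g g' : V ≃ₗ[F] V}

lemma mem_stabilizer_residualSpace_of_commute [FiniteDimensional F V] (h : Commute g g') :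
    g ∈ stabilizer (V ≃ₗ[F] V) (residualSpace g') := by
  rw [MulAction.mem_stabilizer_iff, ← residualSpace_conj, h.eq, mul_inv_cancel_right]

lemma restrictStabilizer_eq_one_iff {X : Submodule F V} {g : stabilizer (V ≃ₗ[F] V) X} :
    restrictStabilizer X g = 1 ↔ X ≤ g.1.fixedSubmodule :=
  ⟨fun h v hv => congrArg (fun e : X ≃ₗ[F] X => (e ⟨v, hv⟩ : V)) h,
    fun h => LinearEquiv.ext fun v => Subtype.ext (h v.2)⟩

lemma residualSpace_ne_bot_of_orderOf_mem (hπ : IsOddCrossCharacteristic F π)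
    (hgπ : orderOf g ∈ π) : residualSpace g ≠ ⊥ := by
  rw [Ne, residualSpace_eq_bot_iff, ← orderOf_eq_one_iff]
  exact (hπ.prime _ hgπ).ne_one

lemma isCompl_residualSpace_orthogonal [FiniteDimensional F V] (hB : B.Nondegenerate)
    (hs : B.IsSymm) (hπ : IsOddCrossCharacteristic F π) (hg : g ∈ formIsometryGroup B)
    (hgπ : orderOf g ∈ π) : IsCompl (residualSpace g) (B.orthogonal (residualSpace g)) := by
  rw [LinearMap.BilinForm.isCompl_orthogonal_iff_disjoint hs.isRefl,
    orthogonal_residualSpace hB hg]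
  exact disjoint_residualSpace_fixedSubmodule (pow_orderOf_eq_one g) (hπ.cast_ne_zero _ hgπ)

lemma ResidualRankGE.restrict [FiniteDimensional F V] (hs : B.IsSymm)
    (hk : ResidualRankGE B π k) {X : Submodule F V} (hX : IsCompl X (B.orthogonal X)) :
    ResidualRankGE (B.restrict X) π k := by
  intro a ha haπ
  rw [← orderOf_injective (extendOfIsCompl hX) (extendOfIsCompl_injective hX)] at haπ
  have h := hk _ (extendOfIsCompl_mem_isometryGroup hs hX ha) haπ
  rwa [residualSpace_extendOfIsCompl, Submodule.finrank_map_subtype_eq] at h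

lemma ResidualRankGE.lt_of_dvd [FiniteDimensional F V] [Finite V] (hB : B.Nondegenerate)
    (hs : B.IsSymm) (h2 : (2 : F) ≠ 0) (hπ : IsOddCrossCharacteristic F π)
    (hk : ResidualRankGE B π k) {s : ℕ} (hsπ : s ∈ π)
    (hsd : s ∣ Nat.card (formIsometryGroup B)) : k < s := by
  have : Finite (V ≃ₗ[F] V) := DFunLike.finite _
  have hsp := hπ.prime s hsπ
  have := Fact.mk hsp
  obtain ⟨g, rfl⟩ := exists_prime_orderOf_dvd_card' s hsd
  rw [← Subgroup.orderOf_coe] at hsp hsπ ⊢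
  obtain ⟨a, ha, hord, hrank⟩ := exists_orderOf_eq_finrank_residualSpace_lt hB hs h2 g.2 hsp
    (hπ.cast_ne_zero _ hsπ)
  exact (hk a ha (hord ▸ hsπ)).trans_lt hrank

/- The elements fixing the common fixed space, whose codimension is at most `2 * k`, form an abelian
group because all primes involved exceed `k`. -/
lemma ResidualRankGE.commute [FiniteDimensional F V] [Finite V] (hB : B.Nondegenerate)
    (hs : B.IsSymm) (h2 : (2 : F) ≠ 0) (hπ : IsOddCrossCharacteristic F π)
    (hk : ResidualRankGE B π k) (hH : H ≤ formIsometryGroup B) (hHπ : IsPiGroup π H)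
    (hg : g ∈ H) (hg' : g' ∈ H) (hgk : finrank F (residualSpace g) = k)
    (hgk' : finrank F (residualSpace g') = k) : Commute g g' := by
  set C := g.fixedSubmodule ⊓ g'.fixedSubmodule with hC
  let M := H ⊓ fixingSubgroup (V ≃ₗ[F] V) (C : Set V)
  have hMH : M ≤ H := inf_le_left
  have hMπ := hHπ.of_le hMH
  have hrank := finrank_residualSpace_add_finrank_fixedSubmodule g
  have hrank' := finrank_residualSpace_add_finrank_fixedSubmodule g'
  have hsup := Submodule.finrank_sup_add_finrank_inf_eq g.fixedSubmodule g'.fixedSubmodule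
  rw [← hC] at hsup
  have hle := Submodule.finrank_le (g.fixedSubmodule ⊔ g'.fixedSubmodule)
  have hM : IsMulCommutative M := by
    refine isMulCommutative_of_finrank_lt_finrank_add_two_mul hB (C := C) M (hMH.trans hH)
      (hπ.odd_natCard hMπ) (hπ.natCard_cast_ne_zero hMπ)
      (fun x hx v hv => (mem_fixingSubgroup_iff _).1 hx.2 v hv) fun s hs' hsd => ?_
    have := hk.lt_of_dvd hB hs h2 hπ (hMπ s hs' hsd)
      (hsd.trans (Subgroup.card_dvd_of_le (hMH.trans hH)))
    omega
  exact setLike_mul_comm (s := M) ⟨hg, (mem_fixingSubgroup_iff _).2 fun v hv => hv.1⟩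
    ⟨hg', (mem_fixingSubgroup_iff _).2 fun v hv => hv.2⟩

lemma ResidualRankGE.residualSpace_eq_top [FiniteDimensional F V]
    (hk : ResidualRankGE B π (finrank F V)) (hg : g ∈ formIsometryGroup B)
    (hgπ : orderOf g ∈ π) : residualSpace g = ⊤ :=
  Submodule.eq_top_of_finrank_eq ((Submodule.finrank_le _).antisymm (hk g hg hgπ))

lemma ResidualRankGE.eq_or_le_orthogonal [FiniteDimensional F V] (hB : B.Nondegenerate)
    (hs : B.IsSymm) (hπ : IsOddCrossCharacteristic F π) (hk : ResidualRankGE B π k)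
    (hg : g ∈ formIsometryGroup B) (hg' : g' ∈ formIsometryGroup B) (hgπ : orderOf g ∈ π)
    (hgπ' : orderOf g' ∈ π) (hcomm : Commute g g') (hgk : finrank F (residualSpace g) = k)
    (hgk' : finrank F (residualSpace g') = k) :
    residualSpace g = residualSpace g' ∨
      residualSpace g' ≤ B.orthogonal (residualSpace g) := by
  let γ : stabilizer (V ≃ₗ[F] V) (residualSpace g') :=
    ⟨g, mem_stabilizer_residualSpace_of_commute hcomm⟩
  rw [orthogonal_residualSpace hB hg]
  refine or_iff_not_imp_right.2 fun hfix => Eq.symm ?_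
  have hγ : restrictStabilizer _ γ ≠ 1 := fun h => hfix (restrictStabilizer_eq_one_iff.1 h)
  have hpow : γ ^ orderOf g = 1 := Subtype.ext (pow_orderOf_eq_one g)
  have := Fact.mk (hπ.prime _ hgπ)
  have hord : orderOf (restrictStabilizer _ γ) = orderOf g :=
    orderOf_eq_prime (by rw [← map_pow, hpow, map_one]) hγ
  have hX := isCompl_residualSpace_orthogonal hB hs hπ hg' hgπ'
  have htop : residualSpace (restrictStabilizer _ γ) = ⊤ :=
    ResidualRankGE.residualSpace_eq_top (hgk' ▸ hk.restrict hs hX)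
      (restrictStabilizer_mem_isometryGroup γ hg) (hord ▸ hgπ)
  refine Submodule.eq_of_le_of_finrank_eq (fun v hv => ?_) (hgk'.trans hgk.symm)
  have hmem : (⟨v, hv⟩ : residualSpace g') ∈ residualSpace (restrictStabilizer _ γ) :=
    htop ▸ Submodule.mem_top
  obtain ⟨w, hw⟩ := mem_residualSpace.1 hmem
  exact mem_residualSpace.2 ⟨w, congrArg Subtype.val hw⟩

lemma ResidualRankGE.eq_zero_of_apply_eq [Finite V] (hπ : IsOddCrossCharacteristic F π)
    [FiniteDimensional F V] (hk : ResidualRankGE B π (finrank F V))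
    (hH : H ≤ formIsometryGroup B) (hHπ : IsPiGroup π H) (hg : g ∈ H) (hg1 : g ≠ 1) {v : V}
    (hv : g v = v) : v = 0 := by
  have : Finite (V ≃ₗ[F] V) := DFunLike.finite _
  obtain ⟨r, hr, hrd⟩ := Nat.exists_prime_and_dvd (mt orderOf_eq_one_iff.1 hg1)
  have hrπ := hHπ r hr (hrd.trans (Subgroup.orderOf_dvd_natCard H hg))
  have hord := orderOf_pow_orderOf_div (orderOf_pos g).ne' hrd
  set m := orderOf g / r
  have hdisj := disjoint_residualSpace_fixedSubmodule (pow_orderOf_eq_one (g ^ m))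
    (hord ▸ hπ.cast_ne_zero r hrπ)
  rw [hk.residualSpace_eq_top (hH (H.pow_mem hg m)) (hord ▸ hrπ), top_disjoint] at hdisj
  have hmem : v ∈ (g ^ m).fixedSubmodule := (stabilizer (V ≃ₗ[F] V) v).pow_mem hv m
  rwa [hdisj, Submodule.mem_bot] at hmem

lemma two_ne_zero_of_odd_card [Fintype F] (hF : Odd (Fintype.card F)) : (2 : F) ≠ 0 :=
  Ring.two_ne_zero fun h =>
    Nat.not_even_iff_odd.2 hF (Nat.even_iff.2 (FiniteField.even_card_iff_char_two.1 h))

lemma ResidualRankGE.two_mul_natCard_le [Fintype F] [FiniteDimensional F V] [Nontrivial V]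
    (hF : Odd (Fintype.card F)) (hB : B.Nondegenerate) (hs : B.IsSymm)
    (hπ : IsOddCrossCharacteristic F π) (hk : ResidualRankGE B π (finrank F V))
    (hH : H ≤ formIsometryGroup B) (hHπ : IsPiGroup π H) :
    2 * Nat.card H ≤ Fintype.card F ^ (finrank F V / 2) + 1 := by
  have : Finite V := Module.finite_of_finite F
  have hodd := hπ.odd_natCard hHπ
  have : IsMulCommutative H := by
    refine isMulCommutative_of_finrank_lt_finrank_add_two_mul hB (C := ⊥) H hH hodd
      (hπ.natCard_cast_ne_zero hHπ) (fun _ _ => bot_le) fun s hsp hsd => ?_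
    have := hk.lt_of_dvd hB hs (two_ne_zero_of_odd_card hF) hπ (hHπ s hsp hsd)
      (hsd.trans (Subgroup.card_dvd_of_le hH))
    omega
  exact two_mul_natCard_le_card_pow_half_finrank hF hB hH hodd
    fun g hg hg1 v hv => hk.eq_zero_of_apply_eq hπ hH hHπ hg hg1 hv

lemma disjoint_sup_orthogonal_of_le_orthogonal {X U : Submodule F V}
    (hX : Disjoint X (B.orthogonal X)) (hU : Disjoint U (B.orthogonal U))
    (hXU : U ≤ B.orthogonal X) : Disjoint (X ⊔ U) (B.orthogonal (X ⊔ U)) := by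
  rw [Submodule.disjoint_def] at hX hU ⊢
  intro v hv hvorth
  obtain ⟨x, hx, u, hu, rfl⟩ := Submodule.mem_sup.1 hv
  have hx0 : x = 0 := hX x hx fun y hy => by
    have h := hvorth y (Submodule.mem_sup_left hy)
    rwa [map_add, hXU hu y hy, add_zero] at h
  have hu0 : u = 0 := hU u hu fun y hy => by
    simpa [hx0] using hvorth y (Submodule.mem_sup_right hy)
  rw [hx0, hu0, add_zero]

lemma disjoint_finset_sup_orthogonal_and_finrank_eq [FiniteDimensional F V]
    {S : Finset (Submodule F V)} (hS : ∀ X ∈ S, Disjoint X (B.orthogonal X))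
    (horth : (S : Set (Submodule F V)).Pairwise fun X Y => Y ≤ B.orthogonal X) :
    Disjoint (S.sup id) (B.orthogonal (S.sup id)) ∧
      finrank F (S.sup id : Submodule F V) = ∑ X ∈ S, finrank F X := by
  classical
  induction S using Finset.induction_on with
  | empty => simp
  | insert X S hXS ih =>
    rw [Finset.forall_mem_insert] at hS
    rw [Finset.coe_insert, Set.pairwise_insert] at horth
    obtain ⟨hdisj, hrank⟩ := ih hS.2 horth.1
    have hXU : S.sup id ≤ B.orthogonal X := Finset.sup_le fun Y hY =>
      (horth.2 Y hY (ne_of_mem_of_not_mem hY hXS).symm).1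
    have hsum := Submodule.finrank_sup_add_finrank_inf_eq X (S.sup id)
    rw [(hS.1.mono_right hXU).eq_bot, finrank_bot, add_zero] at hsum
    rw [Finset.sup_insert, Finset.sum_insert hXS, ← hrank]
    exact ⟨disjoint_sup_orthogonal_of_le_orthogonal hS.1 hdisj hXU, hsum⟩

end ResidualRank

section ResidualBlocks
open Module (finrank)
open MulAction (stabilizer)

variable {F V : Type*} [Field F] [AddCommGroup V] [Module F V]

/-- The `k`-dimensional residual spaces of elements of `H` of order in `π`. For the minimal `k`
these are pairwise orthogonal, and they are permuted by `H`. -/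
def residualBlocks (H : Subgroup (V ≃ₗ[F] V)) (π : Set ℕ) (k : ℕ) : Set (Submodule F V) :=
  {X | finrank F X = k ∧ ∃ g ∈ H, orderOf g ∈ π ∧ residualSpace g = X}

/-- The subgroup of `H` stabilizing each of its residual blocks. -/
def blockKernel (H : Subgroup (V ≃ₗ[F] V)) (π : Set ℕ) (k : ℕ) : Subgroup (V ≃ₗ[F] V) :=
  H ⊓ fixingSubgroup (V ≃ₗ[F] V) (residualBlocks H π k)

variable {B : LinearMap.BilinForm F V} {π : Set ℕ} {k : ℕ} {H : Subgroup (V ≃ₗ[F] V)}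
  {X : Submodule F V}

lemma smul_mem_residualBlocks {h : V ≃ₗ[F] V} (hh : h ∈ H) (hX : X ∈ residualBlocks H π k) :
    h • X ∈ residualBlocks H π k := by
  obtain ⟨hXk, g, hg, hgπ, rfl⟩ := hX
  refine ⟨(LinearEquiv.finrank_map_eq h _).trans hXk, h * g * h⁻¹,
    H.mul_mem (H.mul_mem hh hg) (H.inv_mem hh), ?_, residualSpace_conj g h⟩
  rwa [← MulAut.conj_apply, MulEquiv.orderOf_eq]

lemma le_stabilizer_finset_sup [FiniteDimensional F V] {S : Finset (Submodule F V)}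
    (hS : ∀ h ∈ H, ∀ X ∈ S, h • X ∈ S) : H ≤ stabilizer (V ≃ₗ[F] V) (S.sup id) := by
  intro h hh
  have hle : S.sup id ≤ (S.sup id).comap (h : V →ₗ[F] V) := Finset.sup_le fun X hX =>
    Submodule.map_le_iff_le_comap.1 (Finset.le_sup (f := id) (hS h hh X hX))
  exact mem_stabilizer_submodule_of_forall_mem fun v hv => hle hv

lemma isCompl_orthogonal_of_mem_residualBlocks [FiniteDimensional F V] (hB : B.Nondegenerate)
    (hs : B.IsSymm) (hπ : IsOddCrossCharacteristic F π) (hH : H ≤ formIsometryGroup B)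
    (hX : X ∈ residualBlocks H π k) : IsCompl X (B.orthogonal X) := by
  obtain ⟨-, g, hg, hgπ, rfl⟩ := hX
  exact isCompl_residualSpace_orthogonal hB hs hπ (hH hg) hgπ

lemma ResidualRankGE.pairwise_residualBlocks [FiniteDimensional F V] [Finite V]
    (hB : B.Nondegenerate) (hs : B.IsSymm) (h2 : (2 : F) ≠ 0) (hπ : IsOddCrossCharacteristic F π)
    (hk : ResidualRankGE B π k) (hH : H ≤ formIsometryGroup B) (hHπ : IsPiGroup π H) :
    (residualBlocks H π k).Pairwise fun X Y => Y ≤ B.orthogonal X := by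
  rintro _ ⟨hgk, g, hg, hgπ, rfl⟩ _ ⟨hgk', g', hg', hgπ', rfl⟩ hne
  exact (hk.eq_or_le_orthogonal hB hs hπ (hH hg) (hH hg') hgπ hgπ'
    (hk.commute hB hs h2 hπ hH hHπ hg hg' hgk hgk') hgk hgk').resolve_left hne

lemma residualBlocks_nonempty [Finite V] (hπ : IsOddCrossCharacteristic F π)
    (hH : IsHallSubgroupIn π (formIsometryGroup B) H) {g : V ≃ₗ[F] V}
    (hg : g ∈ formIsometryGroup B) (hgπ : orderOf g ∈ π) :
    (residualBlocks H π (finrank F (residualSpace g))).Nonempty := by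
  have : Finite (V ≃ₗ[F] V) := DFunLike.finite _
  have := Fact.mk (hπ.prime _ hgπ)
  let γ : formIsometryGroup B := ⟨g, hg⟩
  have hγ : IsPGroup (orderOf g) (Subgroup.zpowers γ) :=
    IsPGroup.of_card (n := 1) (by rw [Nat.card_zpowers, pow_one, ← Subgroup.orderOf_coe])
  obtain ⟨y, hy⟩ := exists_forall_mem_conj_mem_of_isPGroup
    (H := H.subgroupOf (formIsometryGroup B)) hγ (hH.2.2 _ hgπ)
  have hmem : (y : V ≃ₗ[F] V)⁻¹ * g * (y : V ≃ₗ[F] V)⁻¹⁻¹ ∈ H := by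
    simpa [γ, Subgroup.mem_subgroupOf] using hy γ (Subgroup.mem_zpowers γ)
  refine ⟨_, finrank_residualSpace_conj g (y : V ≃ₗ[F] V)⁻¹, _, hmem, ?_, rfl⟩
  rwa [← MulAut.conj_apply, MulEquiv.orderOf_eq]

lemma blockKernel_le_stabilizer (hX : X ∈ residualBlocks H π k) :
    blockKernel H π k ≤ stabilizer (V ≃ₗ[F] V) X :=
  fun _ hg => (mem_fixingSubgroup_iff _).1 hg.2 X hX

lemma nontrivial_restrictSubgroup_blockKernel [FiniteDimensional F V] [Finite V]
    (hB : B.Nondegenerate) (hs : B.IsSymm) (h2 : (2 : F) ≠ 0) (hπ : IsOddCrossCharacteristic F π)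
    (hk : ResidualRankGE B π k) (hH : H ≤ formIsometryGroup B) (hHπ : IsPiGroup π H)
    (hX : X ∈ residualBlocks H π k) : Nontrivial (restrictSubgroup X (blockKernel H π k)) := by
  obtain ⟨hgk, g, hg, hgπ, rfl⟩ := id hX
  have hgN : g ∈ blockKernel H π k := by
    refine ⟨hg, (mem_fixingSubgroup_iff _).2 ?_⟩
    rintro _ ⟨hgk', g', hg', -, rfl⟩
    exact mem_stabilizer_residualSpace_of_commute (hk.commute hB hs h2 hπ hH hHπ hg hg' hgk hgk')
  refine (Subgroup.nontrivial_iff_exists_ne_one _).2 ⟨_, mem_restrictSubgroup.2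
    ⟨g, hgN, blockKernel_le_stabilizer hX hgN, rfl⟩, fun h => ?_⟩
  have hdisj := disjoint_residualSpace_fixedSubmodule (pow_orderOf_eq_one g)
    (hπ.cast_ne_zero _ hgπ)
  exact residualSpace_ne_bot_of_orderOf_mem hπ hgπ
    (hdisj.eq_bot_of_le (restrictStabilizer_eq_one_iff.1 h))

lemma three_le_natCard_of_odd {G : Type*} [Group G] [Finite G] [Nontrivial G]
    (hG : Odd (Nat.card G)) : 3 ≤ Nat.card G := by
  have h1 : 1 < Nat.card G := Finite.one_lt_card
  obtain ⟨m, hm⟩ := hG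
  omega

/-- The numerical conditions under which the orders of block groups `T` over the field with `q`
elements, with at most `M` blocks, stay below powers of `Y`; `A` absorbs the permutations of the
blocks. -/
structure IsBlockGrowthBound (q M : ℕ) (A Y : ℝ) : Prop where
  nonneg : 0 ≤ A
  oddPermBound_sq_le : ∀ a ≤ M, oddPermBound a ^ 2 ≤ A ^ a
  one_le : 1 ≤ Y
  mul_sq_le : ∀ j T : ℕ, 1 ≤ j → 3 ≤ T → Odd T → 2 * T ≤ q ^ j + 1 → A * (T : ℝ) ^ 2 ≤ Y ^ j

lemma ResidualRankGE.two_le_and_mul_sq_le [Fintype F] [FiniteDimensional F V]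
    (hF : Odd (Fintype.card F)) (hB : B.Nondegenerate) (hs : B.IsSymm)
    (hπ : IsOddCrossCharacteristic F π) (hk : ResidualRankGE B π k)
    (hH : H ≤ formIsometryGroup B) (hHπ : IsPiGroup π H) (hX : X ∈ residualBlocks H π k)
    {M : ℕ} {A Y : ℝ} (hAY : IsBlockGrowthBound (Fintype.card F) M A Y) :
    2 ≤ k ∧ A * (Nat.card (restrictSubgroup X (blockKernel H π k)) : ℝ) ^ 2 ≤ Y ^ (k / 2) := by
  have : Finite V := Module.finite_of_finite F
  have : Finite (X ≃ₗ[F] X) := DFunLike.finite _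
  set N := blockKernel H π k
  have hNH : N ≤ H := inf_le_left
  have hXcompl := isCompl_orthogonal_of_mem_residualBlocks hB hs hπ hH hX
  have hXnondeg := B.nondegenerate_restrict_of_disjoint_orthogonal hs.isRefl hXcompl.disjoint
  have hNπ : IsPiGroup π (restrictSubgroup X N) :=
    (hHπ.of_le hNH).of_natCard_dvd (natCard_restrictSubgroup_dvd X N)
  have hnontriv : Nontrivial (restrictSubgroup X N) := nontrivial_restrictSubgroup_blockKernel
    hB hs (two_ne_zero_of_odd_card hF) hπ hk hH hHπ hX
  obtain ⟨rfl, g, -, hgπ, rfl⟩ := hX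
  have : Nontrivial (residualSpace g) :=
    Submodule.nontrivial_iff_ne_bot.2 (residualSpace_ne_bot_of_orderOf_mem hπ hgπ)
  have hbound := ResidualRankGE.two_mul_natCard_le hF hXnondeg (hs.restrict _) hπ
    (hk.restrict hs hXcompl) (restrictSubgroup_le_formIsometryGroup _ (hNH.trans hH)) hNπ
  have hodd := hπ.odd_natCard hNπ
  have hthree := three_le_natCard_of_odd hodd
  have hhalf : finrank F (residualSpace g) / 2 ≠ 0 := by
    intro h0
    rw [h0, pow_zero] at hbound
    omega
  exact ⟨by omega, hAY.mul_sq_le _ _ (Nat.one_le_iff_ne_zero.2 hhalf) hthree hodd hbound⟩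

lemma IsBlockGrowthBound.mul_prod_sq_le {q M : ℕ} {A Y : ℝ} (hAY : IsBlockGrowthBound q M A Y)
    {ι : Type*} {S : Finset ι} (hS : S.card ≤ M) {T : ι → ℕ} {j : ℕ}
    (hT : ∀ i ∈ S, A * (T i : ℝ) ^ 2 ≤ Y ^ j) :
    (oddPermBound S.card * ∏ i ∈ S, (T i : ℝ)) ^ 2 ≤ Y ^ (S.card * j) := by
  have hA := hAY.nonneg
  calc (oddPermBound S.card * ∏ i ∈ S, (T i : ℝ)) ^ 2
      = oddPermBound S.card ^ 2 * ∏ i ∈ S, (T i : ℝ) ^ 2 := by rw [mul_pow, Finset.prod_pow]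
    _ ≤ A ^ S.card * ∏ i ∈ S, (T i : ℝ) ^ 2 := by
        gcongr
        exact hAY.oddPermBound_sq_le _ hS
    _ = ∏ i ∈ S, A * (T i : ℝ) ^ 2 := by rw [Finset.prod_mul_distrib, Finset.prod_const]
    _ ≤ ∏ _i ∈ S, Y ^ j := Finset.prod_le_prod (fun _ _ => by positivity) hT
    _ = Y ^ (S.card * j) := by rw [Finset.prod_const, ← pow_mul, mul_comm]

lemma natCard_le_oddPermBound_mul_prod [Finite V] (hH : Odd (Nat.card H))
    {S : Finset (Submodule F V)} (hS : ∀ h ∈ H, ∀ X ∈ S, h • X ∈ S) {W : Submodule F V}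
    (hHW : H ≤ stabilizer (V ≃ₗ[F] V) W) (hsup : S.sup id ⊔ W = ⊤) :
    (Nat.card H : ℝ) ≤ oddPermBound S.card *
      (∏ X ∈ S, (Nat.card (restrictSubgroup X
        (H ⊓ fixingSubgroup (V ≃ₗ[F] V) (S : Set (Submodule F V)))) : ℝ)) *
      Nat.card (restrictSubgroup W H) := by
  have : Finite (V ≃ₗ[F] V) := DFunLike.finite _
  have (X : Submodule F V) : Finite (X ≃ₗ[F] X) := DFunLike.finite _
  set N := H ⊓ fixingSubgroup (V ≃ₗ[F] V) (S : Set (Submodule F V))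
  have hNH : N ≤ H := inf_le_left
  have hperm : (Nat.card H : ℝ) ≤ oddPermBound S.card * Nat.card N := by
    simpa only [Set.ncard_coe_finset] using
      natCard_le_oddPermBound_mul H hH (S : Set (Submodule F V)) hS
  have hker := natCard_le_prod_natCard_restrictSubgroup (N := N)
    (fun X hX g hg => (mem_fixingSubgroup_iff _).1 hg.2 X hX) (hNH.trans hHW) hsup
  have hmono : Nat.card (restrictSubgroup W N) ≤ Nat.card (restrictSubgroup W H) :=
    Subgroup.card_le_of_le (restrictSubgroup_mono W hNH)
  have hker' : Nat.card N ≤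
      (∏ X ∈ S, Nat.card (restrictSubgroup X N)) * Nat.card (restrictSubgroup W H) :=
    hker.trans (Nat.mul_le_mul_left _ hmono)
  rw [mul_assoc]
  refine hperm.trans (mul_le_mul_of_nonneg_left ?_ (oddPermBound_pos _).le)
  exact_mod_cast hker'

lemma ResidualRankGE.disjoint_sup_orthogonal_and_finrank_eq [FiniteDimensional F V] [Finite V]
    (hB : B.Nondegenerate) (hs : B.IsSymm) (h2 : (2 : F) ≠ 0) (hπ : IsOddCrossCharacteristic F π)
    (hk : ResidualRankGE B π k) (hH : H ≤ formIsometryGroup B) (hHπ : IsPiGroup π H)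
    {S : Finset (Submodule F V)} (hS : (S : Set (Submodule F V)) = residualBlocks H π k) :
    Disjoint (S.sup id) (B.orthogonal (S.sup id)) ∧
      finrank F (S.sup id : Submodule F V) = S.card * k := by
  have hmem (X : Submodule F V) (hX : X ∈ S) : X ∈ residualBlocks H π k := hS ▸ hX
  rw [← Finset.sum_const_nat fun X hX => (hmem X hX).1]
  exact disjoint_finset_sup_orthogonal_and_finrank_eq
    (fun X hX => (isCompl_orthogonal_of_mem_residualBlocks hB hs hπ hH (hmem X hX)).disjoint)
    (hS ▸ hk.pairwise_residualBlocks hB hs h2 hπ hH hHπ)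

lemma ResidualRankGE.exists_natCard_sq_le [Fintype F] [FiniteDimensional F V]
    (hF : Odd (Fintype.card F)) (hB : B.Nondegenerate) (hs : B.IsSymm)
    (hπ : IsOddCrossCharacteristic F π) (hk : ResidualRankGE B π k)
    (hH : H ≤ formIsometryGroup B) (hHπ : IsPiGroup π H) (hne : (residualBlocks H π k).Nonempty)
    {M : ℕ} (hM : finrank F V / 2 ≤ M) {A Y : ℝ}
    (hAY : IsBlockGrowthBound (Fintype.card F) M A Y) :
    ∃ W : Submodule F V, IsCompl W (B.orthogonal W) ∧ H ≤ stabilizer (V ≃ₗ[F] V) W ∧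
      ∃ j, 0 < j ∧ 2 * j + finrank F W ≤ finrank F V ∧
        (Nat.card H : ℝ) ^ 2 ≤ Y ^ j * (Nat.card (restrictSubgroup W H) : ℝ) ^ 2 := by
  have : Finite V := Module.finite_of_finite F
  obtain ⟨S, hS⟩ := (Set.toFinite (residualBlocks H π k)).exists_finset_coe
  have hmem {X : Submodule F V} : X ∈ S ↔ X ∈ residualBlocks H π k := by
    rw [← hS, Finset.mem_coe]
  have hsmul : ∀ h ∈ H, ∀ X ∈ S, h • X ∈ S := fun h hh X hX =>
    hmem.2 (smul_mem_residualBlocks hh (hmem.1 hX))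
  have hblock (X : Submodule F V) (hX : X ∈ S) :=
    hk.two_le_and_mul_sq_le hF hB hs hπ hH hHπ (hmem.1 hX) hAY
  obtain ⟨hdisj, hrank⟩ := hk.disjoint_sup_orthogonal_and_finrank_eq hB hs
    (two_ne_zero_of_odd_card hF) hπ hH hHπ hS
  have hcompl := (LinearMap.BilinForm.isCompl_orthogonal_iff_disjoint hs.isRefl).2 hdisj
  have hHW : H ≤ stabilizer (V ≃ₗ[F] V) (B.orthogonal (S.sup id)) := fun h hh =>
    mem_stabilizer_orthogonal (hH hh) (le_stabilizer_finset_sup hsmul hh)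
  have hrankW := Submodule.finrank_add_eq_of_isCompl hcompl
  obtain ⟨X₀, hX₀⟩ := hne
  have hk2 := (hblock X₀ (hmem.2 hX₀)).1
  have hj : S.card ≤ S.card * (k / 2) := Nat.le_mul_of_pos_right _ (by omega)
  have hjk : 2 * (S.card * (k / 2)) ≤ S.card * k := by
    rw [mul_left_comm]
    exact Nat.mul_le_mul_left _ (Nat.mul_div_le k 2)
  refine ⟨B.orthogonal (S.sup id), ?_, hHW, S.card * (k / 2),
    (Finset.card_pos.2 ⟨X₀, hmem.2 hX₀⟩).trans_le hj, by omega, ?_⟩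
  · rw [LinearMap.BilinForm.orthogonal_orthogonal hB hs.isRefl]
    exact hcompl.symm
  have hcard := natCard_le_oddPermBound_mul_prod (hπ.odd_natCard hHπ) hsmul hHW
    hcompl.sup_eq_top
  rw [hS, ← blockKernel] at hcard
  grw [hcard, mul_pow, hAY.mul_prod_sq_le (by omega) fun X hX => (hblock X hX).2]

lemma exists_residualRankGE (hex : ∃ g ∈ formIsometryGroup B, orderOf g ∈ π) :
    ∃ g ∈ formIsometryGroup B, orderOf g ∈ π ∧
      ResidualRankGE B π (finrank F (residualSpace g)) := by
  obtain ⟨g, ⟨hg, hgπ⟩, hmin⟩ := exists_minimalFor_of_wellFoundedLT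
    (fun g => g ∈ formIsometryGroup B ∧ orderOf g ∈ π) (fun g => finrank F (residualSpace g)) hex
  exact ⟨g, hg, hgπ, fun g' hg' hgπ' => (le_total _ _).elim id (hmin ⟨hg', hgπ'⟩)⟩

end ResidualBlocks

lemma exists_orderOf_mem_of_isPiGroup {G : Type*} [Group G] [Finite G] {π : Set ℕ}
    {H : Subgroup G} (hH : IsPiGroup π H) (h1 : Nat.card H ≠ 1) : ∃ g ∈ H, orderOf g ∈ π := by
  obtain ⟨r, hr, hrd⟩ := Nat.exists_prime_and_dvd h1
  have := Fact.mk hr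
  obtain ⟨g, rfl⟩ := exists_prime_orderOf_dvd_card' r hrd
  exact ⟨g, g.2, Subgroup.orderOf_coe g ▸ hH _ hr hrd⟩

lemma natCard_sq_le_pow_half_finrank {F V : Type*} [Field F] [Fintype F]
    (hF : Odd (Fintype.card F)) {π : Set ℕ} (hπ : IsOddCrossCharacteristic F π) {M : ℕ} {A Y : ℝ}
    (hAY : IsBlockGrowthBound (Fintype.card F) M A Y) [AddCommGroup V] [Module F V]
    [FiniteDimensional F V] {B : LinearMap.BilinForm F V} (hB : B.Nondegenerate) (hs : B.IsSymm)
    (hM : Module.finrank F V / 2 ≤ M) {H : Subgroup (V ≃ₗ[F] V)}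
    (hH : IsHallSubgroupIn π (formIsometryGroup B) H) :
    (Nat.card H : ℝ) ^ 2 ≤ Y ^ (Module.finrank F V / 2) := by
  induction hd : Module.finrank F V using Nat.strong_induction_on generalizing V with | _ d ih
  have : Finite V := Module.finite_of_finite F
  have : Finite (V ≃ₗ[F] V) := DFunLike.finite _
  obtain ⟨hle, hpi, -⟩ := id hH
  by_cases h1 : Nat.card H = 1
  · simpa [h1] using one_le_pow₀ hAY.one_le
  obtain ⟨h, hh, hhπ⟩ := exists_orderOf_mem_of_isPiGroup hpi h1
  obtain ⟨g, hg, hgπ, hk⟩ := exists_residualRankGE ⟨h, hle hh, hhπ⟩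
  obtain ⟨W, hW, hHW, j, hj, hjd, hcard⟩ := hk.exists_natCard_sq_le hF hB hs hπ hle hpi
    (residualBlocks_nonempty hπ hH hg hgπ) hM hAY
  have hih := ih (Module.finrank F W) (by omega)
    (B.nondegenerate_restrict_of_disjoint_orthogonal hs.isRefl hW.disjoint) (hs.restrict W)
    (by omega) (isHallSubgroupIn_restrictSubgroup hs hH hW hHW) rfl
  have hY := hAY.one_le
  calc (Nat.card H : ℝ) ^ 2 ≤ Y ^ j * Y ^ (Module.finrank F W / 2) := by grw [hcard, hih]
    _ = Y ^ (j + Module.finrank F W / 2) := (pow_add _ _ _).symm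
    _ ≤ Y ^ (d / 2) := pow_le_pow_right₀ hY (by omega)

/-! ### Conjugacy classes of isometries -/

section ConjugacyClass

open Module (finrank)

variable {F V : Type*} [Field F] [AddCommGroup V] [Module F V] {B : LinearMap.BilinForm F V}
  {u v w z : V}

/-- The group of isometries of determinant one of a bilinear form. -/
noncomputable def specialFormIsometryGroup (B : LinearMap.BilinForm F V) :
    Subgroup (V ≃ₗ[F] V) :=
  formIsometryGroup B ⊓ LinearEquiv.det.ker

lemma two_div_smul_apply_self (hv : B v v ≠ 0) :
    ((2 / B v v) • B v : Module.Dual F V) v = 2 := by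
  simp [hv]

/-- The orthogonal reflection in an anisotropic vector of a bilinear form. -/
def formReflection (hv : B v v ≠ 0) : V ≃ₗ[F] V :=
  Module.reflection (two_div_smul_apply_self hv)

lemma formReflection_apply (hv : B v v ≠ 0) (z : V) :
    formReflection hv z = z - (2 / B v v * B v z) • v :=
  Module.reflection_apply _ (two_div_smul_apply_self hv)

lemma formReflection_apply_self (hv : B v v ≠ 0) : formReflection hv v = -v :=
  Module.reflection_apply_self _

lemma formReflection_apply_of_eq_zero (hv : B v v ≠ 0) (hz : B v z = 0) :
    formReflection hv z = z := by
  rw [formReflection_apply, hz, mul_zero, zero_smul, sub_zero]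

lemma formReflection_sub_apply (hs : B.IsSymm) (hzw : B w w = B z z)
    (h : B (z - w) (z - w) ≠ 0) : formReflection h z = w := by
  have hB : B (z - w) (z - w) = 2 * B (z - w) z := by
    simp only [map_sub, LinearMap.sub_apply]
    rw [hs.eq w z, hzw]
    ring
  rw [formReflection_apply, div_mul_eq_mul_div, ← hB, div_self h, one_smul, sub_sub_cancel]

lemma formReflection_mem_formIsometryGroup (hs : B.IsSymm) (hv : B v v ≠ 0) :
    formReflection hv ∈ formIsometryGroup B := by
  intro a b
  simp only [formReflection_apply, map_sub, map_smul, LinearMap.sub_apply, LinearMap.smul_apply,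
    smul_eq_mul, hs.eq a v]
  field

lemma det_formReflection [FiniteDimensional F V] (hv : B v v ≠ 0) :
    LinearEquiv.det (formReflection hv) = -1 := by
  have htrans : (formReflection hv : V →ₗ[F] V) =
      LinearMap.transvection (-((2 / B v v) • B v : Module.Dual F V)) v := by
    ext z
    simp [LinearMap.transvection.apply, formReflection_apply, sub_eq_add_neg]
  ext
  rw [LinearEquiv.coe_det, htrans, LinearMap.transvection.det, LinearMap.neg_apply,
    two_div_smul_apply_self hv, Units.val_neg, Units.val_one]
  ring

lemma formReflection_mul_mem_specialFormIsometryGroup [FiniteDimensional F V] (hs : B.IsSymm)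
    (hv : B v v ≠ 0) (hw : B w w ≠ 0) :
    formReflection hv * formReflection hw ∈ specialFormIsometryGroup B :=
  ⟨mul_mem (formReflection_mem_formIsometryGroup hs hv)
    (formReflection_mem_formIsometryGroup hs hw), MonoidHom.mem_ker.2 (by
    rw [map_mul, det_formReflection, det_formReflection, neg_mul_neg, one_mul])⟩

lemma exists_mem_orthogonal_self_ne_zero [FiniteDimensional F V] (hB : B.Nondegenerate)
    (hs : B.IsSymm) (h2 : (2 : F) ≠ 0) {X : Submodule F V} (hX : Disjoint X (B.orthogonal X))
    (hlt : finrank F X < finrank F V) : ∃ v ∈ B.orthogonal X, B v v ≠ 0 := by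
  have hfin := LinearMap.BilinForm.finrank_orthogonal hB X
  have : Nontrivial (B.orthogonal X) :=
    Module.finrank_pos_iff.1 (hfin ▸ Nat.sub_pos_of_lt hlt)
  obtain ⟨v, hv⟩ := exists_self_ne_zero
    (B.nondegenerate_restrict_of_disjoint_orthogonal hs.isRefl
      (by rwa [LinearMap.BilinForm.orthogonal_orthogonal hB hs.isRefl, disjoint_comm]))
    (hs.restrict _) h2
  exact ⟨v, v.2, hv⟩

lemma exists_apply_eq_zero_apply_eq_zero_self_ne_zero [FiniteDimensional F V]
    (hB : B.Nondegenerate) (hs : B.IsSymm) (h2 : (2 : F) ≠ 0) (hn : 3 ≤ finrank F V)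
    (hu : B u u ≠ 0) (hz : B z z ≠ 0) (huz : B u z = 0) :
    ∃ v, B v u = 0 ∧ B v z = 0 ∧ B v v ≠ 0 := by
  have hdisj : Disjoint (F ∙ u ⊔ F ∙ z) (B.orthogonal (F ∙ u ⊔ F ∙ z)) :=
    disjoint_sup_orthogonal_of_le_orthogonal
      (LinearMap.BilinForm.isCompl_span_singleton_orthogonal hu).disjoint
      (LinearMap.BilinForm.isCompl_span_singleton_orthogonal hz).disjoint (by
        rwa [Submodule.span_singleton_le_iff_mem,
          LinearMap.BilinForm.orthogonal_span_singleton_eq_toLin_ker])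
  have hfin := Submodule.finrank_add_le_finrank_add_finrank (F ∙ u) (F ∙ z)
  rw [finrank_span_singleton (ne_of_apply_ne (fun x => B x x) (by simpa using hu)),
    finrank_span_singleton (ne_of_apply_ne (fun x => B x x) (by simpa using hz))] at hfin
  obtain ⟨v, hv, hvv⟩ := exists_mem_orthogonal_self_ne_zero hB hs h2 hdisj (by omega)
  refine ⟨v, (hs.eq v u).trans (hv u ?_), (hs.eq v z).trans (hv z ?_), hvv⟩
  · exact Submodule.mem_sup_left (Submodule.mem_span_singleton_self u)
  · exact Submodule.mem_sup_right (Submodule.mem_span_singleton_self z)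

/- A case of Witt's theorem. The isometry is a product of two reflections: one of the vectors
`z - w`, `z + w` is anisotropic, and the reflection in it takes `z` to `w` or to `-w`. -/
lemma exists_mem_specialFormIsometryGroup_apply_eq [FiniteDimensional F V] (hB : B.Nondegenerate)
    (hs : B.IsSymm) (h2 : (2 : F) ≠ 0) (hn : 3 ≤ finrank F V) (hu : B u u ≠ 0)
    (huz : B u z = 0) (huw : B u w = 0) (hz : B z z ≠ 0) (hzw : B w w = B z z) :
    ∃ x ∈ specialFormIsometryGroup B, x u = u ∧ x z = w := by
  have hzu : B z u = 0 := (hs.eq z u).trans huz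
  have hwu : B w u = 0 := (hs.eq w u).trans huw
  by_cases hsub : B (z - w) (z - w) = 0
  · have hadd : B (z - -w) (z - -w) ≠ 0 := by
      intro h0
      have h4 : 2 * 2 * B z z = 0 := by
        simp only [map_sub, map_neg, LinearMap.sub_apply, LinearMap.neg_apply] at hsub h0
        linear_combination hsub + h0 - 2 * hzw
      simp [h2, hz] at h4
    have hw : B w w ≠ 0 := hzw ▸ hz
    refine ⟨formReflection hw * formReflection hadd,
      formReflection_mul_mem_specialFormIsometryGroup hs hw hadd, ?_, ?_⟩
    · rw [LinearEquiv.mul_apply, formReflection_apply_of_eq_zero hadd (by simp [hzu, hwu]),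
        formReflection_apply_of_eq_zero hw hwu]
    · rw [LinearEquiv.mul_apply, formReflection_sub_apply hs (by simpa using hzw), map_neg,
        formReflection_apply_self, neg_neg]
  · obtain ⟨v, hvu, hvz, hv⟩ :=
      exists_apply_eq_zero_apply_eq_zero_self_ne_zero hB hs h2 hn hu hz huz
    refine ⟨formReflection hsub * formReflection hv,
      formReflection_mul_mem_specialFormIsometryGroup hs hsub hv, ?_, ?_⟩
    · rw [LinearEquiv.mul_apply, formReflection_apply_of_eq_zero hv hvu,
        formReflection_apply_of_eq_zero hsub (by simp [hzu, hwu])]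
    · rw [LinearEquiv.mul_apply, formReflection_apply_of_eq_zero hv hvz,
        formReflection_sub_apply hs hzw]

lemma exists_ne_zero_self_eq_zero [Fintype F] (hF : Odd (Fintype.card F)) [FiniteDimensional F V]
    (hB : B.Nondegenerate) (hs : B.IsSymm) (hn : 3 ≤ finrank F V) : ∃ e ≠ 0, B e e = 0 := by
  have := invertibleOfNonzero (two_ne_zero_of_odd_card hF)
  obtain ⟨b, hb⟩ := LinearMap.BilinForm.exists_orthogonal_basis
    (LinearMap.BilinForm.isSymm_iff.1 hs)
  have horth (i j) (hij : i ≠ j) : B (b i) (b j) = 0 := hb hij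
  have hself (i) : B (b i) (b i) ≠ 0 := hb.not_isOrtho_basis_self_of_separatingLeft hB.1 i
  let i (k : Fin 3) : Fin (finrank F V) := Fin.castLE hn k
  obtain ⟨x, y, hxy⟩ := FiniteField.exists_root_sum_quadratic
    (Polynomial.degree_quadratic (b := 0) (c := 0) (hself (i 0)))
    (Polynomial.degree_quadratic (b := 0) (c := B (b (i 2)) (b (i 2))) (hself (i 1)))
    (Nat.odd_iff.1 hF)
  have h01 : i 0 ≠ i 1 := by simp [i]
  have h02 : i 0 ≠ i 2 := by simp [i]
  have h12 : i 1 ≠ i 2 := by simp [i]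
  refine ⟨x • b (i 0) + y • b (i 1) + b (i 2), fun h0 => hself (i 2) ?_, ?_⟩
  · simpa [horth _ _ h02.symm, horth _ _ h12.symm] using congrArg (B (b (i 2))) h0
  · simp only [Polynomial.eval_add, Polynomial.eval_mul, Polynomial.eval_C, Polynomial.eval_pow,
      Polynomial.eval_X] at hxy
    simp only [map_add, map_smul, LinearMap.add_apply, LinearMap.smul_apply, smul_eq_mul,
      horth _ _ h01, horth _ _ h02, horth _ _ h12, horth _ _ h01.symm, horth _ _ h02.symm,
      horth _ _ h12.symm]
    linear_combination hxy

lemma exists_ne_zero_apply_eq_zero_self_eq_zero [Fintype F] (hF : Odd (Fintype.card F))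
    [FiniteDimensional F V] (hB : B.Nondegenerate) (hs : B.IsSymm) (hn : 4 ≤ finrank F V)
    (hu : B u u ≠ 0) : ∃ e ≠ 0, B u e = 0 ∧ B e e = 0 := by
  have hcompl := LinearMap.BilinForm.isCompl_span_singleton_orthogonal hu
  have hfin := Submodule.finrank_add_eq_of_isCompl hcompl
  rw [finrank_span_singleton (ne_of_apply_ne (fun x => B x x) (by simpa using hu))] at hfin
  obtain ⟨e, he0, hee⟩ := exists_ne_zero_self_eq_zero hF
    (B.nondegenerate_restrict_of_disjoint_orthogonal hs.isRefl
      (by rw [LinearMap.BilinForm.orthogonal_orthogonal hB hs.isRefl]; exact hcompl.disjoint.symm))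
    (hs.restrict (B.orthogonal (F ∙ u))) (by omega)
  exact ⟨e, by simpa using he0, e.2 u (Submodule.mem_span_singleton_self u), hee⟩

lemma card_sub_one_mul_pow_le_ncard_diff [Fintype F] [FiniteDimensional F V]
    {X Y : Submodule F V} (hXY : X < Y) :
    (Fintype.card F - 1) * Fintype.card F ^ (finrank F Y - 1) ≤ ((Y : Set V) \ X).ncard := by
  have : Finite V := Module.finite_of_finite F
  have hcard (Z : Submodule F V) : (Z : Set V).ncard = Fintype.card F ^ finrank F Z := by
    rw [← Nat.card_eq_fintype_card, ← Module.natCard_eq_pow_finrank (K := F) (V := Z)]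
    exact (Nat.card_coe_set_eq _).symm
  have hlt := Submodule.finrank_lt_finrank_of_lt hXY
  rw [Set.ncard_sdiff hXY.le, hcard, hcard, tsub_mul, one_mul, ← pow_succ',
    Nat.sub_add_cancel (by omega)]
  exact Nat.sub_le_sub_left (Nat.pow_le_pow_right Fintype.card_pos (by omega)) _

lemma ker_inf_ker_lt_ker (hB : B.Nondegenerate) (hs : B.IsSymm) {e : V} (he : e ≠ 0)
    (hu : B u u ≠ 0) (hue : B u e = 0) :
    LinearMap.ker (B u) ⊓ LinearMap.ker (B e) < LinearMap.ker (B u) := by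
  refine inf_lt_left.2 fun hle => he (hB.1 e fun w => ?_)
  have hw : B e (w - (B u w / B u u) • u) = 0 := hle (by simp [hu])
  rwa [map_sub, map_smul, hs.eq e u, hue, smul_zero, sub_zero] at hw

/- With `e` isotropic and orthogonal to `u`, every `w` orthogonal to `u` but not to `e` has exactly
one translate `w + t • e` of norm `c`. -/
lemma card_sub_one_mul_pow_le_ncard_self_eq [Fintype F] (hF : Odd (Fintype.card F))
    [FiniteDimensional F V] (hB : B.Nondegenerate) (hs : B.IsSymm) (hn : 4 ≤ finrank F V)
    (hu : B u u ≠ 0) (c : F) :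
    (Fintype.card F - 1) * Fintype.card F ^ (finrank F V - 3) ≤
      {w : V | B u w = 0 ∧ B w w = c}.ncard := by
  have : Finite V := Module.finite_of_finite F
  obtain ⟨e, he0, hue, hee⟩ := exists_ne_zero_apply_eq_zero_self_eq_zero hF hB hs hn hu
  have hdiff := card_sub_one_mul_pow_le_ncard_diff (ker_inf_ker_lt_ker hB hs he0 hu hue)
  have hfin := Module.Dual.finrank_ker_add_one_of_ne_zero
    (show B u ≠ 0 from fun h => hu (by rw [h, LinearMap.zero_apply]))
  let t (w : V) : F := (c - B w w) / (2 * B e w)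
  have hmaps : ∀ w ∈ (LinearMap.ker (B u) : Set V) \ (LinearMap.ker (B u) ⊓ LinearMap.ker (B e) :),
      (w + t w • e, t w) ∈ {w : V | B u w = 0 ∧ B w w = c} ×ˢ (Set.univ : Set F) := by
    rintro w ⟨hw : B u w = 0, hwe⟩
    have hew : B e w ≠ 0 := fun h => hwe ⟨hw, h⟩
    have h2 := two_ne_zero_of_odd_card hF
    refine ⟨⟨by simp [hw, hue], ?_⟩, trivial⟩
    simp only [map_add, map_smul, LinearMap.add_apply, LinearMap.smul_apply, smul_eq_mul, hee,
      hs.eq w e, t]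
    field
  have hinj : Set.InjOn (fun w => (w + t w • e, t w))
      ((LinearMap.ker (B u) : Set V) \ (LinearMap.ker (B u) ⊓ LinearMap.ker (B e) :)) := by
    intro w _ w' _ h
    obtain ⟨hadd, ht⟩ := Prod.mk.inj h
    rw [ht] at hadd
    exact add_right_cancel hadd
  have hle := hdiff.trans (Set.ncard_le_ncard_of_injOn _ hmaps hinj (Set.toFinite _))
  rw [Set.ncard_prod, Set.ncard_univ, Nat.card_eq_fintype_card,
    show finrank F (LinearMap.ker (B u)) - 1 = finrank F V - 3 + 1 by omega, pow_succ,
    ← mul_assoc] at hle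
  exact Nat.le_of_mul_le_mul_right hle Fintype.card_pos

lemma exists_sub_apply_self_ne_zero [FiniteDimensional F V] (hB : B.Nondegenerate) (hs : B.IsSymm)
    (h2 : (2 : F) ≠ 0) {g : V ≃ₗ[F] V} (hg : g ∈ formIsometryGroup B) {N : ℕ} (hgN : g ^ N = 1)
    (hN : (N : F) ≠ 0) (hg1 : g ≠ 1) : ∃ e, B (g e - e) (g e - e) ≠ 0 := by
  have : Nontrivial (residualSpace g) :=
    Submodule.nontrivial_iff_ne_bot.2 (residualSpace_eq_bot_iff.not.2 hg1)
  obtain ⟨⟨v, hv⟩, hvv⟩ := exists_self_ne_zero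
    (B.nondegenerate_restrict_of_disjoint_orthogonal hs.isRefl
      (by rw [orthogonal_residualSpace hB hg]; exact disjoint_residualSpace_fixedSubmodule hgN hN))
    (hs.restrict (residualSpace g)) h2
  obtain ⟨e, rfl⟩ := mem_residualSpace.1 hv
  exact ⟨e, hvv⟩

lemma exists_apply_eq_zero_self_ne_zero [FiniteDimensional F V] (hB : B.Nondegenerate)
    (hs : B.IsSymm) (h2 : (2 : F) ≠ 0) (hn : 3 ≤ finrank F V) (e : V) :
    ∃ f, B e f = 0 ∧ B f f ≠ 0 := by
  by_contra! hcon
  have hle : B.orthogonal (F ∙ e) ≤ B.orthogonal (B.orthogonal (F ∙ e)) := by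
    rw [LinearMap.BilinForm.orthogonal_span_singleton_eq_toLin_ker]
    intro x (hx : B e x = 0) y (hy : B e y = 0)
    have hxy := hcon (x + y) (by rw [map_add, hx, hy, add_zero])
    simp only [map_add, LinearMap.add_apply, hcon x hx, hcon y hy, hs.eq x y] at hxy
    have h2xy : 2 * B y x = 0 := by linear_combination hxy
    exact (mul_eq_zero.1 h2xy).resolve_left h2
  rw [LinearMap.BilinForm.orthogonal_orthogonal hB hs.isRefl] at hle
  have hmono := Submodule.finrank_mono hle
  have hspan : finrank F (F ∙ e) ≤ 1 := by simpa using finrank_span_le_card (R := F) {e}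
  have horth := LinearMap.BilinForm.finrank_orthogonal hB (F ∙ e)
  omega

/- If `e` itself is isotropic, one of `f`, `f + e`, `f - e` works for `f` anisotropic and orthogonal
to `e`, by the parallelogram law for the images. -/
lemma exists_self_ne_zero_and_map_self_ne_zero [FiniteDimensional F V] (hB : B.Nondegenerate)
    (hs : B.IsSymm) (h2 : (2 : F) ≠ 0) (hn : 3 ≤ finrank F V) (k : V →ₗ[F] V) {e : V}
    (he : B (k e) (k e) ≠ 0) : ∃ u, B u u ≠ 0 ∧ B (k u) (k u) ≠ 0 := by
  by_cases hee : B e e = 0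
  · obtain ⟨f, hef, hff⟩ := exists_apply_eq_zero_self_ne_zero hB hs h2 hn e
    have hfe : B f e = 0 := (hs.eq f e).trans hef
    by_contra! hcon
    have h0 := hcon f hff
    have hadd := hcon (f + e) (by simpa [hef, hfe, hee] using hff)
    have hsub := hcon (f - e) (by simpa [hef, hfe, hee] using hff)
    simp only [map_add, map_sub, LinearMap.add_apply, LinearMap.sub_apply] at hadd hsub
    have h2e : 2 * B (k e) (k e) = 0 := by linear_combination hadd + hsub - 2 * h0
    exact he ((mul_eq_zero.1 h2e).resolve_left h2)
  · exact ⟨e, hee, he⟩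

lemma exists_self_ne_zero_and_sub_inv_self_ne_zero [FiniteDimensional F V] (hB : B.Nondegenerate)
    (hs : B.IsSymm) (h2 : (2 : F) ≠ 0) (hn : 3 ≤ finrank F V) {g : V ≃ₗ[F] V}
    (hg : g ∈ formIsometryGroup B) {N : ℕ} (hgN : g ^ N = 1) (hNodd : Odd N) (hN : (N : F) ≠ 0)
    (hg1 : g ≠ 1) : ∃ u, B u u ≠ 0 ∧ B (g u - g⁻¹ u) (g u - g⁻¹ u) ≠ 0 := by
  have hg2 : g ^ 2 ≠ 1 := by
    intro hsq
    obtain ⟨m, rfl⟩ := hNodd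
    rw [pow_succ, pow_mul, hsq, one_pow, one_mul] at hgN
    exact hg1 hgN
  obtain ⟨e, he⟩ := exists_sub_apply_self_ne_zero hB hs h2 (pow_mem hg 2)
    (by rw [← pow_mul, mul_comm, pow_mul, hgN, one_pow]) hN hg2
  refine exists_self_ne_zero_and_map_self_ne_zero hB hs h2 hn
    ((g : V →ₗ[F] V) - ((g⁻¹ : V ≃ₗ[F] V) : V →ₗ[F] V)) (e := e) ?_
  have hge : g (g e - g⁻¹ e) = (g ^ 2) e - e := by
    rw [map_sub, pow_two, LinearEquiv.mul_apply, ← LinearEquiv.mul_apply g g⁻¹, mul_inv_cancel,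
      LinearEquiv.coe_one, id]
  rw [← hge, hg] at he
  exact he

/- For a suitable anisotropic `u`, the map `h ↦ h u - h⁻¹ u` takes the class of `g` onto the vectors
orthogonal to `u` with the same norm as `g u - g⁻¹ u`, by Witt's theorem. -/
theorem card_sub_one_mul_pow_le_ncard_conj [Fintype F] (hF : Odd (Fintype.card F))
    [FiniteDimensional F V] (hB : B.Nondegenerate) (hs : B.IsSymm) (hn : 4 ≤ finrank F V)
    {g : V ≃ₗ[F] V} (hg : g ∈ formIsometryGroup B) {N : ℕ} (hgN : g ^ N = 1) (hNodd : Odd N)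
    (hN : (N : F) ≠ 0) (hg1 : g ≠ 1) :
    (Fintype.card F - 1) * Fintype.card F ^ (finrank F V - 3) ≤
      ((fun x => x * g * x⁻¹) '' (specialFormIsometryGroup B : Set (V ≃ₗ[F] V))).ncard := by
  have : Finite V := Module.finite_of_finite F
  have : Finite (V ≃ₗ[F] V) := DFunLike.finite _
  have h2 := two_ne_zero_of_odd_card hF
  obtain ⟨u, hu, hgu⟩ :=
    exists_self_ne_zero_and_sub_inv_self_ne_zero hB hs h2 (by omega) hg hgN hNodd hN hg1
  have hcard := card_sub_one_mul_pow_le_ncard_self_eq hF hB hs hn hu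
    (B (g u - g⁻¹ u) (g u - g⁻¹ u))
  refine hcard.trans ((Set.ncard_le_ncard ?_ (Set.toFinite _)).trans
    (Set.ncard_image_le (f := fun h : V ≃ₗ[F] V => h u - h⁻¹ u) (Set.toFinite _)))
  rintro w ⟨huw, hww⟩
  have horth : B u (g u - g⁻¹ u) = 0 := by
    have hgg : B (g u) (g (g⁻¹ u)) = B u (g⁻¹ u) := hg u (g⁻¹ u)
    rw [← LinearEquiv.mul_apply g, mul_inv_cancel, LinearEquiv.coe_one, id] at hgg
    rw [map_sub, ← hgg, hs.eq (g u) u, sub_self]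
  obtain ⟨x, hx, hxu, hxw⟩ :=
    exists_mem_specialFormIsometryGroup_apply_eq hB hs h2 (by omega) hu horth huw hgu hww
  have hxu' : x⁻¹ u = u := x.symm_apply_eq.2 hxu.symm
  refine ⟨x * g * x⁻¹, ⟨x, hx, rfl⟩, ?_⟩
  simp only [conj_inv, LinearEquiv.mul_apply, hxu']
  rw [← map_sub, hxw]

end ConjugacyClass

/-! ### Numerical bounds -/

section BlockGrowthBound

lemma mul_sq_pow_lt_cube_of_le {R q : ℝ} {m₀ n₀ m n : ℕ} (hR : 0 < R) (hRq : R ≤ q) (hq : 1 < q)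
    (hn₀ : 3 ≤ n₀) (h : (R * q ^ 2) ^ (2 * m₀) < ((q - 1) * q ^ (n₀ - 3)) ^ 3) (hm : m₀ ≤ m)
    (hn : n₀ + 2 * (m - m₀) ≤ n) : (R * q ^ 2) ^ (2 * m) < ((q - 1) * q ^ (n - 3)) ^ 3 := by
  obtain ⟨i, rfl⟩ := Nat.exists_eq_add_of_le hm
  have : 0 < q := by linarith
  have : 0 < q - 1 := by linarith
  calc (R * q ^ 2) ^ (2 * (m₀ + i)) = (R * q ^ 2) ^ (2 * m₀) * (R * q ^ 2) ^ (2 * i) := by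
        rw [mul_add, pow_add]
    _ ≤ (R * q ^ 2) ^ (2 * m₀) * (q * q ^ 2) ^ (2 * i) := by gcongr
    _ < ((q - 1) * q ^ (n₀ - 3)) ^ 3 * (q * q ^ 2) ^ (2 * i) := by gcongr
    _ = ((q - 1) * q ^ (n₀ - 3 + 2 * i)) ^ 3 := by
        rw [pow_add]
        ring
    _ ≤ ((q - 1) * q ^ (n - 3)) ^ 3 := by
        gcongr
        · exact hq.le
        · omega

lemma mul_sq_le_mul_sq_pow {A R x : ℝ} {q j T : ℕ} (hA : 0 ≤ A) (hx : x = (q : ℝ) ^ j)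
    (h : A * (x + 1) ^ 2 ≤ 4 * (R ^ j * x ^ 2)) (hT : 2 * T ≤ q ^ j + 1) :
    A * (T : ℝ) ^ 2 ≤ (R * (q : ℝ) ^ 2) ^ j := by
  have hTx : 2 * (T : ℝ) ≤ x + 1 := by rw [hx]; exact_mod_cast hT
  have hsq : A * (2 * (T : ℝ)) ^ 2 ≤ A * (x + 1) ^ 2 := by gcongr
  have hpow : (R * (q : ℝ) ^ 2) ^ j = R ^ j * x ^ 2 := by
    rw [mul_pow, hx, ← pow_mul, ← pow_mul, mul_comm 2]
  linarith

lemma isBlockGrowthBound_of_five_le {A R : ℝ} {q M : ℕ} (hq : 5 ≤ q) (hA : 0 ≤ A) (hR : 1 ≤ R)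
    (hAR : A * 9 ≤ 25 * R) (hM : ∀ a ≤ M, oddPermBound a ^ 2 ≤ A ^ a) :
    IsBlockGrowthBound q M A (R * (q : ℝ) ^ 2) where
  nonneg := hA
  oddPermBound_sq_le := hM
  one_le := one_le_mul_of_one_le_of_one_le hR
    (one_le_pow₀ (by exact_mod_cast (show 1 ≤ q by omega)))
  mul_sq_le j T hj _ _ hT := by
    have hx : (5 : ℝ) ≤ (q : ℝ) ^ j := by
      exact_mod_cast hq.trans (Nat.le_self_pow (by omega) q)
    refine mul_sq_le_mul_sq_pow hA rfl ?_ hT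
    generalize (q : ℝ) ^ j = x at hx
    calc A * (x + 1) ^ 2 ≤ A * (6 / 5 * x) ^ 2 := by gcongr; linarith
      _ = 4 / 25 * (A * 9) * x ^ 2 := by ring
      _ ≤ 4 / 25 * (25 * R) * x ^ 2 := by gcongr
      _ = 4 * (R * x ^ 2) := by ring
      _ ≤ 4 * (R ^ j * x ^ 2) := by gcongr; exact le_self_pow₀ hR (by omega)

lemma isBlockGrowthBound_three {A R : ℝ} {M : ℕ} (hA : 0 ≤ A) (hR : 1 ≤ R)
    (hAR2 : A * 25 ≤ R ^ 2 * 81) (hAR3 : A * 784 ≤ 2916 * R ^ 3)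
    (hM : ∀ a ≤ M, oddPermBound a ^ 2 ≤ A ^ a) :
    IsBlockGrowthBound 3 M A (R * ((3 : ℕ) : ℝ) ^ 2) where
  nonneg := hA
  oddPermBound_sq_le := hM
  one_le := one_le_mul_of_one_le_of_one_le hR (by norm_num)
  mul_sq_le j T hj hT3 _ hT := by
    rcases lt_or_ge j 3 with hlt | hge
    · obtain rfl : j = 2 := by interval_cases j <;> omega
      refine mul_sq_le_mul_sq_pow hA rfl ?_ hT
      norm_num
      linarith
    · have hx : (27 : ℝ) ≤ ((3 : ℕ) : ℝ) ^ j := by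
        exact_mod_cast Nat.pow_le_pow_right (n := 3) (by norm_num) hge
      refine mul_sq_le_mul_sq_pow hA rfl ?_ hT
      generalize ((3 : ℕ) : ℝ) ^ j = x at hx
      calc A * (x + 1) ^ 2 ≤ A * (28 / 27 * x) ^ 2 := by gcongr; linarith
        _ = A * 784 / 729 * x ^ 2 := by ring
        _ ≤ 2916 * R ^ 3 / 729 * x ^ 2 := by gcongr
        _ = 4 * (R ^ 3 * x ^ 2) := by ring
        _ ≤ 4 * (R ^ j * x ^ 2) := by gcongr

lemma exists_isBlockGrowthBound_three {n : ℕ} (hn : 7 ≤ n) :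
    ∃ A Y : ℝ, IsBlockGrowthBound 3 (n / 2) A Y ∧
      Y ^ (2 * (n / 2)) < ((((3 : ℕ) : ℝ) - 1) * ((3 : ℕ) : ℝ) ^ (n - 3)) ^ 3 := by
  rcases le_or_gt (n / 2) 7 with hm | hm
  · refine ⟨33 / 10, 51 / 50 * ((3 : ℕ) : ℝ) ^ 2, isBlockGrowthBound_three (by norm_num)
      (by norm_num) (by norm_num) (by norm_num)
      fun a ha => oddPermBound_sq_le_of_le_seven (ha.trans hm), ?_⟩
    rcases hn.eq_or_lt with rfl | hlt
    · norm_num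
    · exact mul_sq_pow_lt_cube_of_le (m₀ := 4) (n₀ := 8) (by norm_num) (by norm_num) (by norm_num)
        (by norm_num) (by norm_num) (by omega) (by omega)
  · refine ⟨169 / 25, 3 / 2 * ((3 : ℕ) : ℝ) ^ 2, isBlockGrowthBound_three (by norm_num)
      (by norm_num) (by norm_num) (by norm_num) fun a _ => oddPermBound_sq_le a, ?_⟩
    exact mul_sq_pow_lt_cube_of_le (m₀ := 8) (n₀ := 16) (by norm_num) (by norm_num) (by norm_num)
      (by norm_num) (by norm_num) (by omega) (by omega)

lemma exists_isBlockGrowthBound_of_five_le {q n : ℕ} (hq : 5 ≤ q) (hn : 7 ≤ n) :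
    ∃ A Y : ℝ, IsBlockGrowthBound q (n / 2) A Y ∧
      Y ^ (2 * (n / 2)) < (((q : ℝ) - 1) * (q : ℝ) ^ (n - 3)) ^ 3 := by
  have hqr : (5 : ℝ) ≤ q := by exact_mod_cast hq
  have hsub : (4 : ℝ) ^ 3 ≤ ((q : ℝ) - 1) ^ 3 := by gcongr; linarith
  rcases le_or_gt (n / 2) 7 with hm | hm
  · refine ⟨33 / 10, 6 / 5 * (q : ℝ) ^ 2, isBlockGrowthBound_of_five_le hq (by norm_num)
      (by norm_num) (by norm_num)
      fun a ha => oddPermBound_sq_le_of_le_seven (ha.trans hm), ?_⟩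
    rcases hn.eq_or_lt with rfl | hlt
    · calc (6 / 5 * (q : ℝ) ^ 2) ^ (2 * (7 / 2)) = (6 / 5) ^ 6 * (q : ℝ) ^ 12 := by norm_num; ring
        _ < ((q : ℝ) - 1) ^ 3 * (q : ℝ) ^ 12 := by gcongr; linarith
        _ = (((q : ℝ) - 1) * (q : ℝ) ^ (7 - 3)) ^ 3 := by norm_num; ring
    · refine mul_sq_pow_lt_cube_of_le (m₀ := 4) (n₀ := 8) (by norm_num) (by linarith) (by linarith)
        (by norm_num) ?_ (by omega) (by omega)
      have hcube : (4 : ℝ) ^ 2 * (q - 1) ≤ (q - 1) ^ 3 := by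
        rw [pow_succ ((q : ℝ) - 1) 2]
        gcongr
        · linarith
        · linarith
      calc (6 / 5 * (q : ℝ) ^ 2) ^ (2 * 4) = (6 / 5) ^ 8 * q * (q : ℝ) ^ 15 := by ring
        _ < ((q : ℝ) - 1) ^ 3 * (q : ℝ) ^ 15 := by gcongr; linarith
        _ = (((q : ℝ) - 1) * (q : ℝ) ^ (8 - 3)) ^ 3 := by norm_num; ring
  · refine ⟨169 / 25, 5 / 2 * (q : ℝ) ^ 2, isBlockGrowthBound_of_five_le hq (by norm_num)
      (by norm_num) (by norm_num) fun a _ => oddPermBound_sq_le a, ?_⟩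
    refine mul_sq_pow_lt_cube_of_le (m₀ := 8) (n₀ := 16) (by norm_num) (by linarith) (by linarith)
      (by norm_num) ?_ (by omega) (by omega)
    calc (5 / 2 * (q : ℝ) ^ 2) ^ (2 * 8) = (5 / 2) ^ 16 * (q : ℝ) ^ 32 := by ring
      _ < 4 ^ 3 * 5 ^ 7 * (q : ℝ) ^ 32 := by gcongr; norm_num
      _ ≤ ((q : ℝ) - 1) ^ 3 * (q : ℝ) ^ 7 * (q : ℝ) ^ 32 := by gcongr
      _ = (((q : ℝ) - 1) * (q : ℝ) ^ (16 - 3)) ^ 3 := by norm_num; ring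

lemma exists_isBlockGrowthBound {q n : ℕ} (hq : 3 ≤ q) (hqodd : Odd q) (hn : 7 ≤ n) :
    ∃ A Y : ℝ, IsBlockGrowthBound q (n / 2) A Y ∧
      Y ^ (2 * (n / 2)) < (((q : ℝ) - 1) * (q : ℝ) ^ (n - 3)) ^ 3 := by
  rcases hq.eq_or_lt with rfl | hlt
  · exact exists_isBlockGrowthBound_three hn
  · exact exists_isBlockGrowthBound_of_five_le
      (by obtain ⟨m, rfl⟩ := hqodd; omega) hn

end BlockGrowthBound

section IsometryGroup

open Module (finrank)

variable {F V : Type*} [Field F] [Fintype F] [AddCommGroup V] [Module F V]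
  [FiniteDimensional F V] {B : LinearMap.BilinForm F V} {π : Set ℕ} {H : Subgroup (V ≃ₗ[F] V)}

lemma natCard_pow_four_lt_cube (hF : Odd (Fintype.card F)) (hπ : IsOddCrossCharacteristic F π)
    (hB : B.Nondegenerate) (hs : B.IsSymm) (hn : 7 ≤ finrank F V)
    (hH : IsHallSubgroupIn π (formIsometryGroup B) H) :
    Nat.card H ^ 4 < ((Fintype.card F - 1) * Fintype.card F ^ (finrank F V - 3)) ^ 3 := by
  have hq1 := Fintype.one_lt_card (α := F)
  have hq3 : 3 ≤ Fintype.card F := by obtain ⟨m, hm⟩ := hF; omega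
  obtain ⟨A, Y, hAY, hlt⟩ := exists_isBlockGrowthBound hq3 hF hn
  have hsize := natCard_sq_le_pow_half_finrank hF hπ hAY hB hs le_rfl hH
  have hreal : (Nat.card H : ℝ) ^ 4 <
      (((Fintype.card F : ℝ) - 1) * (Fintype.card F : ℝ) ^ (finrank F V - 3)) ^ 3 := by
    calc (Nat.card H : ℝ) ^ 4 = ((Nat.card H : ℝ) ^ 2) ^ 2 := by ring
      _ ≤ (Y ^ (finrank F V / 2)) ^ 2 := by gcongr
      _ = Y ^ (2 * (finrank F V / 2)) := by rw [← pow_mul, mul_comm]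
      _ < _ := hlt
  rw [← Nat.cast_pred (by omega)] at hreal
  exact_mod_cast hreal

theorem exists_three_conj_eq_one_of_isHallSubgroupIn (hF : Odd (Fintype.card F))
    (hπ : IsOddCrossCharacteristic F π) (hB : B.Nondegenerate) (hs : B.IsSymm)
    (hn : 7 ≤ finrank F V) (hH : IsHallSubgroupIn π (formIsometryGroup B) H) :
    ∃ x ∈ specialFormIsometryGroup B, ∃ y ∈ specialFormIsometryGroup B,
      ∃ z ∈ specialFormIsometryGroup B, ∀ g ∈ H,
        x * g * x⁻¹ ∈ H → y * g * y⁻¹ ∈ H → z * g * z⁻¹ ∈ H → g = 1 := by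
  have : Finite V := Module.finite_of_finite F
  have : Finite (V ≃ₗ[F] V) := DFunLike.finite _
  refine exists_three_conj_eq_one_of_card_pow_lt (fun g hg hg1 => ?_)
    (natCard_pow_four_lt_cube hF hπ hB hs hn hH)
  have hpow : g ^ Nat.card H = 1 := congrArg Subtype.val (pow_card_eq_one' (x := (⟨g, hg⟩ : H)))
  exact card_sub_one_mul_pow_le_ncard_conj hF hB hs (by omega) (hH.1 hg) hpow
    (hπ.odd_natCard hH.2.1) (hπ.natCard_cast_ne_zero hH.2.1) hg1

end IsometryGroup

/-! ### Similitude groups -/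

section Hall

variable {G G' : Type*} [Group G] [Group G'] {π : Set ℕ} {H K N : Subgroup G}

lemma relIndex_dvd_index_of_normal_right [Finite G] (H N : Subgroup G) [N.Normal] :
    H.relIndex N ∣ H.index := by
  have hH := Subgroup.relIndex_mul_relIndex (H ⊓ N) H (H ⊔ N) inf_le_left le_sup_left
  have hN := Subgroup.relIndex_mul_relIndex (H ⊓ N) N (H ⊔ N) inf_le_right le_sup_right
  rw [Subgroup.inf_relIndex_left] at hH
  rw [Subgroup.inf_relIndex_right, Subgroup.relIndex_sup_right, ← hH, mul_comm] at hN
  rw [Nat.eq_of_mul_eq_mul_left (Nat.pos_of_ne_zero Subgroup.index_ne_zero_of_finite) hN]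
  exact Subgroup.relIndex_dvd_index_of_le le_sup_left

lemma relIndex_dvd_relIndex_of_conj_mem [Finite G] (H : Subgroup G) (hNK : N ≤ K)
    (hconj : ∀ g ∈ K, ∀ a ∈ N, g * a * g⁻¹ ∈ N) : H.relIndex N ∣ H.relIndex K := by
  have : (N.subgroupOf K).Normal := ⟨fun a ha g => hconj g g.2 a ha⟩
  rw [← Subgroup.relIndex_subgroupOf hNK]
  exact relIndex_dvd_index_of_normal_right (H.subgroupOf K) (N.subgroupOf K)

lemma IsHallSubgroupIn.inf_of_conj_mem [Finite G] (hH : IsHallSubgroupIn π K H) (hNK : N ≤ K)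
    (hconj : ∀ g ∈ K, ∀ a ∈ N, g * a * g⁻¹ ∈ N) : IsHallSubgroupIn π N (H ⊓ N) := by
  refine ⟨inf_le_right, IsPiGroup.of_le hH.2.1 inf_le_left, fun r hr hdvd => hH.2.2 r hr ?_⟩
  rw [Subgroup.inf_relIndex_right] at hdvd
  exact hdvd.trans (relIndex_dvd_relIndex_of_conj_mem H hNK hconj)

lemma IsHallSubgroupIn.map_of_injective (hH : IsHallSubgroupIn π K H) {f : G →* G'}
    (hf : Function.Injective f) : IsHallSubgroupIn π (K.map f) (H.map f) := by
  refine ⟨Subgroup.map_mono hH.1, ?_, ?_⟩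
  · rw [Subgroup.card_map_of_injective hf]
    exact hH.2.1
  · rw [Subgroup.relIndex_map_map_of_injective _ _ hf]
    exact hH.2.2

lemma IsHallSubgroupIn.mem_of_pow_natCard_eq_one [Finite G] (hH : IsHallSubgroupIn π K H) {a : G}
    (ha : a ∈ K) (hcomm : ∀ g ∈ K, Commute g a) (hpow : a ^ Nat.card H = 1) : a ∈ H := by
  have hindex : H.relIndex (Subgroup.zpowers a) ∣ H.relIndex K := by
    refine relIndex_dvd_relIndex_of_conj_mem H ((Subgroup.zpowers_le).2 ha) fun g hg b hb => ?_
    obtain ⟨k, rfl⟩ := Subgroup.mem_zpowers_iff.1 hb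
    rwa [((hcomm g hg).zpow_right k).eq, mul_inv_cancel_right]
  have hcard : H.relIndex (Subgroup.zpowers a) ∣ Nat.card H := by
    refine (Subgroup.relIndex_dvd_card _ _).trans ?_
    rw [Nat.card_zpowers]
    exact orderOf_dvd_of_pow_eq_one hpow
  have hone : H.relIndex (Subgroup.zpowers a) = 1 := by
    by_contra hne
    obtain ⟨r, hr, hdvd⟩ := Nat.exists_prime_and_dvd hne
    exact hH.2.2 r (hH.2.1 r hr (hdvd.trans hcard)) (hdvd.trans hindex)
  exact Subgroup.relIndex_eq_one.1 hone (Subgroup.mem_zpowers a)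

lemma conj_mem_of_mem_conjBy {g x : G} (h : g ∈ conjBy H x) : x * g * x⁻¹ ∈ H := by
  obtain ⟨a, ha, rfl⟩ := Subgroup.mem_map.1 h
  simpa [mul_assoc] using ha

end Hall

section RowAction

variable {ι R : Type*} [Fintype ι] [DecidableEq ι] [CommRing R]

/-- The action of matrices on row vectors. Matrices act on rows from the right, so `g` acts by
`v ↦ v ᵥ* g⁻¹` to make this a homomorphism. -/
def rowAction : GL ι R →* ((ι → R) ≃ₗ[R] (ι → R)) where
  toFun g :=
    { toFun := fun v => v ᵥ* (g⁻¹ : GL ι R).val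
      invFun := fun v => v ᵥ* g.val
      map_add' := Matrix.add_vecMul _
      map_smul' := fun c v => Matrix.smul_vecMul c v _
      left_inv := fun v => by simp only [Matrix.vecMul_vecMul, g.inv_mul, Matrix.vecMul_one]
      right_inv := fun v => by simp only [Matrix.vecMul_vecMul, g.mul_inv, Matrix.vecMul_one] }
  map_one' := LinearEquiv.ext fun v => by
    simp only [inv_one, Units.val_one, LinearEquiv.coe_mk, LinearMap.coe_mk, AddHom.coe_mk,
      Matrix.vecMul_one, LinearEquiv.coe_one, id_eq]
  map_mul' a b := LinearEquiv.ext fun v => by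
    simp only [_root_.mul_inv_rev, Units.val_mul, ← Matrix.vecMul_vecMul, LinearEquiv.mul_apply,
      LinearEquiv.coe_mk, LinearMap.coe_mk, AddHom.coe_mk]

lemma rowAction_apply (g : GL ι R) (v : ι → R) : rowAction g v = v ᵥ* (g⁻¹ : GL ι R).val :=
  rfl

lemma rowAction_injective : Function.Injective (rowAction (ι := ι) (R := R)) := by
  refine (injective_iff_map_eq_one _).2 fun g hg => inv_eq_one.1 (Units.ext ?_)
  refine Matrix.ext_of_single_vecMul fun i => ?_
  rw [← rowAction_apply, hg, Units.val_one, Matrix.vecMul_one, LinearEquiv.coe_one, id_eq]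

lemma rowAction_surjective : Function.Surjective (rowAction (ι := ι) (R := R)) := by
  intro x
  let g : GL ι R := ⟨(LinearMap.toMatrix' x.toLinearMap)ᵀ,
    (LinearMap.toMatrix' x.symm.toLinearMap)ᵀ,
    by rw [← Matrix.transpose_mul, ← LinearMap.toMatrix'_comp]; simp,
    by rw [← Matrix.transpose_mul, ← LinearMap.toMatrix'_comp]; simp⟩
  refine ⟨g⁻¹, LinearEquiv.ext fun v => ?_⟩
  rw [rowAction_apply, inv_inv]
  exact (Matrix.vecMul_transpose _ v).trans (LinearMap.toMatrix'_mulVec _ v)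

lemma det_rowAction (g : GL ι R) :
    LinearEquiv.det (rowAction g) = Matrix.GeneralLinearGroup.det g⁻¹ := by
  have htoLin : (rowAction g).toLinearMap = Matrix.toLin' (g⁻¹ : GL ι R).valᵀ :=
    LinearMap.ext fun v => (Matrix.mulVec_transpose _ v).symm
  apply Units.ext
  rw [LinearEquiv.coe_det, htoLin, LinearMap.det_toLin', Matrix.det_transpose]
  rfl

end RowAction

section PolarForm

variable {R M : Type*} [CommRing R] [AddCommGroup M] [Module R M]

lemma polarBilin_isSymm (Q : QuadraticForm R M) :
    LinearMap.BilinForm.IsSymm (QuadraticMap.polarBilin Q) :=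
  ⟨fun u v => QuadraticMap.polar_comm Q u v⟩

lemma polarBilin_nondegenerate {Q : QuadraticForm R M}
    (hQ : (QuadraticMap.polarBilin Q).SeparatingLeft) :
    (QuadraticMap.polarBilin Q).Nondegenerate :=
  (LinearMap.BilinForm.IsSymm.isRefl (polarBilin_isSymm Q)).nondegenerate_iff_separatingLeft.2 hQ

lemma exists_map_ne_zero [Nontrivial M] {Q : QuadraticForm R M}
    (hQ : (QuadraticMap.polarBilin Q).SeparatingLeft) : ∃ v, Q v ≠ 0 := by
  by_contra! hzero
  obtain ⟨v, hv⟩ := exists_ne (0 : M)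
  exact hv (hQ v fun w => by simp [QuadraticMap.polar, hzero])

end PolarForm

section QuadraticForm

variable {n : ℕ} {F : Type*} [Field F] {Q : QuadraticForm F (Fin n → F)}

/-- The matrices preserving the quadratic form `Q` (when `2 ≠ 0`), obtained from the isometries
of its polar form. -/
def qIsometryGroup (Q : QuadraticForm F (Fin n → F)) : Subgroup (GL (Fin n) F) :=
  (formIsometryGroup (QuadraticMap.polarBilin Q)).comap rowAction

lemma mem_qIsometryGroup_iff (h2 : (2 : F) ≠ 0) {g : GL (Fin n) F} :
    g ∈ qIsometryGroup Q ↔ ∀ v, Q (v ᵥ* g.val) = Q v := by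
  rw [← inv_mem_iff]
  change (∀ u v, QuadraticMap.polarBilin Q (rowAction g⁻¹ u) (rowAction g⁻¹ v) =
    QuadraticMap.polarBilin Q u v) ↔ _
  simp only [rowAction_apply, inv_inv, QuadraticMap.polarBilin_apply_apply]
  refine ⟨fun h v => ?_, fun h u v => by simp only [QuadraticMap.polar, ← Matrix.add_vecMul, h]⟩
  simpa [QuadraticMap.polar_self, h2] using h v v

lemma qIsometryGroup_le (h2 : (2 : F) ≠ 0) : qIsometryGroup Q ≤ qSimilitudeGroup Q :=
  fun g hg => ⟨1, fun v => by rw [(mem_qIsometryGroup_iff h2).1 hg v, Units.val_one, one_mul]⟩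

lemma conj_mem_qIsometryGroup (h2 : (2 : F) ≠ 0) {g a : GL (Fin n) F}
    (hg : g ∈ qSimilitudeGroup Q) (ha : a ∈ qIsometryGroup Q) :
    g * a * g⁻¹ ∈ qIsometryGroup Q := by
  rw [mem_qIsometryGroup_iff h2] at ha ⊢
  obtain ⟨c, hc⟩ := inv_mem hg
  intro v
  rw [Units.val_mul, Units.val_mul, ← Matrix.vecMul_vecMul, ← Matrix.vecMul_vecMul, hc, ha, ← hc,
    Matrix.vecMul_vecMul, g.mul_inv, Matrix.vecMul_one]

lemma map_vecMul_scalar (Q : QuadraticForm F (Fin n → F)) (c : Fˣ) (v : Fin n → F) :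
    Q (v ᵥ* (GeneralLinearGroup.scalar (Fin n) c).val) = (c : F) ^ 2 * Q v := by
  rw [GeneralLinearGroup.coe_scalar, Matrix.scalar_apply, ← Matrix.smul_one_eq_diagonal,
    Matrix.vecMul_smul, Matrix.vecMul_one, QuadraticMap.map_smul, smul_eq_mul, pow_two]

lemma scalar_mem_qSimilitudeGroup (Q : QuadraticForm F (Fin n → F)) (c : Fˣ) :
    GeneralLinearGroup.scalar (Fin n) c ∈ qSimilitudeGroup Q :=
  ⟨c ^ 2, fun v => by rw [map_vecMul_scalar, Units.val_pow_eq_pow_val]⟩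

lemma map_vecMul_pow {g : GL (Fin n) F} {l : F} (h : ∀ v, Q (v ᵥ* g.val) = l * Q v) (k : ℕ)
    (v : Fin n → F) : Q (v ᵥ* (g ^ k).val) = l ^ k * Q v := by
  induction k generalizing v with
  | zero => rw [pow_zero, pow_zero, Units.val_one, Matrix.vecMul_one, one_mul]
  | succ k ih => rw [pow_succ, Units.val_mul, ← Matrix.vecMul_vecMul, h, ih, pow_succ', mul_assoc]

variable {π : Set ℕ} {H : Subgroup (GL (Fin n) F)}

/- The multiplier `l` of `g` has odd order, so it is the square of one of its powers `c`, and
`c⁻¹ g` is an isometry. -/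
lemma exists_scalar_mem_inv_mul_mem_qIsometryGroup [Finite F] (h2 : (2 : F) ≠ 0)
    (hQ : ∃ v, Q v ≠ 0) (hodd : Odd (Nat.card H)) (hH : IsHallSubgroupIn π (qSimilitudeGroup Q) H)
    {g : GL (Fin n) F} (hg : g ∈ H) :
    ∃ c : Fˣ, GeneralLinearGroup.scalar (Fin n) c ∈ H ∧
      (GeneralLinearGroup.scalar (Fin n) c)⁻¹ * g ∈ qIsometryGroup Q := by
  obtain ⟨l, hl⟩ := hH.1 hg
  obtain ⟨v, hv⟩ := hQ
  have hgpow : g ^ Nat.card H = 1 := congrArg Subtype.val (pow_card_eq_one' (x := (⟨g, hg⟩ : H)))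
  have hlpow : l ^ Nat.card H = 1 := by
    have hpow := map_vecMul_pow hl (Nat.card H) v
    rw [hgpow, Units.val_one, Matrix.vecMul_one, eq_comm, mul_eq_right₀ hv] at hpow
    exact Units.ext hpow
  obtain ⟨m, hm⟩ := hodd
  have hsq : (l ^ (m + 1)) ^ 2 = l := by
    rw [← pow_mul, show (m + 1) * 2 = Nat.card H + 1 by omega, pow_succ, hlpow, one_mul]
  refine ⟨l ^ (m + 1), hH.mem_of_pow_natCard_eq_one (scalar_mem_qSimilitudeGroup Q _)
    (fun a _ => (GeneralLinearGroup.scalar_commute _ a).symm) ?_, ?_⟩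
  · rw [← map_pow, ← pow_mul, mul_comm, pow_mul, hlpow, one_pow, map_one]
  · generalize l ^ (m + 1) = c at hsq
    rw [← map_inv, mem_qIsometryGroup_iff h2]
    intro u
    rw [Units.val_mul, ← Matrix.vecMul_vecMul, hl, map_vecMul_scalar, ← hsq, ← mul_assoc]
    simp

variable [Fintype F]

lemma exists_three_conj_eq_one_of_isHallSubgroupIn_qIsometryGroup
    (hF : Odd (Fintype.card F)) (hn : 7 ≤ n)
    (hQ : (QuadraticMap.polarBilin Q).SeparatingLeft) (hπ : IsOddCrossCharacteristic F π)
    (hH : IsHallSubgroupIn π (qIsometryGroup Q) H) :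
    ∃ x ∈ qIsometryGroup Q ⊓ SLsub n F, ∃ y ∈ qIsometryGroup Q ⊓ SLsub n F,
      ∃ z ∈ qIsometryGroup Q ⊓ SLsub n F, ∀ g ∈ H,
        x * g * x⁻¹ ∈ H → y * g * y⁻¹ ∈ H → z * g * z⁻¹ ∈ H → g = 1 := by
  have hmap := hH.map_of_injective rowAction_injective
  rw [qIsometryGroup, Subgroup.map_comap_eq_self_of_surjective rowAction_surjective] at hmap
  have hlift {x : GL (Fin n) F}
      (hx : rowAction x ∈ specialFormIsometryGroup (QuadraticMap.polarBilin Q)) :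
      x ∈ qIsometryGroup Q ⊓ SLsub n F := by
    obtain ⟨hiso, hdet⟩ := Subgroup.mem_inf.1 hx
    rw [MonoidHom.mem_ker, det_rowAction] at hdet
    have hinv : x⁻¹ ∈ SLsub n F := congrArg Units.val hdet
    exact ⟨hiso, (SLsub n F).inv_mem_iff.1 hinv⟩
  have hconj {x g : GL (Fin n) F} (h : x * g * x⁻¹ ∈ H) :
      rowAction x * rowAction g * (rowAction x)⁻¹ ∈ H.map rowAction := by
    simpa only [map_mul, map_inv] using Subgroup.mem_map_of_mem rowAction h
  obtain ⟨x', hx, y', hy, z', hz, hone⟩ := exists_three_conj_eq_one_of_isHallSubgroupIn hF hπ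
    (polarBilin_nondegenerate hQ) (polarBilin_isSymm Q) (by simpa using hn) hmap
  obtain ⟨x, rfl⟩ := rowAction_surjective x'
  obtain ⟨y, rfl⟩ := rowAction_surjective y'
  obtain ⟨z, rfl⟩ := rowAction_surjective z'
  refine ⟨x, hlift hx, y, hlift hy, z, hlift hz, fun g hg hgx hgy hgz => ?_⟩
  refine (map_eq_one_iff rowAction rowAction_injective).1 ?_
  exact hone _ (Subgroup.mem_map_of_mem rowAction hg) (hconj hgx) (hconj hgy) (hconj hgz)

theorem stmt4_general (hF : Odd (Fintype.card F)) (hn : 7 ≤ n)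
    (hQ : (QuadraticMap.polarBilin Q).SeparatingLeft) (hπ : IsOddCrossCharacteristic F π)
    (hH : IsHallSubgroupIn π (qSimilitudeGroup Q) H) :
    ∃ x ∈ qSimilitudeGroup Q ⊓ SLsub n F, ∃ y ∈ qSimilitudeGroup Q ⊓ SLsub n F,
      ∃ z ∈ qSimilitudeGroup Q ⊓ SLsub n F, ∀ g ∈ H ⊓ conjBy H x ⊓ conjBy H y ⊓ conjBy H z,
        ∃ c : F, (g : Matrix (Fin n) (Fin n) F) = c • (1 : Matrix (Fin n) (Fin n) F) := by
  have h2 := two_ne_zero_of_odd_card hF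
  have : NeZero n := ⟨by omega⟩
  have hle := inf_le_inf_right (SLsub n F) (qIsometryGroup_le (Q := Q) h2)
  obtain ⟨x, hx, y, hy, z, hz, hone⟩ := exists_three_conj_eq_one_of_isHallSubgroupIn_qIsometryGroup
    hF hn hQ hπ (hH.inf_of_conj_mem (qIsometryGroup_le h2)
      fun g hg a => conj_mem_qIsometryGroup h2 hg)
  refine ⟨x, hle hx, y, hle hy, z, hle hz, fun g ⟨⟨⟨hg, hgx⟩, hgy⟩, hgz⟩ => ?_⟩
  obtain ⟨c, hcH, hc⟩ := exists_scalar_mem_inv_mul_mem_qIsometryGroup h2 (exists_map_ne_zero hQ)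
    (hπ.odd_natCard hH.2.1) hH hg
  have hconj {x : GL (Fin n) F} (hx : x ∈ qIsometryGroup Q) (hgx : g ∈ conjBy H x) :
      x * ((GeneralLinearGroup.scalar (Fin n) c)⁻¹ * g) * x⁻¹ ∈ H ⊓ qIsometryGroup Q := by
    refine ⟨?_, Subgroup.mul_mem _ (mul_mem hx hc) (inv_mem hx)⟩
    rw [← mul_assoc, ← map_inv, ← GeneralLinearGroup.scalar_commute, map_inv, mul_assoc, mul_assoc,
      ← mul_assoc x]
    exact H.mul_mem (H.inv_mem hcH) (conj_mem_of_mem_conjBy hgx)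
  have hg1 := hone _ ⟨H.mul_mem (H.inv_mem hcH) hg, hc⟩ (hconj hx.1 hgx) (hconj hy.1 hgy)
    (hconj hz.1 hgz)
  rw [inv_mul_eq_one] at hg1
  refine ⟨c, ?_⟩
  rw [← hg1, GeneralLinearGroup.coe_scalar, Matrix.scalar_apply, Matrix.smul_one_eq_diagonal]

end QuadraticForm

lemma isOddCrossCharacteristic_of_card_eq_prime_pow {F : Type*} [Field F] [Fintype F] {p f : ℕ}
    (hp : p.Prime) (hF : Fintype.card F = p ^ f) {π : Set ℕ} (hπ : ∀ r ∈ π, r.Prime) (h2 : 2 ∉ π)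
    (hpπ : p ∉ π) : IsOddCrossCharacteristic F π := by
  have := Fact.mk hp
  have := charP_of_card_eq_prime_pow hF
  refine ⟨hπ, h2, fun r hr hr0 => hpπ ?_⟩
  rwa [(Nat.prime_dvd_prime_iff_eq hp (hπ r hr)).1 ((CharP.cast_eq_zero_iff F p r).1 hr0)]

theorem stmt4 (p f q n : ℕ) (hp : p.Prime) (hpodd : p ≠ 2) (hf : 1 ≤ f) (hq : q = p ^ f)
    (F : Type) [Field F] [Fintype F] (hcard : Fintype.card F = q)
    (hn : 7 ≤ n)
    (Q : QuadraticForm F (Fin n → F))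
    (hnd : ∀ v : Fin n → F, (∀ w : Fin n → F, QuadraticMap.polar (⇑Q) v w = 0) → v = 0)
    (hnonsolv : ¬ IsSolvable ↥(qSimilitudeGroup (⇑Q : (Fin n → F) → F)))
    (π : Set ℕ) (hπ : ∀ r ∈ π, r.Prime) (h2pi : 2 ∉ π) (hppi : p ∉ π)
    (htwo : 2 ≤ (π ∩ {r : ℕ | r.Prime ∧ r ∣ Nat.card (qSimilitudeGroup (⇑Q : (Fin n → F) → F))}).ncard)
    (H : Subgroup (GL (Fin n) F))
    (hH : IsHallSubgroupIn π (qSimilitudeGroup (⇑Q : (Fin n → F) → F)) H)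
    :
    ∃ x y z : GL (Fin n) F,
      x ∈ (H : Set (GL (Fin n) F)) * ((qSimilitudeGroup (⇑Q : (Fin n → F) → F) ⊓ SLsub n F : Subgroup (GL (Fin n) F)) : Set (GL (Fin n) F)) ∧
      y ∈ (H : Set (GL (Fin n) F)) * ((qSimilitudeGroup (⇑Q : (Fin n → F) → F) ⊓ SLsub n F : Subgroup (GL (Fin n) F)) : Set (GL (Fin n) F)) ∧
      z ∈ (H : Set (GL (Fin n) F)) * ((qSimilitudeGroup (⇑Q : (Fin n → F) → F) ⊓ SLsub n F : Subgroup (GL (Fin n) F)) : Set (GL (Fin n) F)) ∧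
    ∀ g ∈ H ⊓ conjBy H x ⊓ conjBy H y ⊓ conjBy H z,
      ∃ c : F, (g : Matrix (Fin n) (Fin n) F) = c • (1 : Matrix (Fin n) (Fin n) F) := by
  have hodd : Odd (Fintype.card F) := (hcard.trans hq) ▸ (hp.odd_of_ne_two hpodd).pow
  obtain ⟨x, hx, y, hy, z, hz, h⟩ := stmt4_general hodd hn hnd
    (isOddCrossCharacteristic_of_card_eq_prime_pow hp (hcard.trans hq) hπ h2pi hppi) hH
  exact ⟨x, y, z, Set.subset_mul_right _ H.one_mem hx, Set.subset_mul_right _ H.one_mem hy,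
    Set.subset_mul_right _ H.one_mem hz, h⟩
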